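/- Let k > 450 and n > 5. Then there are no integers 1 ≤ b ≤ 9 and d ≥ 2 such that L_n^{(k)} = b·10^{d}. -/

import Mathlib

/-- Shifted `k`-generalized Lucas sequence: `genLucas k m` equals `L^{(k)}_{m - (k-2)}`,
so that index `m = 0` corresponds to `n = 2 - k`.  The initial values are
`L^{(k)}_{2-k} = ⋯ = L^{(k)}_{-1} = 0`, `L^{(k)}_0 = 2`, `L^{(k)}_1 = 1`, and each term
afterwards is the sum of the `k` preceding terms. -/
def genLucas (k : ℕ) : ℕ → ℤ := fun m =>
  if h1 : m < k - 2 then 0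
  else if h2 : m = k - 2 then 2
  else if h3 : m = k - 1 then 1
  else ∑ i ∈ Finset.range k, genLucas k (m - 1 - i)
decreasing_by omega

/-- The `k`-generalized Lucas number `L^{(k)}_n` for `n ≥ 0`. -/
def lucasL (k n : ℕ) : ℤ := genLucas k (n + k - 2)

/-!
Let `α` be the dominant root of the characteristic polynomial; it is exponentially close to `2`,
all other roots lie in the unit disc, and `|L_n - g α ^ n| ≤ 2` for an explicit `g`. Suppose
`L_n = b·10^d`.

If `n` is below a bound exponential in `k`, cut the indices into blocks of length `k + 1`. In the
block `M`, at position `i + 2`, one has `L_n ≡ ± 2 ^ i * c` modulo `2 ^ (k + 1 + i)`, where the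
power of two in `c` is polynomial in `k` and `M`. So `2 ^ d ∣ L_n` bounds `d` by little more than
`i`, and comparing sizes leaves `M ≤ 2`. There `L_n` is close to `3·2^(n - 2)`, which brings
`b·5^d` too close to three times a power of two; Padé approximants of `(1 + 3 / 125) ^ m`, where
`1 + 3 / 125 = 2 ^ 7 / 5 ^ 3`, exclude this.

If `n` is larger, `k` is at most about `3 log₂ n`, and `Λ = log (g / b) + n log α - d log 10` is at
most `4 / 10 ^ d`. This contradicts a lower bound by the method of Gel'fond and Baker. Since `Λ` is
tiny, `log (g / b)` can be eliminated, and a Dirichlet approximation `r / q` to `d / n` singles out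
many monomials in `α`, `1 / 10`, `g / b` whose logarithms are nearly an affine function of one
integer `η`. An auxiliary polynomial in `α`, `η` and such a monomial, with small integer
coefficients, is tiny at all these points by Taylor expansion, so vanishes there by a norm estimate
over `ℚ(α)`. This contradicts a determinantal zero estimate.
-/

section Recurrence

variable {k : ℕ}

theorem genLucas_of_lt {m : ℕ} (h : m < k - 2) : genLucas k m = 0 := by
  rw [genLucas, dif_pos h]

theorem genLucas_sub_two (k : ℕ) : genLucas k (k - 2) = 2 := by
  rw [genLucas, dif_neg (lt_irrefl _), dif_pos rfl]

theorem genLucas_sub_one (hk : 2 ≤ k) : genLucas k (k - 1) = 1 := by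
  rw [genLucas, dif_neg (by omega), dif_neg (by omega), dif_pos rfl]

theorem genLucas_add_self (hk : 2 ≤ k) (t : ℕ) :
    genLucas k (t + k) = ∑ j ∈ Finset.range k, genLucas k (t + j) := by
  rw [genLucas, dif_neg (by omega), dif_neg (by omega), dif_neg (by omega),
    ← Finset.sum_range_reflect]
  refine Finset.sum_congr rfl fun i hi => congrArg _ ?_
  rw [Finset.mem_range] at hi
  omega

theorem genLucas_add_self_add_one (hk : 2 ≤ k) (t : ℕ) :
    genLucas k (t + k + 1) = 2 * genLucas k (t + k) - genLucas k t := by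
  have hfirst := Finset.sum_range_succ' (fun j => genLucas k (t + j)) k
  have hlast := Finset.sum_range_succ (fun j => genLucas k (t + j)) k
  have hrec := genLucas_add_self hk t
  have hrec' := genLucas_add_self hk (t + 1)
  simp only [add_zero, ← add_assoc, add_right_comm t _ 1] at hfirst
  simp only [add_right_comm t 1] at hfirst hrec'
  linarith

theorem genLucas_self (hk : 2 ≤ k) : genLucas k k = 3 := by
  obtain ⟨r, rfl⟩ : ∃ r, k = r + 2 := ⟨k - 2, by omega⟩
  have hrec := genLucas_add_self hk 0
  simp only [zero_add] at hrec
  have hzero : ∑ j ∈ Finset.range r, genLucas (r + 2) j = 0 :=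
    Finset.sum_eq_zero fun j hj => genLucas_of_lt (Finset.mem_range.1 hj)
  rw [hrec, Finset.sum_range_succ, Finset.sum_range_succ, hzero]
  have htwo : genLucas (r + 2) r = 2 := genLucas_sub_two (r + 2)
  have hone : genLucas (r + 2) (r + 1) = 1 := genLucas_sub_one hk
  rw [htwo, hone]
  norm_num

theorem lucasL_zero (k : ℕ) : lucasL k 0 = 2 := by
  rw [lucasL, zero_add, genLucas_sub_two]

theorem lucasL_one (hk : 2 ≤ k) : lucasL k 1 = 1 := by
  rw [lucasL, show 1 + k - 2 = k - 1 by omega, genLucas_sub_one hk]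

theorem lucasL_two (hk : 2 ≤ k) : lucasL k 2 = 3 := by
  rw [lucasL, Nat.add_sub_cancel_left, genLucas_self hk]

theorem lucasL_add_self_add_one (hk : 2 ≤ k) (n : ℕ) :
    lucasL k (n + k + 1) = 2 * lucasL k (n + k) - lucasL k n := by
  have h := genLucas_add_self_add_one hk (n + k - 2)
  rwa [show n + k - 2 + k + 1 = n + k + 1 + k - 2 by omega,
    show n + k - 2 + k = n + k + k - 2 by omega] at h

theorem lucasL_succ_of_lt {n : ℕ} (hn : 2 ≤ n) (hnk : n < k) :
    lucasL k (n + 1) = 2 * lucasL k n := by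
  have h := genLucas_add_self_add_one (by omega : 2 ≤ k) (n - 2)
  rwa [genLucas_of_lt (show n - 2 < k - 2 by omega), show n - 2 + k + 1 = n + 1 + k - 2 by omega,
    show n - 2 + k = n + k - 2 by omega, sub_zero] at h

theorem lucasL_add_two {i : ℕ} (hi : i + 2 ≤ k) : lucasL k (i + 2) = 3 * 2 ^ i := by
  induction i with
  | zero => rw [lucasL_two hi]; norm_num
  | succ i ih =>
    rw [add_right_comm, lucasL_succ_of_lt (by omega) (by omega), ih (by omega)]
    ring

end Recurrence

section DominantRoot

/-- `IsDominantRoot k α` says that `α` is the dominant root of the characteristic polynomial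
`x ^ k - x ^ (k - 1) - ⋯ - 1`. The polynomial enters through its multiple by `x - 1`, namely
`1 - x ^ k * (2 - x)` up to sign, and the extra root `1` is excluded by the lower bound. -/
structure IsDominantRoot (k : ℕ) (α : ℝ) : Prop where
  le : 2 - 1 / ((k : ℝ) + 1) ≤ α
  lt_two : α < 2
  pow_mul_two_sub : α ^ k * (2 - α) = 1

theorem succ_le_three_halves_pow {k : ℕ} (hk : 4 ≤ k) : (k : ℝ) + 1 ≤ (3 / 2) ^ k := by
  induction k, hk using Nat.le_induction with
  | base => norm_num
  | succ k hk ih =>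
    have : (4 : ℝ) ≤ k := by exact_mod_cast hk
    push_cast
    rw [pow_succ]
    linarith

theorem exists_isDominantRoot {k : ℕ} (hk : 4 ≤ k) : ∃ α, IsDominantRoot k α := by
  set x₀ : ℝ := 2 - 1 / ((k : ℝ) + 1) with hx₀
  have hk' : (4 : ℝ) ≤ k := by exact_mod_cast hk
  have hpos : (0 : ℝ) < (k : ℝ) + 1 := by positivity
  have hle : (1 : ℝ) / ((k : ℝ) + 1) ≤ 1 / 2 := by
    rw [div_le_div_iff₀ hpos two_pos]
    linarith
  have hpow : (k : ℝ) + 1 ≤ x₀ ^ k :=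
    (succ_le_three_halves_pow hk).trans (by gcongr; linarith)
  have hx₀two : x₀ ≤ 2 := sub_le_self _ (by positivity)
  have hone : (1 : ℝ) ∈ Set.Icc ((2 : ℝ) ^ k * (2 - 2)) (x₀ ^ k * (2 - x₀)) := by
    refine ⟨by norm_num, ?_⟩
    rw [show 2 - x₀ = 1 / ((k : ℝ) + 1) by rw [hx₀]; ring, mul_one_div, le_div_iff₀ hpos]
    linarith
  obtain ⟨α, hα, hroot⟩ := intermediate_value_Icc' (f := fun x : ℝ => x ^ k * (2 - x)) hx₀two
    (by fun_prop) hone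
  refine ⟨α, hα.1, lt_of_le_of_ne hα.2 ?_, hroot⟩
  rintro rfl
  norm_num at hroot

/-- The coefficient of `α ^ n` in the Binet-type formula for `L^{(k)}_n`; with
`f_k(α) = (α - 1) / (2 + (k + 1) (α - 2))` it is `(2 α - 1) f_k(α) / α`. -/
noncomputable def dominantCoeff (k : ℕ) (α : ℝ) : ℝ :=
  (2 * α - 1) * (α - 1) / (α * ((k + 1) * α - 2 * k))

namespace IsDominantRoot

variable {k : ℕ} {α : ℝ}

theorem one_le (h : IsDominantRoot k α) : 1 ≤ α := by
  have : 1 / ((k : ℝ) + 1) ≤ 1 := by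
    rw [div_le_one (by positivity)]
    linarith [Nat.cast_nonneg (α := ℝ) k]
  linarith [h.le]

theorem pos (h : IsDominantRoot k α) : 0 < α := one_pos.trans_le h.one_le

theorem three_halves_le (h : IsDominantRoot k α) (hk : 2 ≤ k) : 3 / 2 ≤ α := by
  have hk' : (2 : ℝ) ≤ k := by exact_mod_cast hk
  have : 1 / ((k : ℝ) + 1) ≤ 1 / 2 := one_div_le_one_div_of_le two_pos (by linarith)
  linarith [h.le]

theorem one_lt (h : IsDominantRoot k α) (hk : 2 ≤ k) : 1 < α := by
  linarith [h.three_halves_le hk]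

theorem ge_of_gt (h : IsDominantRoot k α) (hk : 450 < k) : 1.997 ≤ α := by
  have hk' : (451 : ℝ) ≤ k := by exact_mod_cast hk
  have : 1 / ((k : ℝ) + 1) ≤ 0.003 := by
    rw [div_le_iff₀ (by positivity)]
    linarith
  linarith [h.le]

theorem inv_pow (h : IsDominantRoot k α) : α⁻¹ ^ k = 2 - α := by
  rw [_root_.inv_pow]
  exact inv_eq_of_mul_eq_one_right h.pow_mul_two_sub

theorem sum_inv_pow (h : IsDominantRoot k α) (hk : 2 ≤ k) :
    ∑ j ∈ Finset.range k, α⁻¹ ^ (j + 1) = 1 := by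
  have hne : α⁻¹ ≠ 1 := inv_eq_one.not.2 (h.one_lt hk).ne'
  simp only [pow_succ]
  rw [← Finset.sum_mul, geom_sum_eq hne, h.inv_pow, div_mul_eq_mul_div,
    div_eq_one_iff_eq (sub_ne_zero.2 hne), sub_mul, sub_mul, mul_inv_cancel₀ h.pos.ne']
  ring

theorem one_le_denom (h : IsDominantRoot k α) : 1 ≤ ((k : ℝ) + 1) * α - 2 * k := by
  have hpos : (0 : ℝ) < (k : ℝ) + 1 := by positivity
  have := mul_le_mul_of_nonneg_left h.le hpos.le
  rw [mul_sub, mul_one_div_cancel hpos.ne'] at this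
  linarith

theorem denom_le_two (h : IsDominantRoot k α) : ((k : ℝ) + 1) * α - 2 * k ≤ 2 := by
  nlinarith [h.lt_two, Nat.cast_nonneg (α := ℝ) k]

theorem dominantCoeff_nonneg (h : IsDominantRoot k α) : 0 ≤ dominantCoeff k α := by
  have hα := h.one_le
  exact div_nonneg (mul_nonneg (by linarith) (by linarith))
    (mul_nonneg h.pos.le (by linarith [h.one_le_denom]))

theorem le_dominantCoeff (h : IsDominantRoot k α) (hα : 1.95 ≤ α) :
    7 / 10 ≤ dominantCoeff k α := by
  have hden := h.one_le_denom
  have hden' := h.denom_le_two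
  rw [dominantCoeff, le_div_iff₀ (mul_pos h.pos (by linarith))]
  nlinarith

theorem mul_dominantCoeff_le (h : IsDominantRoot k α) : α * dominantCoeff k α ≤ 3 := by
  have hden := h.one_le_denom
  rw [dominantCoeff, mul_div_assoc', mul_div_mul_left _ _ h.pos.ne', div_le_iff₀ (by linarith)]
  nlinarith [h.one_le, h.lt_two]

theorem genLucas_sub_sum (h : IsDominantRoot k α) (hk : 2 ≤ k) (t : ℕ) :
    (genLucas k (t + k) : ℝ) - ∑ j ∈ Finset.range k, α⁻¹ ^ (j + 1) * genLucas k (t + j) =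
      α ^ t * ((2 * α - 1) * (α - 1)) := by
  have hαinv : α * α⁻¹ = 1 := mul_inv_cancel₀ h.pos.ne'
  induction t with
  | zero =>
    obtain ⟨r, rfl⟩ : ∃ r, k = r + 2 := ⟨k - 2, by omega⟩
    have hzero : ∑ j ∈ Finset.range r, α⁻¹ ^ (j + 1) * (genLucas (r + 2) j : ℝ) = 0 :=
      Finset.sum_eq_zero fun j hj => by
        rw [genLucas_of_lt (Finset.mem_range.1 hj), Int.cast_zero, mul_zero]
    have htwo : genLucas (r + 2) r = 2 := genLucas_sub_two (r + 2)
    have hone : genLucas (r + 2) (r + 1) = 1 := genLucas_sub_one hk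
    have hpow : α⁻¹ ^ (r + 1) = α * (2 - α) := by
      rw [← h.inv_pow, pow_succ _ (r + 1), mul_left_comm, hαinv, mul_one]
    simp only [zero_add]
    rw [Finset.sum_range_succ, Finset.sum_range_succ, hzero, htwo, hone, genLucas_self hk,
      hpow, h.inv_pow]
    push_cast
    ring
  | succ t ih =>
    have hfirst := Finset.sum_range_succ' (fun j => α⁻¹ ^ j * (genLucas k (t + j) : ℝ)) k
    have hlast := Finset.sum_range_succ (fun j => α⁻¹ ^ j * (genLucas k (t + j) : ℝ)) k
    have hscale : α * ∑ j ∈ Finset.range k, α⁻¹ ^ (j + 1) * (genLucas k (t + j) : ℝ) =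
        ∑ j ∈ Finset.range k, α⁻¹ ^ j * (genLucas k (t + j) : ℝ) := by
      rw [Finset.mul_sum]
      refine Finset.sum_congr rfl fun j _ => ?_
      rw [pow_succ, ← mul_assoc, mul_left_comm, hαinv, mul_one]
    have hrec : (genLucas k (t + k + 1) : ℝ) = 2 * genLucas k (t + k) - genLucas k t := by
      exact_mod_cast genLucas_add_self_add_one hk t
    simp only [pow_zero, one_mul, add_zero, h.inv_pow, ← add_assoc] at hfirst hlast
    simp only [add_right_comm t 1]
    rw [pow_succ, hrec]
    linear_combination α * ih + hscale + hfirst - hlast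

theorem dominantCoeff_mul_denom (h : IsDominantRoot k α) :
    dominantCoeff k α * (α * (((k : ℝ) + 1) * α - 2 * k)) = (2 * α - 1) * (α - 1) :=
  div_mul_cancel₀ _ (mul_ne_zero h.pos.ne' (by linarith [h.one_le_denom]))

/-- The multiple of `α ^ t` approximating `genLucas k t` satisfies the same inhomogeneous
recurrence as `genLucas k`, so that their difference is homogeneous. -/
theorem dominantCoeff_mul_pow_sub_sum (h : IsDominantRoot k α) (t : ℕ) :
    dominantCoeff k α * α ^ 2 * (2 - α) * α ^ (t + k) -
        ∑ j ∈ Finset.range k, α⁻¹ ^ (j + 1) * (dominantCoeff k α * α ^ 2 * (2 - α) * α ^ (t + j)) =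
      α ^ t * ((2 * α - 1) * (α - 1)) := by
  have hαinv : α * α⁻¹ = 1 := mul_inv_cancel₀ h.pos.ne'
  set H := dominantCoeff k α * α ^ 2 * (2 - α) with hH
  have hterm : ∀ j, α⁻¹ ^ (j + 1) * (H * α ^ (t + j)) = H * α ^ t * α⁻¹ := fun j => by
    have : α ^ j * α⁻¹ ^ j = 1 := by rw [← mul_pow, hαinv, one_pow]
    rw [pow_add, pow_succ]
    linear_combination H * α ^ t * α⁻¹ * this
  simp only [hterm, Finset.sum_const, Finset.card_range, nsmul_eq_mul]
  rw [← h.dominantCoeff_mul_denom, pow_add, hH]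
  linear_combination (dominantCoeff k α * α ^ 2 * α ^ t) * h.pow_mul_two_sub -
    dominantCoeff k α * α * k * (2 - α) * α ^ t * hαinv

end IsDominantRoot

theorem abs_le_of_convex_recurrence {k : ℕ} {w e : ℕ → ℝ} {C : ℝ} (hw : ∀ j, 0 ≤ w j)
    (hsum : ∑ j ∈ Finset.range k, w j = 1) (hbase : ∀ t < k, |e t| ≤ C)
    (hrec : ∀ t, e (t + k) = ∑ j ∈ Finset.range k, w j * e (t + j)) (t : ℕ) : |e t| ≤ C := by
  induction t using Nat.strong_induction_on with
  | _ t ih =>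
    rcases lt_or_ge t k with htk | htk
    · exact hbase t htk
    obtain ⟨r, rfl⟩ := Nat.exists_eq_add_of_le' htk
    calc |e (r + k)| ≤ ∑ j ∈ Finset.range k, |w j * e (r + j)| := by
          rw [hrec]; exact Finset.abs_sum_le_sum_abs _ _
      _ ≤ ∑ j ∈ Finset.range k, w j * C := Finset.sum_le_sum fun j hj => by
          rw [abs_mul, abs_of_nonneg (hw j)]
          exact mul_le_mul_of_nonneg_left
            (ih _ (Nat.add_lt_add_left (Finset.mem_range.1 hj) r)) (hw j)
      _ = C := by rw [← Finset.sum_mul, hsum, one_mul]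

namespace IsDominantRoot

variable {k : ℕ} {α : ℝ}

theorem abs_genLucas_sub_le_of_lt (h : IsDominantRoot k α) (hk : 2 ≤ k) {t : ℕ} (ht : t < k) :
    |(genLucas k t : ℝ) - dominantCoeff k α * α ^ 2 * (2 - α) * α ^ t| ≤ 2 := by
  set g := dominantCoeff k α with hg
  have hα : 3 / 2 ≤ α := h.three_halves_le (by omega)
  have hg0 : 0 ≤ g := h.dominantCoeff_nonneg
  have hαg : α * g ≤ 3 := h.mul_dominantCoeff_le
  have hg2 : g ≤ 2 := by nlinarith
  obtain ⟨r, rfl⟩ : ∃ r, k = r + 2 := ⟨k - 2, by omega⟩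
  have hr : g * α ^ 2 * (2 - α) * α ^ r = g := by
    linear_combination g * h.pow_mul_two_sub
  have htwo : genLucas (r + 2) r = 2 := genLucas_sub_two (r + 2)
  have hone : genLucas (r + 2) (r + 1) = 1 := genLucas_sub_one hk
  rw [abs_le]
  rcases lt_trichotomy t r with htr | rfl | htr
  · have hle : g * α ^ 2 * (2 - α) * α ^ t ≤ g := by
      refine le_trans ?_ hr.le
      have := sub_nonneg.2 h.lt_two.le
      gcongr
      linarith
    have hnonneg : 0 ≤ g * α ^ 2 * (2 - α) * α ^ t := by
      have := sub_nonneg.2 h.lt_two.le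
      positivity
    rw [genLucas_of_lt (show t < r + 2 - 2 from htr)]
    push_cast
    constructor <;> linarith
  · rw [htwo, hr]
    push_cast
    constructor <;> linarith
  · obtain rfl : t = r + 1 := by omega
    rw [hone, pow_succ α r, ← mul_assoc _ (α ^ r), hr]
    push_cast
    constructor <;> nlinarith

theorem abs_genLucas_sub_le (h : IsDominantRoot k α) (hk : 2 ≤ k) (t : ℕ) :
    |(genLucas k t : ℝ) - dominantCoeff k α * α ^ 2 * (2 - α) * α ^ t| ≤ 2 := by
  refine abs_le_of_convex_recurrence (w := fun j => α⁻¹ ^ (j + 1))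
    (e := fun t => (genLucas k t : ℝ) - dominantCoeff k α * α ^ 2 * (2 - α) * α ^ t)
    (fun j => pow_nonneg (inv_nonneg.2 h.pos.le) _) (h.sum_inv_pow hk)
    (fun t ht => h.abs_genLucas_sub_le_of_lt hk ht) (fun t => ?_) t
  have hinhom := h.dominantCoeff_mul_pow_sub_sum t
  generalize dominantCoeff k α * α ^ 2 * (2 - α) = H at hinhom ⊢
  simp only [mul_sub, Finset.sum_sub_distrib]
  linarith [h.genLucas_sub_sum hk t]

theorem abs_lucasL_sub_le (h : IsDominantRoot k α) (hk : 2 ≤ k) (n : ℕ) :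
    |(lucasL k n : ℝ) - dominantCoeff k α * α ^ n| ≤ 2 := by
  have hpow : α ^ 2 * (2 - α) * α ^ (n + k - 2) = α ^ n := by
    have : α ^ 2 * α ^ (n + k - 2) = α ^ n * α ^ k := by
      rw [← pow_add, ← pow_add]
      congr 1
      omega
    linear_combination (2 - α) * this + α ^ n * h.pow_mul_two_sub
  rw [lucasL, ← hpow]
  simpa only [mul_assoc] using h.abs_genLucas_sub_le hk (n + k - 2)

end IsDominantRoot

end DominantRoot

section TwoAdic

/-- For `i + 2 ≤ k` one has
`L_{(k + 1) M + i + 2} ≡ (-1) ^ M * 2 ^ i * blockCoeff M i` modulo `2 ^ (k + 1 + i)`. -/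
def blockCoeff (M i : ℕ) : ℤ :=
  8 * ((i + 2 + M).choose M : ℤ) - 6 * ((i + 1 + M).choose M : ℤ) + ((i + M).choose M : ℤ)

theorem blockCoeff_zero_left (i : ℕ) : blockCoeff 0 i = 3 := by
  simp [blockCoeff]

theorem blockCoeff_succ_succ (M i : ℕ) :
    blockCoeff (M + 1) (i + 1) = blockCoeff (M + 1) i + blockCoeff M (i + 1) := by
  have pascal (x : ℕ) : ((x + 1 + (M + 1)).choose (M + 1) : ℤ) =
      (x + 1 + M).choose M + (x + (M + 1)).choose (M + 1) := by
    rw [show x + (M + 1) = x + 1 + M by ring, ← add_assoc, Nat.choose_succ_succ', Nat.cast_add]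
  have h₀ := pascal i
  have h₁ := pascal (i + 1)
  have h₂ := pascal (i + 2)
  simp only [blockCoeff]
  rw [add_right_comm i 1 2, add_right_comm i 1 1]
  linear_combination 8 * h₂ - 6 * h₁ + h₀

theorem blockCoeff_mul (M i : ℕ) :
    blockCoeff M i * ((i + 2) * (i + 1)) =
      ((2 * (i + 1 + M) * (i + 2 + 4 * M) + (i + 2) * (i + 1) : ℕ) : ℤ) * (i + M).choose M := by
  have absorb (x : ℕ) :
      ((x + 1 + M).choose M : ℤ) * (x + 1) = (x + M).choose M * (x + 1 + M) := by
    have h := Nat.choose_mul_succ_eq (x + M) M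
    rw [show x + M + 1 - M = x + 1 by omega, add_right_comm x M 1] at h
    exact_mod_cast h.symm
  have h₀ := absorb i
  have h₁ := absorb (i + 1)
  rw [blockCoeff]
  push_cast at h₀ h₁ ⊢
  linear_combination 8 * (i + 1) * h₁ + (8 * (i + 2 + M) - 6 * (i + 2)) * h₀

theorem blockCoeff_zero_right (M : ℕ) : blockCoeff M 0 = 4 * M ^ 2 + 6 * M + 3 := by
  have h := blockCoeff_mul M 0
  simp only [zero_add, Nat.choose_self] at h
  push_cast at h
  linarith

theorem two_pow_le_of_dvd_blockCoeff {M i v : ℕ} (h : (2 : ℤ) ^ v ∣ blockCoeff M i) :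
    2 ^ v ≤ 8 * (i + 2 + M) ^ 3 := by
  set Q := 2 * (i + 1 + M) * (i + 2 + 4 * M) + (i + 2) * (i + 1) with hQ
  set C := (i + M).choose M with hC
  have hdvd : 2 ^ v ∣ Q * C := by
    have := h.mul_right ((i + 2) * (i + 1) : ℤ)
    rw [blockCoeff_mul] at this
    exact_mod_cast this
  have hQ₀ : Q ≠ 0 := by positivity
  have hC₀ : C ≠ 0 := (Nat.choose_pos (Nat.le_add_left M i)).ne'
  have hv : v ≤ Q.factorization 2 + C.factorization 2 := by
    rwa [Nat.prime_two.pow_dvd_iff_le_factorization (mul_ne_zero hQ₀ hC₀),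
      Nat.factorization_mul hQ₀ hC₀] at hdvd
  have hC_le : 2 ^ C.factorization 2 ≤ i + 2 + M := by
    rcases Nat.eq_zero_or_pos (i + M) with hzero | hpos
    · obtain ⟨rfl, rfl⟩ : i = 0 ∧ M = 0 := by omega
      simp [hC]
    · exact (Nat.pow_factorization_choose_le hpos).trans (by omega)
  calc 2 ^ v ≤ 2 ^ (Q.factorization 2 + C.factorization 2) := Nat.pow_le_pow_right two_pos hv
    _ = 2 ^ Q.factorization 2 * 2 ^ C.factorization 2 := pow_add _ _ _
    _ ≤ Q * (i + 2 + M) := Nat.mul_le_mul (Nat.ordProj_le 2 hQ₀) hC_le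
    _ ≤ 8 * (i + 2 + M) ^ 2 * (i + 2 + M) := Nat.mul_le_mul_right _ (by rw [hQ]; nlinarith)
    _ = 8 * (i + 2 + M) ^ 3 := by ring

theorem two_mul_sub_modEq {v : ℕ} {x y a b : ℤ} (hx : x ≡ a [ZMOD 2 ^ v])
    (hy : y ≡ b [ZMOD 2 ^ (v + 1)]) : 2 * x - y ≡ 2 * a - b [ZMOD 2 ^ (v + 1)] :=
  Int.ModEq.sub (pow_succ' (2 : ℤ) v ▸ hx.mul_left') hy

variable {k : ℕ}

theorem lucasL_mul_succ (hk : 2 ≤ k) (M : ℕ) :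
    lucasL k ((k + 1) * (M + 1)) = 2 * lucasL k ((k + 1) * M + k) - lucasL k ((k + 1) * M) :=
  lucasL_add_self_add_one hk ((k + 1) * M)

theorem lucasL_mul_succ_add_succ (hk : 2 ≤ k) (M j : ℕ) :
    lucasL k ((k + 1) * (M + 1) + (j + 1)) =
      2 * lucasL k ((k + 1) * (M + 1) + j) - lucasL k ((k + 1) * M + (j + 1)) := by
  rw [← show (k + 1) * M + (j + 1) + k + 1 = (k + 1) * (M + 1) + (j + 1) by ring,
    ← show (k + 1) * M + (j + 1) + k = (k + 1) * (M + 1) + j by ring]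
  exact lucasL_add_self_add_one hk _

/-- The residues of the block `L_{(k + 1) M}, …, L_{(k + 1) M + k}` modulo powers of two, in the
form in which they propagate from `M` to `M + 1`. -/
structure BlockCongruence (k M : ℕ) : Prop where
  zero : lucasL k ((k + 1) * M) ≡ (-1) ^ M * 2 [ZMOD 2 ^ (k - 1)]
  one : lucasL k ((k + 1) * M + 1) ≡ (-1) ^ M * (4 * M + 1) [ZMOD 2 ^ k]
  add_two : ∀ i, i + 2 ≤ k →
    lucasL k ((k + 1) * M + (i + 2)) ≡ (-1) ^ M * (2 ^ i * blockCoeff M i) [ZMOD 2 ^ (k + 1 + i)]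

namespace BlockCongruence

variable {M : ℕ}

theorem base (hk : 2 ≤ k) : BlockCongruence k 0 where
  zero := by simp [lucasL_zero]
  one := by simp [lucasL_one hk]
  add_two i hi := by simp [lucasL_add_two hi, blockCoeff_zero_left, mul_comm]

theorem succ_zero (h : BlockCongruence k M) (hk : 2 ≤ k) :
    lucasL k ((k + 1) * (M + 1)) ≡ (-1) ^ (M + 1) * 2 [ZMOD 2 ^ (k - 1)] := by
  obtain ⟨r, rfl⟩ : ∃ r, k = r + 2 := ⟨k - 2, by omega⟩
  have hlast : lucasL (r + 2) ((r + 2 + 1) * M + (r + 2)) ≡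
      (-1) ^ M * (2 ^ r * blockCoeff M r) [ZMOD 2 ^ (r + 2 - 1)] :=
    (h.add_two r le_rfl).of_dvd (pow_dvd_pow 2 (by omega))
  have hvanish : 2 * ((-1) ^ M * (2 ^ r * blockCoeff M r)) - (-1) ^ M * 2 ≡
      (-1) ^ (M + 1) * 2 [ZMOD 2 ^ (r + 2 - 1)] := by
    rw [Int.modEq_iff_dvd]
    exact ⟨-(-1) ^ M * blockCoeff M r, by
      rw [show r + 2 - 1 = r + 1 by omega]
      ring⟩
  rw [lucasL_mul_succ hk]
  exact ((hlast.mul_left 2).sub h.zero).trans hvanish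

theorem succ_one (h : BlockCongruence k M) (hk : 2 ≤ k) :
    lucasL k ((k + 1) * (M + 1) + 1) ≡ (-1) ^ (M + 1) * (4 * (M + 1 : ℕ) + 1) [ZMOD 2 ^ k] := by
  obtain ⟨r, rfl⟩ : ∃ r, k = r + 1 := ⟨k - 1, by omega⟩
  have hstep := two_mul_sub_modEq (h.succ_zero hk) h.one
  rw [show (-1) ^ (M + 1) * (4 * ((M + 1 : ℕ) : ℤ) + 1) =
    2 * ((-1) ^ (M + 1) * 2) - (-1) ^ M * (4 * M + 1) by push_cast; ring]
  rwa [← zero_add 1, lucasL_mul_succ_add_succ hk M 0]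

theorem succ_add_two (h : BlockCongruence k M) (hk : 2 ≤ k) (i : ℕ) (hi : i + 2 ≤ k) :
    lucasL k ((k + 1) * (M + 1) + (i + 2)) ≡
      (-1) ^ (M + 1) * (2 ^ i * blockCoeff (M + 1) i) [ZMOD 2 ^ (k + 1 + i)] := by
  induction i with
  | zero =>
    have hstep := two_mul_sub_modEq (h.succ_one hk) (h.add_two 0 hi)
    have hcoeff : (-1) ^ (M + 1) * (2 ^ 0 * blockCoeff (M + 1) 0) =
        2 * ((-1) ^ (M + 1) * (4 * ((M + 1 : ℕ) : ℤ) + 1)) -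
          (-1) ^ M * (2 ^ 0 * blockCoeff M 0) := by
      rw [blockCoeff_zero_right, blockCoeff_zero_right]
      push_cast
      ring
    rw [hcoeff]
    exact lucasL_mul_succ_add_succ hk M 1 ▸ hstep
  | succ i ih =>
    have hstep := two_mul_sub_modEq (ih (by omega)) (h.add_two (i + 1) hi)
    have hcoeff : (-1) ^ (M + 1) * (2 ^ (i + 1) * blockCoeff (M + 1) (i + 1)) =
        2 * ((-1) ^ (M + 1) * (2 ^ i * blockCoeff (M + 1) i)) -
          (-1) ^ M * (2 ^ (i + 1) * blockCoeff M (i + 1)) := by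
      rw [blockCoeff_succ_succ]
      ring
    rw [hcoeff]
    exact lucasL_mul_succ_add_succ hk M (i + 2) ▸ hstep

end BlockCongruence

theorem blockCongruence (hk : 2 ≤ k) (M : ℕ) : BlockCongruence k M := by
  induction M with
  | zero => exact .base hk
  | succ M ih => exact ⟨ih.succ_zero hk, ih.succ_one hk, ih.succ_add_two hk⟩

theorem lucasL_add_one (hk : 2 ≤ k) : 2 * lucasL k (k + 1) = 3 * 2 ^ k - 4 := by
  obtain ⟨r, rfl⟩ : ∃ r, k = r + 2 := ⟨k - 2, by omega⟩
  have hrec := lucasL_add_self_add_one hk 0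
  rw [zero_add, lucasL_zero, lucasL_add_two le_rfl] at hrec
  rw [hrec]
  ring

theorem lucasL_succ_add_one (hk : 2 ≤ k) : lucasL k (k + 1 + 1) = 3 * 2 ^ k - 5 := by
  have hrec := lucasL_mul_succ_add_succ hk 0 0
  simp only [mul_zero, zero_add, mul_one, add_zero, lucasL_one hk] at hrec
  linarith [lucasL_add_one hk]

theorem lucasL_succ_add_two {i : ℕ} (hi : i + 2 ≤ k) :
    lucasL k (k + 1 + (i + 2)) = 2 ^ i * (3 * 2 ^ (k + 1) - (3 * i + 13)) := by
  have hk : 2 ≤ k := by omega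
  induction i with
  | zero =>
    have hrec := lucasL_mul_succ_add_succ hk 0 1
    simp only [mul_zero, zero_add, mul_one, lucasL_two hk, lucasL_succ_add_one hk,
      Nat.reduceAdd] at hrec ⊢
    rw [hrec]
    push_cast
    ring
  | succ i ih =>
    have hrec := lucasL_mul_succ_add_succ hk 0 (i + 2)
    simp only [mul_zero, zero_add, mul_one, ih (by omega), lucasL_add_two hi,
      add_right_comm i 2 1] at hrec
    rw [hrec]
    push_cast
    ring

theorem lucasL_two_mul_succ (hk : 2 ≤ k) :
    4 * lucasL k ((k + 1) * 2) = 2 * 2 ^ k * (3 * 2 ^ (k + 1) - (3 * k + 7)) - 6 * 2 ^ k + 8 := by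
  have hone := lucasL_add_one hk
  obtain ⟨r, rfl⟩ : ∃ r, k = r + 2 := ⟨k - 2, by omega⟩
  have hrec := lucasL_mul_succ hk 1
  rw [mul_one, lucasL_succ_add_two le_rfl] at hrec
  rw [hrec]
  push_cast
  linear_combination -2 * hone

theorem lucasL_two_mul_succ_add_one (hk : 2 ≤ k) :
    4 * lucasL k ((k + 1) * 2 + 1) =
      4 * 2 ^ k * (3 * 2 ^ (k + 1) - (3 * k + 7)) - 24 * 2 ^ k + 36 := by
  have hrec := lucasL_mul_succ_add_succ hk 1 0
  simp only [mul_one, zero_add, add_zero, Nat.reduceAdd, lucasL_succ_add_one hk] at hrec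
  linear_combination 4 * hrec + 2 * lucasL_two_mul_succ hk

theorem lucasL_two_mul_succ_add_two {i : ℕ} (hi : i + 2 ≤ k) :
    2 * lucasL k ((k + 1) * 2 + (i + 2)) =
      2 ^ i * (6 * 2 ^ (2 * k + 2) - 2 ^ (k + 2) * (3 * k + 3 * i + 16) +
        (3 * i ^ 2 + 29 * i + 62)) := by
  have hk : 2 ≤ k := by omega
  induction i with
  | zero =>
    have hrec := lucasL_mul_succ_add_succ hk 1 1
    simp only [mul_one, Nat.reduceAdd] at hrec
    rw [zero_add, hrec, lucasL_succ_add_two (i := 0) hi]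
    push_cast
    linear_combination lucasL_two_mul_succ_add_one hk
  | succ i ih =>
    have hrec := lucasL_mul_succ_add_succ hk 1 (i + 2)
    simp only [mul_one, Nat.reduceAdd, add_right_comm i 2 1] at hrec
    rw [hrec, lucasL_succ_add_two hi]
    push_cast
    linear_combination 2 * ih (by omega)

end TwoAdic

section Pade

open PowerSeries in
theorem coeff_one_sub_X_pow (j i : ℕ) :
    coeff i ((1 - X : ℤ⟦X⟧) ^ j) = (-1) ^ i * (j.choose i : ℤ) := by
  induction j generalizing i with
  | zero => cases i <;> simp [coeff_one]
  | succ j ih =>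
    rw [pow_succ, mul_sub, mul_one, map_sub]
    cases i with
    | zero => simp [ih]
    | succ i =>
      rw [coeff_succ_mul_X, ih, ih, Nat.choose_succ_succ]
      push_cast
      ring

/-- The `n`-th coefficient of `(1 - X) ^ j / (1 - X) ^ (n + 1)`, written as a convolution. Up to
binomial factors these are the coefficients of the numerator and of the remainder of the diagonal
Padé approximant to `(1 + y) ^ m`. -/
def padeCoeff (n j : ℕ) : ℤ :=
  ∑ i ∈ Finset.range (n + 1), (-1) ^ i * ((2 * n - i).choose n : ℤ) * (j.choose i : ℤ)

open PowerSeries in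
theorem padeCoeff_eq_coeff (n j : ℕ) :
    padeCoeff n j = coeff n ((1 - X : ℤ⟦X⟧) ^ j * (invOneSubPow ℤ (n + 1)).val) := by
  rw [invOneSubPow_val_succ_eq_mk_add_choose, coeff_mul,
    Finset.Nat.sum_antidiagonal_eq_sum_range_succ_mk]
  refine Finset.sum_congr rfl fun i hi => ?_
  rw [Finset.mem_range] at hi
  rw [coeff_one_sub_X_pow, coeff_mk, show n + (n - i) = 2 * n - i by omega]
  ring

open PowerSeries in
theorem padeCoeff_of_le {n j : ℕ} (h : j ≤ n) :
    padeCoeff n j = ((2 * n - j).choose (n - j) : ℤ) := by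
  rw [padeCoeff_eq_coeff, show n + 1 = n - j + 1 + j by omega,
    one_sub_pow_mul_invOneSubPow_val_add_eq_invOneSubPow_val,
    invOneSubPow_val_succ_eq_mk_add_choose, coeff_mk, show n - j + n = 2 * n - j by omega]

open PowerSeries in
theorem padeCoeff_add (n t : ℕ) : padeCoeff n (t + (n + 1)) = (-1) ^ n * (t.choose n : ℤ) := by
  rw [padeCoeff_eq_coeff, one_sub_pow_add_mul_invOneSubPow_val_eq_one_sub_pow, coeff_one_sub_X_pow]

/-- The denominator `Q` of the Padé approximant `P / Q` of degree `n` to `(1 + y) ^ m`. -/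
noncomputable def padeQ (n m : ℕ) (y : ℝ) : ℝ :=
  ∑ i ∈ Finset.range (n + 1),
    (-1) ^ i * ((2 * n - i).choose n : ℝ) * ((m + n).choose i : ℝ) * y ^ i * (1 + y) ^ (n - i)

/-- The numerator `P` of the Padé approximant `P / Q` of degree `n` to `(1 + y) ^ m`. -/
noncomputable def padeP (n m : ℕ) (y : ℝ) : ℝ :=
  ∑ j ∈ Finset.range (n + 1), ((m + n).choose j : ℝ) * (padeCoeff n j : ℝ) * y ^ j

/-- The remainder `P - (1 + y) ^ m Q` of the Padé approximation, for odd `n`. -/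
noncomputable def padeR (n m : ℕ) (y : ℝ) : ℝ :=
  ∑ t ∈ Finset.range (m - n),
    ((m + n).choose (2 * n + 1 + t) : ℝ) * ((n + t).choose n : ℝ) * y ^ (2 * n + 1 + t)

theorem choose_mul_pow_mul_one_add_pow {N i : ℕ} (hi : i ≤ N) (y : ℝ) :
    (N.choose i : ℝ) * y ^ i * (1 + y) ^ (N - i) =
      ∑ j ∈ Finset.range (N + 1), (N.choose j : ℝ) * (j.choose i : ℝ) * y ^ j := by
  obtain ⟨r, rfl⟩ := Nat.exists_eq_add_of_le hi
  have hlow : ∑ j ∈ Finset.range i, ((i + r).choose j : ℝ) * (j.choose i : ℝ) * y ^ j = 0 :=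
    Finset.sum_eq_zero fun j hj => by
      rw [Nat.choose_eq_zero_of_lt (Finset.mem_range.1 hj), Nat.cast_zero, mul_zero, zero_mul]
  rw [add_assoc, Finset.sum_range_add, hlow, zero_add, Nat.add_sub_cancel_left, add_comm 1 y,
    add_pow, Finset.mul_sum]
  refine Finset.sum_congr rfl fun j _ => ?_
  have hchoose := Nat.choose_mul (n := i + r) (Nat.le_add_right i j)
  rw [Nat.add_sub_cancel_left, Nat.add_sub_cancel_left] at hchoose
  have hcast : ((i + r).choose (i + j) : ℝ) * ((i + j).choose i : ℝ) =
      (i + r).choose i * r.choose j := by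
    exact_mod_cast hchoose
  rw [hcast, one_pow, pow_add]
  ring

theorem one_add_pow_mul_padeQ (n m : ℕ) (y : ℝ) :
    (1 + y) ^ m * padeQ n m y =
      ∑ j ∈ Finset.range (m + n + 1), ((m + n).choose j : ℝ) * (padeCoeff n j : ℝ) * y ^ j := by
  have hterm : ∀ i ∈ Finset.range (n + 1),
      (1 + y) ^ m * ((-1) ^ i * ((2 * n - i).choose n : ℝ) * ((m + n).choose i : ℝ) * y ^ i *
          (1 + y) ^ (n - i)) =
        ∑ j ∈ Finset.range (m + n + 1), ((-1) ^ i * ((2 * n - i).choose n : ℝ)) *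
          (((m + n).choose j : ℝ) * (j.choose i : ℝ) * y ^ j) := fun i hi => by
    rw [Finset.mem_range] at hi
    rw [← Finset.mul_sum, ← choose_mul_pow_mul_one_add_pow (by omega), Nat.add_sub_assoc (by omega),
      pow_add]
    ring
  rw [padeQ, Finset.mul_sum, Finset.sum_congr rfl hterm, Finset.sum_comm]
  refine Finset.sum_congr rfl fun j _ => ?_
  rw [padeCoeff]
  push_cast
  rw [Finset.mul_sum, Finset.sum_mul]
  exact Finset.sum_congr rfl fun i _ => by ring

theorem one_add_pow_mul_padeQ_eq_sub {n m : ℕ} (hn : Odd n) (hm : n ≤ m) (y : ℝ) :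
    (1 + y) ^ m * padeQ n m y = padeP n m y - padeR n m y := by
  have hgap : ∑ t ∈ Finset.range n, ((m + n).choose (n + 1 + t) : ℝ) *
      (padeCoeff n (n + 1 + t) : ℝ) * y ^ (n + 1 + t) = 0 :=
    Finset.sum_eq_zero fun t ht => by
      rw [add_comm (n + 1) t, padeCoeff_add, Nat.choose_eq_zero_of_lt (Finset.mem_range.1 ht)]
      simp
  have htail : ∑ t ∈ Finset.range (m - n), ((m + n).choose (n + 1 + (n + t)) : ℝ) *
      (padeCoeff n (n + 1 + (n + t)) : ℝ) * y ^ (n + 1 + (n + t)) = -padeR n m y := by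
    rw [padeR, ← Finset.sum_neg_distrib]
    refine Finset.sum_congr rfl fun t _ => ?_
    rw [add_comm (n + 1) (n + t), padeCoeff_add, hn.neg_one_pow,
      show n + t + (n + 1) = 2 * n + 1 + t by ring]
    push_cast
    ring
  rw [one_add_pow_mul_padeQ, show m + n + 1 = n + 1 + (n + (m - n)) by omega,
    Finset.sum_range_add _ (n + 1), Finset.sum_range_add _ n (m - n), hgap, zero_add, htail,
    ← sub_eq_add_neg, padeP]

theorem one_le_padeP (n m : ℕ) {y : ℝ} (hy : 0 ≤ y) : 1 ≤ padeP n m y := by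
  have hterm : ∀ j ∈ Finset.range (n + 1),
      0 ≤ ((m + n).choose j : ℝ) * (padeCoeff n j : ℝ) * y ^ j := fun j hj => by
    rw [padeCoeff_of_le (Finset.mem_range_succ_iff.1 hj)]
    push_cast
    positivity
  refine le_trans ?_ (Finset.single_le_sum hterm (Finset.mem_range.2 n.succ_pos))
  rw [padeCoeff_of_le (Nat.zero_le n)]
  have : 0 < (2 * n - 0).choose (n - 0) := Nat.choose_pos (by omega)
  simp only [Nat.choose_zero_right, Nat.cast_one, one_mul, pow_zero, mul_one]
  exact_mod_cast this

theorem padeR_pos {n m : ℕ} (hm : n < m) {y : ℝ} (hy : 0 < y) : 0 < padeR n m y := by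
  refine Finset.sum_pos (fun t ht => ?_) ⟨0, Finset.mem_range.2 (by omega)⟩
  rw [Finset.mem_range] at ht
  have h₁ : 0 < (m + n).choose (2 * n + 1 + t) := Nat.choose_pos (by omega)
  have h₂ : 0 < (n + t).choose n := Nat.choose_pos (by omega)
  positivity

theorem padeR_le {n m : ℕ} (hm : n < m) {y : ℝ} (hy : 0 ≤ y) :
    padeR n m y ≤
      ((m + n).choose (2 * n + 1) : ℝ) * y ^ (2 * n + 1) * (1 + y) ^ (m - n - 1) := by
  obtain ⟨r, rfl⟩ : ∃ r, m = n + r + 1 := ⟨m - n - 1, by omega⟩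
  rw [padeR, show n + r + 1 - n - 1 = r by omega, show n + r + 1 - n = r + 1 by omega,
    add_comm 1 y, add_pow, Finset.mul_sum]
  refine Finset.sum_le_sum fun t _ => ?_
  have hle : (n + t).choose n ≤ (2 * n + 1 + t).choose (2 * n + 1) := by
    rw [Nat.choose_symm_add, Nat.choose_symm_add]
    exact Nat.choose_le_choose t (by omega)
  have hchoose := Nat.choose_mul (n := n + r + 1 + n) (Nat.le_add_right (2 * n + 1) t)
  rw [Nat.add_sub_cancel_left, show n + r + 1 + n - (2 * n + 1) = r by omega] at hchoose
  have hcast : ((n + r + 1 + n).choose (2 * n + 1 + t) : ℝ) *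
      ((2 * n + 1 + t).choose (2 * n + 1) : ℝ) =
        (n + r + 1 + n).choose (2 * n + 1) * r.choose t := by
    exact_mod_cast hchoose
  calc ((n + r + 1 + n).choose (2 * n + 1 + t) : ℝ) * ((n + t).choose n : ℝ) *
        y ^ (2 * n + 1 + t)
      ≤ ((n + r + 1 + n).choose (2 * n + 1 + t) : ℝ) *
          ((2 * n + 1 + t).choose (2 * n + 1) : ℝ) * y ^ (2 * n + 1 + t) := by gcongr
    _ = _ := by
      rw [hcast, pow_add, one_pow]
      ring

theorem choose_mul_pow_le {N j : ℕ} (hj : j ≤ N) {x : ℝ} (hx : 0 ≤ x) :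
    (N.choose j : ℝ) * x ^ j ≤ (1 + x) ^ N := by
  have hterm : ∀ i ∈ Finset.range (N + 1), 0 ≤ x ^ i * 1 ^ (N - i) * (N.choose i : ℝ) :=
    fun i _ => by positivity
  have h := Finset.single_le_sum hterm (Finset.mem_range_succ_iff.2 hj)
  rw [← add_pow, one_pow, mul_one] at h
  rwa [mul_comm, add_comm]

theorem padeR_le_of_pos {n m : ℕ} (hm : n < m) {x y : ℝ} (hx : 0 < x) (hy : 0 ≤ y) :
    padeR n m y ≤ (1 + x) ^ (m + n) * (y / x) ^ (2 * n + 1) * (1 + y) ^ (m - n - 1) := by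
  refine (padeR_le hm hy).trans (mul_le_mul_of_nonneg_right ?_ (by positivity))
  rw [div_pow, mul_div_assoc', le_div_iff₀ (by positivity), mul_right_comm]
  gcongr
  exact choose_mul_pow_le (by omega) hx.le

theorem two_pow_mul_choose_le {n i : ℕ} (hi : i ≤ n) :
    2 ^ i * (2 * n - i).choose n ≤ (2 * n).choose n := by
  induction i with
  | zero => simp
  | succ i ih =>
    obtain ⟨r, hr⟩ : ∃ r, 2 * n - i = r + 1 := ⟨2 * n - i - 1, by omega⟩
    have hstep := Nat.choose_mul_succ_eq r n
    have hhalf : 2 * r.choose n ≤ (r + 1).choose n := by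
      by_contra! hlt
      have : (r + 1 - n) * 2 ≤ r + 1 := by omega
      nlinarith
    calc 2 ^ (i + 1) * (2 * n - (i + 1)).choose n = 2 ^ i * (2 * r.choose n) := by
          rw [show 2 * n - (i + 1) = r by omega]
          ring
      _ ≤ 2 ^ i * (2 * n - i).choose n := by
          rw [hr]
          gcongr
      _ ≤ (2 * n).choose n := ih (by omega)

theorem padeQ_le (n m : ℕ) {y : ℝ} (hy : 0 ≤ y) :
    padeQ n m y ≤ 4 ^ n * (1 + y) ^ n * (1 + y / 2) ^ (m + n) := by
  have hcentral {i : ℕ} (hi : i ≤ n) : (2 : ℝ) ^ i * ((2 * n - i).choose n : ℝ) ≤ 4 ^ n := by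
    have h := (two_pow_mul_choose_le hi).trans (Nat.choose_le_two_pow (2 * n) n)
    rw [pow_mul] at h
    exact_mod_cast h
  have hterm : ∀ i ∈ Finset.range (n + 1),
      (-1) ^ i * ((2 * n - i).choose n : ℝ) * ((m + n).choose i : ℝ) * y ^ i * (1 + y) ^ (n - i) ≤
        4 ^ n * (1 + y) ^ n * ((y / 2) ^ i * 1 ^ (m + n - i) * ((m + n).choose i : ℝ)) :=
      fun i hi => by
    have hi := Finset.mem_range_succ_iff.1 hi
    have hpow : (1 + y) ^ (n - i) ≤ (1 + y) ^ n :=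
      pow_le_pow_right₀ (by linarith) (Nat.sub_le n i)
    calc (-1) ^ i * ((2 * n - i).choose n : ℝ) * ((m + n).choose i : ℝ) * y ^ i * (1 + y) ^ (n - i)
        ≤ 1 * ((2 * n - i).choose n : ℝ) * ((m + n).choose i : ℝ) * y ^ i * (1 + y) ^ (n - i) := by
          gcongr
          exact (le_abs_self _).trans (abs_neg_one_pow i).le
      _ = 2 ^ i * ((2 * n - i).choose n : ℝ) * (1 + y) ^ (n - i) *
            ((y / 2) ^ i * 1 ^ (m + n - i) * ((m + n).choose i : ℝ)) := by
          rw [div_pow, one_pow]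
          field_simp
      _ ≤ _ := by
          gcongr
          exact hcentral hi
  rw [add_comm 1 (y / 2), add_pow (y / 2), Finset.mul_sum]
  refine (Finset.sum_le_sum hterm).trans
    (Finset.sum_le_sum_of_subset_of_nonneg (fun i hi => ?_) fun i _ _ => by positivity)
  rw [Finset.mem_range] at hi ⊢
  omega

variable (n m : ℕ) (a : ℤ) {q : ℤ}

theorem exists_int_eq_pow_mul_padeQ (hq : q ≠ 0) :
    ∃ z : ℤ, (q : ℝ) ^ n * padeQ n m (a / q) = z := by
  refine ⟨∑ i ∈ Finset.range (n + 1), (-1) ^ i * ((2 * n - i).choose n : ℤ) *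
    ((m + n).choose i : ℤ) * a ^ i * (q + a) ^ (n - i), ?_⟩
  have hq' : (q : ℝ) ≠ 0 := Int.cast_ne_zero.2 hq
  rw [padeQ]
  push_cast
  rw [Finset.mul_sum]
  refine Finset.sum_congr rfl fun i hi => ?_
  rw [one_add_div hq', div_pow, div_pow, ← pow_mul_pow_sub (q : ℝ) (Finset.mem_range_succ_iff.1 hi)]
  field_simp

theorem exists_int_eq_pow_mul_padeP (hq : q ≠ 0) :
    ∃ z : ℤ, (q : ℝ) ^ n * padeP n m (a / q) = z := by
  refine ⟨∑ j ∈ Finset.range (n + 1),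
    ((m + n).choose j : ℤ) * padeCoeff n j * a ^ j * q ^ (n - j), ?_⟩
  have : (q : ℝ) ≠ 0 := Int.cast_ne_zero.2 hq
  rw [padeP]
  push_cast
  rw [Finset.mul_sum]
  refine Finset.sum_congr rfl fun j hj => ?_
  rw [div_pow, ← pow_mul_pow_sub (q : ℝ) (Finset.mem_range_succ_iff.1 hj)]
  field_simp

variable {n m a}

/-- The Padé approximant turns `A q ^ m = B (q + a) ^ m - o` into an integer lying strictly
between `-1` and `0`. -/
theorem false_of_pade_bounds {A B : ℤ} {o : ℝ} (hn : Odd n) (hm : n < m) (ha : 0 < a) (hq : 0 < q)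
    (hB : 0 < B) (ho : 0 < o) (h : (A : ℝ) * q ^ m = B * (q + a) ^ m - o)
    (hR : (q : ℝ) ^ n * B * padeR n m (a / q) < 1 / 2)
    (hQ : (q : ℝ) ^ n * padeQ n m (a / q) * o < q ^ m / 2) : False := by
  have hq₀ : (1 : ℝ) ≤ q := by exact_mod_cast hq
  have hB₀ : (1 : ℝ) ≤ B := by exact_mod_cast hB
  have hy : (0 : ℝ) < a / q := div_pos (by exact_mod_cast ha) (by linarith)
  obtain ⟨zQ, hzQ⟩ := exists_int_eq_pow_mul_padeQ n m a hq.ne'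
  obtain ⟨zP, hzP⟩ := exists_int_eq_pow_mul_padeP n m a hq.ne'
  have hid := one_add_pow_mul_padeQ_eq_sub hn hm.le ((a : ℝ) / q)
  have hP := one_le_padeP n m hy.le
  have hRpos := padeR_pos hm hy
  set Q := padeQ n m (a / q)
  set P := padeP n m (a / q)
  set R := padeR n m (a / q)
  have hqm : (0 : ℝ) < q ^ m := by positivity
  have hscale : (1 : ℝ) ≤ q ^ n * B := one_le_mul_of_one_le_of_one_le (one_le_pow₀ hq₀) hB₀
  have hQpos : 0 < Q := by
    have : 0 < (1 + (a : ℝ) / q) ^ m * Q := by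
      rw [hid]
      nlinarith
    exact pos_of_mul_pos_right this (by positivity)
  have hid' : ((q : ℝ) + a) ^ m * Q = (P - R) * q ^ m := by
    rw [← hid, one_add_div (by positivity), div_pow]
    field_simp
  have hz : ((A * zQ - B * zP : ℤ) : ℝ) * q ^ m = -(q ^ n * B * R) * q ^ m - q ^ n * Q * o := by
    push_cast
    rw [← hzQ, ← hzP]
    linear_combination (q : ℝ) ^ n * Q * h + (q : ℝ) ^ n * B * hid'
  have hRpos' : 0 < (q : ℝ) ^ n * B * R := by positivity
  have hQpos' : 0 < (q : ℝ) ^ n * Q * o := by positivity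
  have hlt : ((A * zQ - B * zP : ℤ) : ℝ) < 0 :=
    neg_of_mul_neg_left (by rw [hz]; nlinarith) hqm.le
  have hgt : (-1 : ℝ) < (A * zQ - B * zP : ℤ) :=
    lt_of_mul_lt_mul_right (by rw [hz]; nlinarith) hqm.le
  have hlt' : A * zQ - B * zP < 0 := by exact_mod_cast hlt
  have hgt' : -1 < A * zQ - B * zP := by exact_mod_cast hgt
  omega

end Pade

section PowersOfFiveAndTwo

theorem two_pow_le_of_le_six {r : ℕ} (hr : r ≤ 6) : (2 : ℝ) ^ r ≤ 64 := by
  calc (2 : ℝ) ^ r ≤ 2 ^ 6 := pow_le_pow_right₀ (by norm_num) hr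
    _ = 64 := by norm_num

/-- The Padé approximants of `(1 + 3 / 125) ^ m` compare powers of `128 = 2 ^ 7` and
`125 = 5 ^ 3`. -/
theorem mul_five_pow_ne_of_pade_bounds {n m r : ℕ} {o : ℝ} (b : ℤ) (s : ℕ) (hn : Odd n)
    (hm : n < m) (hr : r ≤ 6) (ho : 0 < o)
    (hR : (125 : ℝ) ^ n * 192 *
      ((37 / 17) ^ (m + n) * (51 / 2500) ^ (2 * n + 1) * (128 / 125) ^ (m - n - 1)) < 1 / 2)
    (hQ : (125 : ℝ) ^ n * (4 ^ n * (128 / 125) ^ n * (253 / 250) ^ (m + n)) * o < 125 ^ m / 2) :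
    (b : ℝ) * 5 ^ (3 * m + s) ≠ 3 * 2 ^ (7 * m + r) - o := by
  intro h
  have hR' : padeR n m (3 / 125) ≤
      (37 / 17) ^ (m + n) * (51 / 2500) ^ (2 * n + 1) * (128 / 125) ^ (m - n - 1) := by
    have := padeR_le_of_pos hm (x := 20 / 17) (y := 3 / 125) (by norm_num) (by norm_num)
    norm_num at this ⊢
    exact this
  have hQ' : padeQ n m (3 / 125) ≤ 4 ^ n * (128 / 125) ^ n * (253 / 250) ^ (m + n) := by
    have := padeQ_le n m (y := 3 / 125) (by norm_num)
    norm_num at this ⊢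
    exact this
  have hR₀ := (padeR_pos hm (y := 3 / 125) (by norm_num)).le
  have hB : (3 : ℝ) * 2 ^ r ≤ 192 := by linarith [two_pow_le_of_le_six hr]
  refine false_of_pade_bounds (a := 3) (q := 125) (A := b * 5 ^ s) (B := 3 * 2 ^ r)
    hn hm (by norm_num) (by norm_num) (by positivity) ho ?_ ?_ ?_
  · push_cast
    rw [pow_add, pow_add, pow_mul, pow_mul] at h
    norm_num at h ⊢
    linarith
  · push_cast
    exact lt_of_le_of_lt (by gcongr) hR
  · push_cast
    exact lt_of_le_of_lt (by gcongr) hQ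

section LinearError

variable {e q : ℕ}

theorem linear_padeR_bound (he : e < 4) (hq : 12 ≤ q) :
    (125 : ℝ) ^ (2 * q + 1) * 192 * ((37 / 17) ^ (4 * q + e + (2 * q + 1)) *
      (51 / 2500) ^ (2 * (2 * q + 1) + 1) * (128 / 125) ^ (4 * q + e - (2 * q + 1) - 1)) <
      1 / 2 := by
  calc
    _ ≤ (125 : ℝ) ^ (2 * q + 1) * 192 * ((37 / 17) ^ (6 * q + 4) *
          (51 / 2500) ^ (2 * (2 * q + 1) + 1) * (128 / 125) ^ (2 * q + 1)) := by
      gcongr _ * (?_ * _ * ?_) <;> exact pow_le_pow_right₀ (by norm_num) (by omega)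
    _ = (125 ^ 2 * (37 / 17) ^ 6 * (51 / 2500) ^ 4 * (128 / 125) ^ 2) ^ q *
          (125 * 192 * (37 / 17) ^ 4 * (51 / 2500) ^ 3 * (128 / 125)) := by
      generalize (128 / 125 : ℝ) = d
      generalize (125 : ℝ) = a, (37 / 17 : ℝ) = b, (51 / 2500 : ℝ) = c
      ring
    _ ≤ (1 / 2) ^ q * 100 := by gcongr <;> norm_num
    _ ≤ (1 / 2) ^ 12 * 100 := by
      gcongr ?_ * 100
      exact pow_le_pow_of_le_one (by norm_num) (by norm_num) hq
    _ < 1 / 2 := by norm_num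

theorem linear_padeQ_bound {o : ℝ} (he : e < 4) (hq : 12 ≤ q) (ho₀ : 0 < o)
    (ho : o ≤ 300 * ((4 * q + e : ℕ) : ℝ)) :
    (125 : ℝ) ^ (2 * q + 1) * (4 ^ (2 * q + 1) * (128 / 125) ^ (2 * q + 1) *
      (253 / 250) ^ (4 * q + e + (2 * q + 1))) * o < 125 ^ (4 * q + e) / 2 := by
  have ho' : o ≤ 1200 * 2 ^ q := by
    have hle : 4 * q + e ≤ 4 * 2 ^ q := by
      have := Nat.lt_two_pow_self (n := q)
      omega
    have : ((4 * q + e : ℕ) : ℝ) ≤ 4 * 2 ^ q := by exact_mod_cast hle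
    linarith
  have h400 : (400 : ℝ) ^ 12 ≤ 400 ^ q := pow_le_pow_right₀ (by norm_num) hq
  calc
    _ ≤ (125 : ℝ) ^ (2 * q + 1) * (4 ^ (2 * q + 1) * (128 / 125) ^ (2 * q + 1) *
          (253 / 250) ^ (6 * q + 4)) * (1200 * 2 ^ q) := by
      gcongr _ * (_ * _ * ?_) * ?_
      exact pow_le_pow_right₀ (by norm_num) (by omega)
    _ = (125 ^ 2 * 4 ^ 2 * (128 / 125) ^ 2 * (253 / 250) ^ 6 * 2) ^ q *
          (125 * 4 * (128 / 125) * (253 / 250) ^ 4 * 1200) := by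
      generalize (128 / 125 : ℝ) = c
      generalize (125 : ℝ) = a, (4 : ℝ) = b, (253 / 250 : ℝ) = d
      ring
    _ ≤ 600000 ^ q * 1200000 := by gcongr <;> norm_num
    _ < 600000 ^ q * 400 ^ q / 2 := by
      have : (1200000 : ℝ) < 400 ^ q / 2 := by linarith
      rw [mul_div_assoc]
      gcongr
    _ ≤ 125 ^ (4 * q) / 2 := by
      rw [← mul_pow, pow_mul]
      gcongr
      norm_num
    _ ≤ 125 ^ (4 * q + e) / 2 := by
      gcongr
      · norm_num
      · omega

theorem mul_five_pow_ne_of_le_linear {m r : ℕ} {o : ℝ} (b : ℤ) (s : ℕ) (hm : 50 ≤ m) (hr : r ≤ 6)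
    (ho : 0 < o) (hom : o ≤ 300 * m) : (b : ℝ) * 5 ^ (3 * m + s) ≠ 3 * 2 ^ (7 * m + r) - o := by
  obtain ⟨q, e, he, rfl⟩ : ∃ q e, e < 4 ∧ m = 4 * q + e := ⟨m / 4, m % 4, by omega, by omega⟩
  exact mul_five_pow_ne_of_pade_bounds b s (odd_two_mul_add_one q) (by omega) hr ho
    (linear_padeR_bound he (by omega)) (linear_padeQ_bound he (by omega) ho hom)

end LinearError

section SquareRootError

variable {u v : ℕ}

theorem sqrt_padeR_bound (hu : 12 ≤ u) (hv : v < 27) :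
    (125 : ℝ) ^ (10 * u + 2 * (5 * v / 27) + 1) * 192 *
      ((37 / 17) ^ (27 * u + v + (10 * u + 2 * (5 * v / 27) + 1)) *
      (51 / 2500) ^ (2 * (10 * u + 2 * (5 * v / 27) + 1) + 1) *
      (128 / 125) ^ (27 * u + v - (10 * u + 2 * (5 * v / 27) + 1) - 1)) < 1 / 2 := by
  calc
    _ ≤ (125 : ℝ) ^ (10 * u + 2 * (5 * v / 27) + 1) * 192 *
          ((37 / 17) ^ (27 * u + v + (10 * u + 2 * (5 * v / 27) + 1)) *
          (51 / 2500) ^ (2 * (10 * u + 2 * (5 * v / 27) + 1) + 1) *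
          (128 / 125) ^ (17 * u + v)) := by
      gcongr _ * (?_ * _ * ?_)
      exact pow_le_pow_right₀ (by norm_num) (by omega)
    _ = (125 ^ 10 * (37 / 17) ^ 37 * (51 / 2500) ^ 20 * (128 / 125) ^ 17) ^ u *
          ((125 * (37 / 17) * (51 / 2500) ^ 2) ^ (2 * (5 * v / 27)) *
          ((37 / 17) * (128 / 125)) ^ v * (125 * 192 * (37 / 17) * (51 / 2500) ^ 3)) := by
      generalize (128 / 125 : ℝ) = d
      generalize (125 : ℝ) = a, (37 / 17 : ℝ) = b, (51 / 2500 : ℝ) = c,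
        5 * v / 27 = w
      ring
    _ ≤ (69 / 100) ^ u * 40 := by
      gcongr
      · norm_num
      · interval_cases v <;> norm_num
    _ ≤ (69 / 100) ^ 12 * 40 := by
      gcongr ?_ * 40
      exact pow_le_pow_of_le_one (by norm_num) (by norm_num) hu
    _ < 1 / 2 := by norm_num

theorem sqrt_padeQ_sq_le (u : ℕ) (hv : v < 27) :
    ((125 : ℝ) ^ (10 * u + 2 * (5 * v / 27) + 1) * (4 ^ (10 * u + 2 * (5 * v / 27) + 1) *
      (128 / 125) ^ (10 * u + 2 * (5 * v / 27) + 1) *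
      (253 / 250) ^ (27 * u + v + (10 * u + 2 * (5 * v / 27) + 1)))) ^ 2 *
      (128 / 15625) ^ (27 * u + v) ≤ (1 / 50) ^ u * 400000 := by
  calc
    _ = ((125 * 4 * (128 / 125)) ^ 20 * (253 / 250) ^ 74 * (128 / 15625) ^ 27 : ℝ) ^ u *
          ((125 * 4 * (128 / 125) * (253 / 250)) ^ (4 * (5 * v / 27)) *
          ((253 / 250) ^ 2 * (128 / 15625)) ^ v *
          (125 * 4 * (128 / 125) * (253 / 250)) ^ 2) := by
      generalize (128 / 15625 : ℝ) = f
      generalize (128 / 125 : ℝ) = c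
      generalize (125 : ℝ) = a, (4 : ℝ) = b,
        (253 / 250 : ℝ) = d, 5 * v / 27 = w
      ring
    _ ≤ _ := by
      gcongr
      · norm_num
      · interval_cases v <;> norm_num

theorem sqrt_padeQ_bound {o : ℝ} (hu : 12 ≤ u) (hv : v < 27)
    (ho : o ^ 2 ≤ 2 ^ (7 * (27 * u + v)) * (270848 * ((27 * u + v : ℕ) : ℝ) ^ 2)) :
    (125 : ℝ) ^ (10 * u + 2 * (5 * v / 27) + 1) * (4 ^ (10 * u + 2 * (5 * v / 27) + 1) *
      (128 / 125) ^ (10 * u + 2 * (5 * v / 27) + 1) *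
      (253 / 250) ^ (27 * u + v + (10 * u + 2 * (5 * v / 27) + 1))) * o <
      125 ^ (27 * u + v) / 2 := by
  have hY := sqrt_padeQ_sq_le u hv
  set Y := (125 : ℝ) ^ (10 * u + 2 * (5 * v / 27) + 1) * (4 ^ (10 * u + 2 * (5 * v / 27) + 1) *
      (128 / 125) ^ (10 * u + 2 * (5 * v / 27) + 1) *
      (253 / 250) ^ (27 * u + v + (10 * u + 2 * (5 * v / 27) + 1)))
  have hm : ((27 * u + v : ℕ) : ℝ) ≤ 54 * (3 / 2) ^ u := by
    have hBernoulli := one_add_mul_le_pow (a := (1 / 2 : ℝ)) (by norm_num) u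
    norm_num at hBernoulli
    have : (v : ℝ) ≤ 27 := by exact_mod_cast hv.le
    push_cast
    linarith
  have hsq : (Y * o) ^ 2 < (125 ^ (27 * u + v) / 2) ^ 2 := by
    calc (Y * o) ^ 2 = Y ^ 2 * o ^ 2 := mul_pow ..
      _ ≤ Y ^ 2 * (2 ^ (7 * (27 * u + v)) * (270848 * ((27 * u + v : ℕ) : ℝ) ^ 2)) := by gcongr
      _ = Y ^ 2 * (128 / 15625) ^ (27 * u + v) * (270848 * ((27 * u + v : ℕ) : ℝ) ^ 2) *
            15625 ^ (27 * u + v) := by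
        rw [pow_mul, div_pow]
        norm_num
        field_simp
      _ ≤ (1 / 50) ^ u * 400000 * (270848 * (54 * (3 / 2) ^ u) ^ 2) * 15625 ^ (27 * u + v) := by
        gcongr
      _ = (9 / 200) ^ u * (400000 * 270848 * 54 ^ 2) * 15625 ^ (27 * u + v) := by
        have : (9 / 200 : ℝ) ^ u = (1 / 50) ^ u * ((3 / 2) ^ u) ^ 2 := by
          rw [← pow_mul, mul_comm u, pow_mul, ← mul_pow]
          norm_num
        rw [this]
        ring
      _ ≤ (9 / 200) ^ 12 * (400000 * 270848 * 54 ^ 2) * 15625 ^ (27 * u + v) := by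
        gcongr ?_ * _ * _
        exact pow_le_pow_of_le_one (by norm_num) (by norm_num) hu
      _ < 1 / 4 * 15625 ^ (27 * u + v) := by
        gcongr
        norm_num
      _ = (125 ^ (27 * u + v) / 2) ^ 2 := by
        rw [div_pow, ← pow_mul, mul_comm (27 * u + v) 2, pow_mul]
        norm_num
        ring
  exact lt_of_pow_lt_pow_left₀ 2 (by positivity) hsq

theorem mul_five_pow_ne_of_sq_le {m r : ℕ} {o : ℝ} (b : ℤ) (s : ℕ) (hm : 324 ≤ m) (hr : r ≤ 6)
    (ho : 0 < o) (hom : o ^ 2 ≤ 2 ^ (7 * m) * (270848 * (m : ℝ) ^ 2)) :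
    (b : ℝ) * 5 ^ (3 * m + s) ≠ 3 * 2 ^ (7 * m + r) - o := by
  obtain ⟨u, v, hv, rfl⟩ : ∃ u v, v < 27 ∧ m = 27 * u + v :=
    ⟨m / 27, m % 27, by omega, by omega⟩
  exact mul_five_pow_ne_of_pade_bounds b s ⟨5 * u + 5 * v / 27, by ring⟩ (by omega) hr ho
    (sqrt_padeR_bound (by omega) hv) (sqrt_padeQ_bound (by omega) hv hom)

end SquareRootError

end PowersOfFiveAndTwo

section EarlyBlocks

-- For `k < 1200` the size of `L_n` confines `i` to a window of length `60`, which reduction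
-- modulo `5 ^ 12` then clears.
set_option maxRecDepth 100000 in
theorem window_residue_ne : ∀ k < 1200, 451 ≤ k → ∀ t < 60,
    (6 * 2 ^ (2 * k + 2) + (3 * (59 * (2 * k - 110) / 137 + t) ^ 2 +
      29 * (59 * (2 * k - 110) / 137 + t) + 62)) % 5 ^ 12 ≠
    (2 ^ (k + 2) * (3 * k + 3 * (59 * (2 * k - 110) / 137 + t) + 16)) % 5 ^ 12 := by
  decide +kernel

theorem not_dvd_of_mem_window {k i : ℕ} (hk : 451 ≤ k) (hk' : k < 1200)
    (hi : 59 * (2 * k - 110) / 137 ≤ i) (hi' : i < 59 * (2 * k - 110) / 137 + 60) :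
    ¬ (5 : ℤ) ^ 12 ∣ 6 * 2 ^ (2 * k + 2) - 2 ^ (k + 2) * (3 * k + 3 * i + 16) +
      (3 * i ^ 2 + 29 * i + 62) := by
  intro h
  obtain ⟨t, rfl⟩ := Nat.exists_eq_add_of_le hi
  refine window_residue_ne k hk' hk t (by omega) ((Nat.modEq_iff_dvd.2 ?_).symm)
  push_cast at h ⊢
  convert h using 1
  ring

theorem three_mul_lt_of_lucasL_eq {k n d : ℕ} {b : ℤ} (hk : 450 < k) (hn : 5 < n) (hb : b ≤ 9)
    (hL : lucasL k n = b * 10 ^ d) : 3 * n < 10 * d + 13 := by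
  obtain ⟨α, h⟩ := exists_isDominantRoot (k := k) (by omega)
  have hα := h.ge_of_gt hk
  have happrox := (abs_le.1 (h.abs_lucasL_sub_le (by omega) n)).1
  obtain ⟨p, rfl⟩ : ∃ p, n = p + 1 := ⟨n - 1, by omega⟩
  have hb' : (b : ℝ) * 10 ^ d ≤ 9 * 10 ^ d := by
    gcongr
    exact_mod_cast hb
  have hgrow : (1.997 : ℝ) ^ p ≤ α ^ p := by gcongr
  have hlarge : (6 : ℝ) ≤ 1.997 ^ p := by
    calc (6 : ℝ) ≤ 1.997 ^ 5 := by norm_num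
      _ ≤ 1.997 ^ p := pow_le_pow_right₀ (by norm_num) (by omega)
  have hlead : 1.39 * α ^ p ≤ dominantCoeff k α * α ^ (p + 1) := by
    calc 1.39 * α ^ p ≤ 7 / 10 * 1.997 * α ^ p := by
          gcongr
          norm_num
      _ ≤ dominantCoeff k α * α * α ^ p := by
          gcongr
          · exact h.dominantCoeff_nonneg
          · exact h.le_dominantCoeff (by linarith)
      _ = dominantCoeff k α * α ^ (p + 1) := by ring
  have hlt : (1.997 : ℝ) ^ p < 10 ^ (d + 1) := by
    rw [hL] at happrox
    push_cast at happrox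
    have : (1 : ℝ) ≤ 10 ^ d := one_le_pow₀ (by norm_num)
    rw [pow_succ (10 : ℝ)]
    linarith
  have hpow : (10 : ℝ) ^ (3 * p) < 10 ^ (10 * (d + 1)) := by
    calc (10 : ℝ) ^ (3 * p) = 1000 ^ p := by
          rw [pow_mul]
          norm_num
      _ ≤ (1.997 ^ 10) ^ p := by
          gcongr
          norm_num
      _ = (1.997 ^ p) ^ 10 := by rw [← pow_mul, ← pow_mul, mul_comm]
      _ < (10 ^ (d + 1)) ^ 10 := by gcongr
      _ = 10 ^ (10 * (d + 1)) := by rw [← pow_mul, mul_comm]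
  have := (pow_lt_pow_iff_right₀ (by norm_num)).1 hpow
  omega

section Exponents

variable {b : ℤ} {d i K m : ℕ}

theorem le_add_three_of_two_pow_dvd (hb : 1 ≤ b) (hb' : b ≤ 9) (h : (2 : ℤ) ^ i ∣ b * 10 ^ d) :
    i ≤ d + 3 := by
  by_contra! hlt
  have hdvd : (2 : ℤ) ^ d * 2 ^ 4 ∣ 2 ^ d * (b * 5 ^ d) := by
    rw [← pow_add, mul_left_comm, ← mul_pow]
    exact (pow_dvd_pow 2 hlt).trans h
  have hcop : IsCoprime ((2 : ℤ) ^ 4) (5 ^ d) := IsCoprime.pow (by norm_num)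
  have := Int.le_of_dvd (by omega)
    (hcop.dvd_of_dvd_mul_right ((mul_dvd_mul_iff_left (by positivity)).1 hdvd))
  omega

theorem two_pow_div_two_pow_le (h : i ≤ d + 3) : (2 : ℝ) ^ i / 2 ^ d ≤ 8 := by
  rw [div_le_iff₀ (by positivity)]
  calc (2 : ℝ) ^ i ≤ 2 ^ (d + 3) := pow_le_pow_right₀ (by norm_num) h
    _ = 8 * 2 ^ d := by ring

theorem mul_five_pow_eq {E : ℕ} {c : ℝ} (hK : K + d = E + i)
    (h : (b : ℝ) * 10 ^ d = 2 ^ i * (3 * 2 ^ E - c)) :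
    (b : ℝ) * 5 ^ d = 3 * 2 ^ K - 2 ^ i / 2 ^ d * c := by
  have hpow : (2 : ℝ) ^ K * 2 ^ d = 2 ^ E * 2 ^ i := by rw [← pow_add, hK, pow_add]
  rw [show (10 : ℝ) = 2 * 5 by norm_num, mul_pow] at h
  field_simp
  linear_combination h - 3 * hpow

theorem three_mul_le_of_mul_five_pow_eq {o : ℝ} (hb : b ≤ 9) (hK : 7 * m ≤ K)
    (ho : o ≤ 2 ^ (7 * m)) (h : (b : ℝ) * 5 ^ d = 3 * 2 ^ K - o) : 3 * m ≤ d := by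
  by_contra! hlt
  obtain ⟨t, rfl⟩ : ∃ t, m = t + 1 := ⟨m - 1, by omega⟩
  have hfive : (5 : ℝ) ^ d ≤ 25 * 125 ^ t := by
    calc (5 : ℝ) ^ d ≤ 5 ^ (3 * t + 2) := pow_le_pow_right₀ (by norm_num) (by omega)
      _ = 25 * 125 ^ t := by
          rw [pow_add, pow_mul]
          norm_num
          ring
  have htwo : (2 : ℝ) ^ (7 * (t + 1)) = 128 * 128 ^ t := by
    rw [pow_mul, pow_succ]
    norm_num
    ring
  have hK' : (2 : ℝ) ^ (7 * (t + 1)) ≤ 2 ^ K := pow_le_pow_right₀ (by norm_num) hK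
  have hmono : (125 : ℝ) ^ t ≤ 128 ^ t := by gcongr; norm_num
  have hpos : (0 : ℝ) < 125 ^ t := by positivity
  have hb' : (b : ℝ) * 5 ^ d ≤ 9 * 5 ^ d := by
    gcongr
    exact_mod_cast hb
  linarith

theorem mul_le_two_pow {c e : ℕ} (h : c ≤ 2 ^ (e * m)) : (c : ℝ) * m ≤ 2 ^ ((e + 1) * m) := by
  have : c * m ≤ 2 ^ ((e + 1) * m) := by
    rw [add_one_mul, pow_add]
    exact Nat.mul_le_mul h Nat.lt_two_pow_self.le
  exact_mod_cast this

end Exponents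

section OneBlock

variable {k i d : ℕ} {b : ℤ}

theorem mul_ten_pow_ne_one_block (hk : 450 < k) (hb : b ≤ 9)
    (hi : i + 2 ≤ k) (hid : i ≤ d + 3) (hd : d ≤ i + k / 10) :
    b * 10 ^ d ≠ 2 ^ i * (3 * 2 ^ (k + 1) - (3 * i + 13)) := by
  intro h
  obtain ⟨K, hK⟩ : ∃ K, K + d = k + 1 + i := ⟨k + 1 + i - d, by omega⟩
  obtain ⟨m, r, hr, rfl⟩ : ∃ m r, r < 7 ∧ K = 7 * m + r := ⟨K / 7, K % 7, by omega, by omega⟩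
  have heq := mul_five_pow_eq (b := b) (c := 3 * (i : ℝ) + 13) hK (by exact_mod_cast h)
  have hle : (2 : ℝ) ^ i / 2 ^ d * (3 * i + 13) ≤ 300 * m := by
    calc (2 : ℝ) ^ i / 2 ^ d * (3 * i + 13) ≤ 8 * (3 * i + 13) := by
          gcongr
          exact two_pow_div_two_pow_le hid
      _ ≤ 300 * m := by exact_mod_cast (by omega : 8 * (3 * i + 13) ≤ 300 * m)
  have h300 : (300 : ℝ) * m ≤ 2 ^ (7 * m) := by
    refine mod_cast mul_le_two_pow (c := 300) (e := 6) ?_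
    exact le_trans (by norm_num) (Nat.pow_le_pow_right two_pos (by omega : 9 ≤ 6 * m))
  obtain ⟨s, rfl⟩ := Nat.exists_eq_add_of_le
    (three_mul_le_of_mul_five_pow_eq hb (by omega) (hle.trans h300) heq)
  exact mul_five_pow_ne_of_le_linear b s (by omega) (by omega) (by positivity) hle heq

end OneBlock

section TwoBlocks

variable {k i d : ℕ} {b : ℤ}

theorem linear_le_two_pow (hk : 5 ≤ k) (hi : i ≤ k) :
    3 * (k : ℝ) + 3 * i + 16 ≤ 2 ^ (k + 1) := by
  obtain ⟨t, rfl⟩ := Nat.exists_eq_add_of_le hk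
  have ht : t < 2 ^ t := Nat.lt_two_pow_self
  have hpow : 2 ^ (5 + t + 1) = 64 * 2 ^ t := by ring
  exact_mod_cast (by omega : 3 * (5 + t) + 3 * i + 16 ≤ 2 ^ (5 + t + 1))

theorem two_block_error_pos (hk : 5 ≤ k) (hi : i ≤ k) :
    (0 : ℝ) < 2 ^ (k + 1) * (3 * k + 3 * i + 16) - (3 * i ^ 2 + 29 * i + 62) / 2 := by
  have hlin := linear_le_two_pow hk hi
  nlinarith [Nat.cast_nonneg (α := ℝ) i, (Nat.cast_le (α := ℝ)).2 hi]

theorem two_block_error_sq_le {K m r : ℕ} {c : ℝ} (hid : i ≤ d + 3) (hK : K + d = 2 * k + 2 + i)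
    (hKm : K = 7 * m + r) (hr : r ≤ 6) (hm : 3 * k + 3 * i + 16 ≤ 23 * m) (hc : 0 ≤ c)
    (hc' : c ≤ 2 ^ (k + 1) * (3 * k + 3 * i + 16)) :
    (2 ^ i / 2 ^ d * c) ^ 2 ≤ 2 ^ (7 * m) * (270848 * (m : ℝ) ^ 2) := by
  have hpow : (2 : ℝ) ^ K * 2 ^ d = 2 ^ (k + 1) * 2 ^ (k + 1) * 2 ^ i := by
    rw [← pow_add, hK, ← pow_add, ← pow_add]
    ring_nf
  have hm' : 3 * (k : ℝ) + 3 * i + 16 ≤ 23 * m := by exact_mod_cast hm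
  calc ((2 : ℝ) ^ i / 2 ^ d * c) ^ 2 ≤ (2 ^ i / 2 ^ d * (2 ^ (k + 1) * (23 * m))) ^ 2 := by
        gcongr
        exact hc'.trans (by gcongr)
    _ = 2 ^ i / 2 ^ d * (2 ^ (k + 1) * 2 ^ (k + 1) * 2 ^ i / 2 ^ d) * (529 * (m : ℝ) ^ 2) := by
        ring
    _ = 2 ^ i / 2 ^ d * 2 ^ K * (529 * (m : ℝ) ^ 2) := by
        rw [← hpow, mul_div_cancel_right₀ _ (by positivity)]
    _ ≤ 8 * (2 ^ (7 * m) * 64) * (529 * (m : ℝ) ^ 2) := by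
        rw [hKm, pow_add]
        gcongr
        · exact two_pow_div_two_pow_le hid
        · exact two_pow_le_of_le_six hr
    _ = 2 ^ (7 * m) * (270848 * (m : ℝ) ^ 2) := by ring

theorem le_two_pow_of_sq_le {m : ℕ} {o : ℝ} (hm : 5 ≤ m)
    (h : o ^ 2 ≤ 2 ^ (7 * m) * (270848 * (m : ℝ) ^ 2)) : o ≤ 2 ^ (7 * m) := by
  have h600 : (600 : ℝ) * m ≤ 2 ^ (3 * m) := by
    refine mod_cast mul_le_two_pow (c := 600) (e := 2) ?_
    exact le_trans (by norm_num) (Nat.pow_le_pow_right two_pos (by omega : 10 ≤ 2 * m))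
  refine le_of_sq_le_sq ?_ (by positivity)
  calc o ^ 2 ≤ 2 ^ (7 * m) * (270848 * (m : ℝ) ^ 2) := h
    _ ≤ 2 ^ (7 * m) * (600 * m) ^ 2 := by
        gcongr
        nlinarith [sq_nonneg (m : ℝ)]
    _ ≤ 2 ^ (7 * m) * (2 ^ (3 * m)) ^ 2 := by gcongr
    _ = 2 ^ (13 * m) := by rw [← pow_mul, ← pow_add]; ring_nf
    _ ≤ 2 ^ (14 * m) := pow_le_pow_right₀ (by norm_num) (by omega)
    _ = (2 ^ (7 * m)) ^ 2 := by rw [← pow_mul]; ring_nf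

theorem two_mul_mul_ten_pow_ne_two_blocks_of_ge (hk : 1200 ≤ k) (hb : b ≤ 9) (hi : i + 2 ≤ k)
    (hid : i ≤ d + 3) (hd : d ≤ i + k / 10) :
    2 * (b * 10 ^ d) ≠ 2 ^ i * (6 * 2 ^ (2 * k + 2) - 2 ^ (k + 2) * (3 * k + 3 * i + 16) +
      (3 * i ^ 2 + 29 * i + 62)) := by
  intro h
  have hR : 2 * ((b : ℝ) * 10 ^ d) = 2 ^ i * (6 * 2 ^ (2 * k + 2) -
      2 ^ (k + 2) * (3 * k + 3 * i + 16) + (3 * i ^ 2 + 29 * i + 62)) := by exact_mod_cast h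
  obtain ⟨K, hK⟩ : ∃ K, K + d = 2 * k + 2 + i := ⟨2 * k + 2 + i - d, by omega⟩
  obtain ⟨m, r, hr, hKm⟩ : ∃ m r, r < 7 ∧ K = 7 * m + r := ⟨K / 7, K % 7, by omega, by omega⟩
  have hpos := two_block_error_pos (k := k) (i := i) (by omega) (by omega)
  have hle : 2 ^ (k + 1) * (3 * (k : ℝ) + 3 * i + 16) - (3 * i ^ 2 + 29 * i + 62) / 2 ≤
      2 ^ (k + 1) * (3 * k + 3 * i + 16) := sub_le_self _ (by positivity)
  have heq := mul_five_pow_eq (b := b)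
    (c := 2 ^ (k + 1) * (3 * (k : ℝ) + 3 * i + 16) - (3 * i ^ 2 + 29 * i + 62) / 2) hK
    (by linear_combination hR / 2)
  have hsq := two_block_error_sq_le hid hK hKm (by omega) (by omega) hpos.le hle
  obtain ⟨s, rfl⟩ := Nat.exists_eq_add_of_le
    (three_mul_le_of_mul_five_pow_eq hb (by omega) (le_two_pow_of_sq_le (by omega) hsq) heq)
  rw [hKm] at heq
  exact mul_five_pow_ne_of_sq_le b s (by omega) (by omega) (by positivity) hsq heq

theorem two_block_bounds {x : ℝ} (hk : 5 ≤ k) (hi : i ≤ k)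
    (h : 2 * x = 2 ^ i * (6 * 2 ^ (2 * k + 2) - 2 ^ (k + 2) * (3 * k + 3 * i + 16) +
      (3 * i ^ 2 + 29 * i + 62))) :
    2 ^ i * (2 * 2 ^ (2 * k + 2)) ≤ x ∧ x ≤ 2 ^ i * (3 * 2 ^ (2 * k + 2)) := by
  have hpos := two_block_error_pos hk hi
  have hsq : (2 : ℝ) ^ (2 * k + 2) = 2 ^ (k + 1) * 2 ^ (k + 1) := by ring
  have hlin : (2 : ℝ) ^ (k + 1) * (3 * k + 3 * i + 16) ≤ 2 ^ (2 * k + 2) := by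
    rw [hsq]
    gcongr
    exact linear_le_two_pow hk hi
  have hquad : (0 : ℝ) ≤ 3 * (i : ℝ) ^ 2 + 29 * i + 62 := by positivity
  rw [show (2 : ℝ) ^ (k + 2) = 2 * 2 ^ (k + 1) by ring] at h
  constructor <;> refine le_of_mul_le_mul_left ?_ (two_pos (α := ℝ)) <;>
    rw [h, mul_left_comm] <;> gcongr <;> linarith

theorem lower_window (h : (2 : ℝ) ^ i * (2 * 2 ^ (2 * k + 2)) ≤ 9 * 10 ^ (i + 33)) :
    59 * (2 * k) < 137 * i + 59 * 110 := by
  have hlt : (2 : ℝ) ^ (2 * k) < 5 ^ i * 2 ^ 110 := by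
    have hten : 9 * (10 : ℝ) ^ (i + 33) = 2 ^ i * (5 ^ i * (9 * 10 ^ 33)) := by
      rw [pow_add, show (10 : ℝ) ^ i = 2 ^ i * 5 ^ i by rw [← mul_pow]; norm_num]
      ring
    have hle := le_of_mul_le_mul_left (h.trans_eq hten) (by positivity)
    have hpos : (0 : ℝ) < 5 ^ i := by positivity
    rw [pow_add] at hle
    linarith
  have hpow : (2 : ℝ) ^ (59 * (2 * k)) < 2 ^ (137 * i + 59 * 110) := by
    calc (2 : ℝ) ^ (59 * (2 * k)) = (2 ^ (2 * k)) ^ 59 := by rw [← pow_mul, mul_comm]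
      _ < (5 ^ i * 2 ^ 110) ^ 59 := by gcongr
      _ = (5 ^ 59) ^ i * 2 ^ (59 * 110) := by
          rw [mul_pow, ← pow_mul, ← pow_mul, ← pow_mul, mul_comm i]
      _ ≤ (2 ^ 137) ^ i * 2 ^ (59 * 110) := by gcongr; norm_num
      _ = 2 ^ (137 * i + 59 * 110) := by rw [← pow_mul, ← pow_add]
  exact (pow_lt_pow_iff_right₀ (by norm_num)).1 hpow

theorem upper_window (h : (10 : ℝ) ^ i ≤ 1000 * (2 ^ i * (3 * 2 ^ (2 * k + 2)))) :
    65 * i ≤ 28 * (2 * k + 14) := by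
  have hle : (5 : ℝ) ^ i ≤ 2 ^ (2 * k + 14) := by
    rw [show (10 : ℝ) = 2 * 5 by norm_num, mul_pow, mul_left_comm] at h
    have hpow : (2 : ℝ) ^ (2 * k + 14) = 4096 * 2 ^ (2 * k + 2) := by ring
    have hpos : (0 : ℝ) < 2 ^ (2 * k + 2) := by positivity
    linarith [le_of_mul_le_mul_left h (by positivity)]
  have hpow : (2 : ℝ) ^ (65 * i) ≤ 2 ^ (28 * (2 * k + 14)) := by
    calc (2 : ℝ) ^ (65 * i) = (2 ^ 65) ^ i := pow_mul ..
      _ ≤ (5 ^ 28) ^ i := by gcongr; norm_num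
      _ = (5 ^ i) ^ 28 := by rw [← pow_mul, ← pow_mul, mul_comm]
      _ ≤ (2 ^ (2 * k + 14)) ^ 28 := by gcongr
      _ = 2 ^ (28 * (2 * k + 14)) := by rw [← pow_mul, mul_comm]
  exact (pow_le_pow_iff_right₀ (by norm_num)).1 hpow

theorem two_mul_mul_ten_pow_ne_two_blocks_of_lt (hk : 451 ≤ k) (hk' : k < 1200) (hb : 1 ≤ b)
    (hb' : b ≤ 9) (hi : i + 2 ≤ k) (hd : 12 ≤ d) (hid : i ≤ d + 3) (hdi : d ≤ i + 33) :
    2 * (b * 10 ^ d) ≠ 2 ^ i * (6 * 2 ^ (2 * k + 2) - 2 ^ (k + 2) * (3 * k + 3 * i + 16) +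
      (3 * i ^ 2 + 29 * i + 62)) := by
  intro h
  obtain ⟨hlower, hupper⟩ := two_block_bounds (x := (b : ℝ) * 10 ^ d) (k := k) (i := i)
    (by omega) (by omega) (by exact_mod_cast h)
  have hwlow : 59 * (2 * k) < 137 * i + 59 * 110 := by
    refine lower_window (hlower.trans ?_)
    gcongr
    · exact_mod_cast hb'
    · norm_num
  have hwupp : 65 * i ≤ 28 * (2 * k + 14) := by
    refine upper_window ?_
    calc (10 : ℝ) ^ i ≤ 10 ^ (d + 3) := pow_le_pow_right₀ (by norm_num) hid
      _ = 1000 * (1 * 10 ^ d) := by ring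
      _ ≤ 1000 * (b * 10 ^ d) := by
          gcongr
          exact_mod_cast hb
      _ ≤ 1000 * (2 ^ i * (3 * 2 ^ (2 * k + 2))) := by gcongr
  refine not_dvd_of_mem_window (i := i) hk hk' (by omega) (by omega) ?_
  have hfive : (5 : ℤ) ^ 12 ∣ 2 * (b * 10 ^ d) :=
    ((pow_dvd_pow 5 hd).trans (pow_dvd_pow_of_dvd (by norm_num) d)).mul_left b |>.mul_left 2
  rw [h] at hfive
  have hcop : IsCoprime ((5 : ℤ) ^ 12) (2 ^ i) := IsCoprime.pow (by norm_num)
  exact hcop.dvd_of_dvd_mul_left hfive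

end TwoBlocks

section BlockPosition

variable {k M i d : ℕ} {b : ℤ}

theorem exists_position {n : ℕ} (hk : 3 ≤ k) (hd : 2 ≤ d) (hL : lucasL k n = b * 10 ^ d) :
    ∃ i, i + 2 ≤ k ∧ n = (k + 1) * (n / (k + 1)) + (i + 2) := by
  have hblock := blockCongruence (k := k) (by omega) (n / (k + 1))
  have hfour : (4 : ℤ) ∣ b * 10 ^ d :=
    ((by norm_num : (4 : ℤ) ∣ 10 ^ 2).trans (pow_dvd_pow 10 hd)).mul_left b
  have hsign := neg_one_pow_eq_or ℤ (n / (k + 1))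
  have hdiv := (Nat.div_add_mod n (k + 1)).symm
  have hlt := Nat.mod_lt n (by omega : 0 < k + 1)
  generalize n % (k + 1) = j at hdiv hlt
  obtain _ | _ | i := j
  · have hzero := hblock.zero
    rw [add_zero] at hdiv
    rw [← hdiv, hL] at hzero
    have hmod : (4 : ℤ) ∣ 2 ^ (k - 1) := pow_dvd_pow (m := 2) 2 (by omega)
    have := (hzero.of_dvd hmod).dvd_iff.1 hfour
    rcases hsign with h | h <;> rw [h] at this <;> omega
  · have hone := hblock.one
    rw [zero_add] at hdiv
    rw [← hdiv, hL] at hone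
    have := (hone.of_dvd (dvd_pow_self 2 (by omega))).dvd_iff.1
      ((by norm_num : (2 : ℤ) ∣ 4).trans hfour)
    rcases hsign with h | h <;> rw [h] at this <;> omega
  · exact ⟨i, by omega, hdiv⟩

theorem two_pow_dvd_mul_ten_pow {v : ℕ} (b : ℤ) (hv : v ≤ d) : (2 : ℤ) ^ v ∣ b * 10 ^ d :=
  ((pow_dvd_pow 2 hv).trans (pow_dvd_pow_of_dvd (by norm_num) d)).mul_left b

theorem two_pow_dvd_mul_ten_pow_iff {v : ℕ} (hi : i + 2 ≤ k)
    (hL : lucasL k ((k + 1) * M + (i + 2)) = b * 10 ^ d) (hv : v ≤ k + 1 + i) :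
    (2 : ℤ) ^ v ∣ b * 10 ^ d ↔ (2 : ℤ) ^ v ∣ 2 ^ i * blockCoeff M i := by
  rw [← hL, (((blockCongruence (by omega) M).add_two i hi).of_dvd (pow_dvd_pow 2 hv)).dvd_iff]
  rcases neg_one_pow_eq_or ℤ M with h | h <;> simp only [h, one_mul, neg_one_mul, dvd_neg]

theorem two_pow_sub_le {v : ℕ} (hi : i + 2 ≤ k)
    (hL : lucasL k ((k + 1) * M + (i + 2)) = b * 10 ^ d) (hvd : v ≤ d) (hv : v ≤ k + 1 + i)
    (hiv : i ≤ v) : 2 ^ (v - i) ≤ 8 * (k + M) ^ 3 := by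
  have hdvd := (two_pow_dvd_mul_ten_pow_iff hi hL hv).1 (two_pow_dvd_mul_ten_pow b hvd)
  rw [← pow_mul_pow_sub _ hiv, mul_dvd_mul_iff_left (by positivity)] at hdvd
  exact (two_pow_le_of_dvd_blockCoeff hdvd).trans (by gcongr)

theorem pow_three_lt_two_pow {t : ℕ} (ht : 45 ≤ t) : 8 * (10 * t + 14) ^ 3 < 2 ^ (t + 1) := by
  induction t, ht using Nat.le_induction with
  | base => norm_num
  | succ t ht ih =>
    have : (10 * (t + 1) + 14) ^ 3 ≤ 2 * (10 * t + 14) ^ 3 := by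
      obtain ⟨u, rfl⟩ := Nat.exists_eq_add_of_le ht
      ring_nf
      nlinarith [sq_nonneg u]
    rw [pow_succ 2 (t + 1)]
    omega

/-- Few factors `2` in `L_n` force `d` to be small, and the size of `L_n` then forces `n` to be
small. -/
theorem exponent_and_block_le (hk : 450 < k) (hi : i + 2 ≤ k)
    (hL : lucasL k ((k + 1) * M + (i + 2)) = b * 10 ^ d) (hc : 4 * (k + M) ^ 3 < 2 ^ k)
    (hsize : 3 * ((k + 1) * M + (i + 2)) < 10 * d + 13) : d ≤ i + k / 10 ∧ M ≤ 2 := by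
  have hd : d < k + 1 + i := by
    by_contra! hle
    have := two_pow_sub_le hi hL hle le_rfl (by omega)
    rw [Nat.add_sub_cancel, pow_succ] at this
    omega
  have hM : M ≤ 5 := by
    by_contra! hlt
    have : (k + 1) * 6 ≤ (k + 1) * M := Nat.mul_le_mul_left _ hlt
    omega
  have hdi : d ≤ i + k / 10 := by
    by_contra! hlt
    have hpow := two_pow_sub_le hi hL le_rfl hd.le (by omega)
    have hpow' : 2 ^ (k / 10 + 1) ≤ 2 ^ (d - i) := Nat.pow_le_pow_right two_pos (by omega)
    have hcube : (k + M) ^ 3 ≤ (10 * (k / 10) + 14) ^ 3 := Nat.pow_le_pow_left (by omega) 3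
    have := pow_three_lt_two_pow (t := k / 10) (by omega)
    omega
  refine ⟨hdi, ?_⟩
  by_contra! hlt
  have : (k + 1) * 3 ≤ (k + 1) * M := Nat.mul_le_mul_left _ hlt
  omega

theorem three_mul_two_pow_ne (i : ℕ) (hd : d ≠ 0) : (3 : ℤ) * 2 ^ i ≠ b * 10 ^ d := by
  intro h
  have hdvd : (5 : ℤ) ∣ 3 * 2 ^ i := by
    rw [h]
    exact ((by norm_num : (5 : ℤ) ∣ 10).trans (dvd_pow_self 10 hd)).mul_left b
  have hcop : IsCoprime (5 : ℤ) (3 * 2 ^ i) :=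
    IsCoprime.mul_right (by norm_num) (IsCoprime.pow_right (by norm_num))
  have : IsUnit (5 : ℤ) := hcop.isUnit_of_dvd' dvd_rfl hdvd
  norm_num [Int.isUnit_iff] at this

theorem lucasL_ne_of_four_mul_pow_lt {n : ℕ} (hk : 450 < k) (hn : 5 < n) (hb : 1 ≤ b)
    (hb' : b ≤ 9) (hd : 2 ≤ d) (hc : 4 * (k + n / (k + 1)) ^ 3 < 2 ^ k) :
    lucasL k n ≠ b * 10 ^ d := by
  intro hL
  have hsize := three_mul_lt_of_lucasL_eq hk hn hb' hL
  obtain ⟨i, hi, hn'⟩ := exists_position (by omega) hd hL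
  generalize n / (k + 1) = M at hn' hc
  subst hn'
  obtain ⟨hdi, hM⟩ := exponent_and_block_le hk hi hL hc hsize
  have hid : i ≤ d + 3 := le_add_three_of_two_pow_dvd hb hb'
    ((two_pow_dvd_mul_ten_pow_iff hi hL (by omega)).2 (dvd_mul_right _ _))
  interval_cases M
  · rw [mul_zero, zero_add, lucasL_add_two hi] at hL
    exact three_mul_two_pow_ne i (by omega) hL
  · rw [mul_one, lucasL_succ_add_two hi] at hL
    exact mul_ten_pow_ne_one_block hk hb' hi hid hdi hL.symm
  · have htwo := lucasL_two_mul_succ_add_two hi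
    rw [hL] at htwo
    rcases le_or_gt 1200 k with hk' | hk'
    · exact two_mul_mul_ten_pow_ne_two_blocks_of_ge hk' hb' hi hid hdi htwo
    · refine two_mul_mul_ten_pow_ne_two_blocks_of_lt hk hk' hb hb' hi (by omega) hid ?_ htwo
      by_contra! hlt
      have hpow := two_pow_sub_le hi hL (by omega : i + 34 ≤ d) (by omega) (by omega)
      have : (k + 2) ^ 3 ≤ 1201 ^ 3 := Nat.pow_le_pow_left (by omega) 3
      rw [Nat.add_sub_cancel_left] at hpow
      omega

end BlockPosition

end EarlyBlocks

section CharPoly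

open Polynomial

variable {k : ℕ} {α : ℝ}

/-- The characteristic polynomial `X ^ k - X ^ (k - 1) - ⋯ - X - 1` of the recurrence. -/
noncomputable def charPoly (k : ℕ) : ℤ[X] := X ^ k - ∑ i ∈ Finset.range k, X ^ i

theorem degree_sum_range_X_pow_lt (k : ℕ) :
    (∑ i ∈ Finset.range k, (X : ℤ[X]) ^ i).degree < k := by
  refine mem_degreeLT.1 (Submodule.sum_mem _ fun i hi => ?_)
  rw [mem_degreeLT, degree_X_pow]
  exact_mod_cast Finset.mem_range.1 hi

theorem charPoly_monic (k : ℕ) : (charPoly k).Monic := by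
  rw [charPoly, Monic, leadingCoeff_sub_of_degree_lt
    (by rw [degree_X_pow]; exact degree_sum_range_X_pow_lt k), leadingCoeff_X_pow]

theorem natDegree_charPoly (k : ℕ) : (charPoly k).natDegree = k := by
  refine natDegree_eq_of_degree_eq_some ?_
  rw [charPoly, degree_sub_eq_left_of_degree_lt
    (by rw [degree_X_pow]; exact degree_sum_range_X_pow_lt k), degree_X_pow]

theorem aeval_charPoly {R : Type*} [CommRing R] (k : ℕ) (z : R) :
    aeval z (charPoly k) = z ^ k - ∑ i ∈ Finset.range k, z ^ i := by
  simp only [charPoly, map_sub, map_pow, aeval_X, map_sum]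

theorem X_sub_one_mul_charPoly (k : ℕ) :
    (X - 1) * charPoly k = X ^ (k + 1) - C 2 * X ^ k + 1 := by
  rw [charPoly, mul_sub, mul_geom_sum, show (C 2 : ℤ[X]) = 2 from rfl]
  ring

theorem sub_one_mul_aeval_charPoly {R : Type*} [CommRing R] (k : ℕ) (z : R) :
    (z - 1) * aeval z (charPoly k) = 1 - z ^ k * (2 - z) := by
  rw [aeval_charPoly, mul_sub, mul_geom_sum]
  ring

theorem coeff_zero_charPoly (hk : 1 ≤ k) : (charPoly k).coeff 0 = -1 := by
  obtain ⟨j, rfl⟩ : ∃ j, k = j + 1 := ⟨k - 1, by omega⟩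
  rw [coeff_zero_eq_aeval_zero, aeval_charPoly, Finset.sum_range_succ']
  simp

theorem pow_mul_two_sub_of_aeval_charPoly {R : Type*} [CommRing R] {z : R}
    (hz : aeval z (charPoly k) = 0) : z ^ k * (2 - z) = 1 := by
  have h := sub_one_mul_aeval_charPoly k z
  rw [hz, mul_zero] at h
  exact (sub_eq_zero.1 h.symm).symm

theorem IsDominantRoot.aeval_charPoly (h : IsDominantRoot k α) (hk : 2 ≤ k) :
    aeval α (charPoly k) = 0 := by
  have hmul := sub_one_mul_aeval_charPoly k α
  rw [h.pow_mul_two_sub, sub_self] at hmul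
  exact (mul_eq_zero.1 hmul).resolve_left (sub_pos.2 (h.one_lt hk)).ne'

theorem aeval_charPoly_ne_zero_of_lt (hk : 1 ≤ k) {r s : ℝ} (hr : 0 < r) (hrs : r < s)
    (hr' : aeval r (charPoly k) = 0) : aeval s (charPoly k) ≠ 0 := by
  intro hs'
  rw [aeval_charPoly, sub_eq_zero] at hr' hs'
  have hterm : ∀ i ∈ Finset.range k, r ^ k * s ^ i < s ^ k * r ^ i := by
    intro i hi
    obtain ⟨j, rfl⟩ : ∃ j, k = i + (j + 1) := ⟨k - i - 1, by have := Finset.mem_range.1 hi; omega⟩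
    have hs : 0 < s := hr.trans hrs
    calc r ^ (i + (j + 1)) * s ^ i = r ^ i * s ^ i * r ^ (j + 1) := by ring
      _ < r ^ i * s ^ i * s ^ (j + 1) := by gcongr
      _ = s ^ (i + (j + 1)) * r ^ i := by ring
  have hsum := Finset.sum_lt_sum_of_nonempty (Finset.nonempty_range_iff.2 (by omega)) hterm
  rw [← Finset.mul_sum, ← Finset.mul_sum, ← hr', ← hs', mul_comm] at hsum
  exact lt_irrefl _ hsum

theorem eq_of_aeval_charPoly_eq_zero (hk : 1 ≤ k) {r s : ℝ} (hr : 0 < r) (hs : 0 < s)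
    (hr' : aeval r (charPoly k) = 0) (hs' : aeval s (charPoly k) = 0) : r = s := by
  rcases lt_trichotomy r s with hlt | heq | hgt
  · exact absurd hs' (aeval_charPoly_ne_zero_of_lt hk hr hlt hr')
  · exact heq
  · exact absurd hr' (aeval_charPoly_ne_zero_of_lt hk hs hgt hs')

theorem aeval_ofReal (A : ℤ[X]) (r : ℝ) : aeval (r : ℂ) A = ((aeval r A : ℝ) : ℂ) := by
  simpa only [Complex.coe_algebraMap] using aeval_algebraMap_apply ℂ r A

open scoped ComplexOrder in
theorem eq_ofReal_norm_of_norm_two_sub_eq {z : ℂ} (hz : ‖2 - z‖ = 2 - ‖z‖) : z = (‖z‖ : ℝ) := by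
  have hsq : ‖2 - z‖ ^ 2 = 4 - 4 * z.re + ‖z‖ ^ 2 := by
    rw [← Complex.normSq_eq_norm_sq, ← Complex.normSq_eq_norm_sq, Complex.normSq_apply,
      Complex.normSq_apply]
    simp only [Complex.sub_re, Complex.sub_im, Complex.re_ofNat, Complex.im_ofNat]
    ring
  rw [hz] at hsq
  exact (Complex.norm_of_nonneg' (Complex.re_eq_norm.1 (by linarith))).symm

theorem one_le_norm_pow_mul_two_sub {z : ℂ} (hz : aeval z (charPoly k) = 0) (hz' : 1 ≤ ‖z‖) :
    1 ≤ ‖z‖ ^ k * (2 - ‖z‖) := by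
  rw [aeval_charPoly, sub_eq_zero] at hz
  have hle : ‖z‖ ^ k ≤ ∑ i ∈ Finset.range k, ‖z‖ ^ i := by
    calc ‖z‖ ^ k = ‖∑ i ∈ Finset.range k, z ^ i‖ := by rw [← norm_pow, hz]
      _ ≤ ∑ i ∈ Finset.range k, ‖z ^ i‖ := norm_sum_le _ _
      _ = ∑ i ∈ Finset.range k, ‖z‖ ^ i := by simp only [norm_pow]
  have hmul := mul_le_mul_of_nonneg_left hle (sub_nonneg.2 hz')
  rw [mul_geom_sum] at hmul
  linarith

namespace IsDominantRoot

theorem norm_lt_one (h : IsDominantRoot k α) (hk : 2 ≤ k) {z : ℂ}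
    (hz : aeval z (charPoly k) = 0) (hne : z ≠ α) : ‖z‖ < 1 := by
  by_contra! hge
  have hnorm : ‖z‖ ^ k * ‖2 - z‖ = 1 := by
    simpa using congrArg norm (pow_mul_two_sub_of_aeval_charPoly hz)
  have hle : ‖2 - z‖ ≤ 2 - ‖z‖ := le_of_mul_le_mul_left
    (hnorm.trans_le (one_le_norm_pow_mul_two_sub hz hge)) (by positivity)
  have htri : 2 - ‖z‖ ≤ ‖2 - z‖ := by simpa using norm_sub_norm_le (2 : ℂ) z
  have hreal := eq_ofReal_norm_of_norm_two_sub_eq (hle.antisymm htri)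
  have hroot : aeval ‖z‖ (charPoly k) = 0 := by
    rw [hreal, aeval_ofReal] at hz
    exact_mod_cast hz
  refine hne (hreal.trans (congrArg _ ?_))
  exact eq_of_aeval_charPoly_eq_zero (by omega) (by linarith) h.pos hroot (h.aeval_charPoly hk)

theorem aeval_derivative_charPoly_ne_zero (h : IsDominantRoot k α) (hk : 2 ≤ k) :
    aeval α (derivative (charPoly k)) ≠ 0 := by
  intro hzero
  have hder := congrArg (fun p => aeval α (derivative p)) (X_sub_one_mul_charPoly k)
  obtain ⟨j, rfl⟩ : ∃ j, k = j + 1 := ⟨k - 1, by omega⟩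
  simp only [derivative_mul, derivative_X, derivative_one, map_add, map_mul, map_sub,
    derivative_X_pow, derivative_C, map_pow, aeval_X, aeval_C,
    h.aeval_charPoly hk, hzero, map_zero, add_zero, mul_zero, zero_mul, zero_add,
    Nat.add_sub_cancel] at hder
  have hdenom := h.one_le_denom
  have hpos : 0 < α ^ j * (((j + 1 : ℕ) + 1 : ℝ) * α - 2 * (j + 1 : ℕ)) :=
    mul_pos (pow_pos h.pos j) (by linarith)
  refine hpos.ne ?_
  push_cast at hder ⊢
  simp only [eq_intCast, Int.cast_ofNat] at hder
  rw [pow_succ] at hder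
  linear_combination hder

end IsDominantRoot

theorem norm_prod_map_le_pow_card {t : Multiset ℂ} {f : ℂ → ℂ} {B : ℝ}
    (hf : ∀ z ∈ t, ‖f z‖ ≤ B) : ‖(t.map f).prod‖ ≤ B ^ t.card := by
  have hnorm : ‖(t.map f).prod‖ = ((t.map f).map norm).prod :=
    map_multiset_prod (normHom : ℂ →*₀ ℝ) _
  rw [hnorm, Multiset.map_map]
  refine (Multiset.prod_map_le_prod_map₀ _ _ (fun z _ => norm_nonneg _) hf).trans_eq ?_
  rw [Multiset.map_const', Multiset.prod_replicate]

theorem natDegree_eq_zero_of_forall_norm_lt_one {g : ℤ[X]} (hg : g.Monic) (hg0 : g.coeff 0 ≠ 0)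
    (hroots : ∀ z : ℂ, aeval z g = 0 → ‖z‖ < 1) : g.natDegree = 0 := by
  by_contra hdeg
  set f := g.map (algebraMap ℤ ℂ) with hf
  have hsplit : f.Splits := IsAlgClosed.splits f
  have hlt : ∀ z ∈ f.roots, ‖z‖ < 1 := fun z hz =>
    hroots z (by rw [← eval_map_algebraMap]; exact (mem_roots'.1 hz).2)
  obtain ⟨z, hz⟩ := Multiset.card_pos_iff_exists_mem.1
    (show 0 < f.roots.card by rw [← hsplit.natDegree_eq_card_roots, hg.natDegree_map]; omega)
  obtain ⟨t, ht⟩ := Multiset.exists_cons_of_mem hz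
  have hprod : ‖(t.map id).prod‖ ≤ 1 ^ t.card := norm_prod_map_le_pow_card fun x hx =>
    (hlt x (ht ▸ Multiset.mem_cons_of_mem hx)).le
  rw [Multiset.map_id, one_pow] at hprod
  have hcoeff : ‖f.coeff 0‖ = ‖z‖ * ‖t.prod‖ := by
    rw [hsplit.coeff_zero_eq_prod_roots_of_monic (hg.map _), ht, Multiset.prod_cons, norm_mul,
      norm_pow, norm_neg, norm_one, one_pow, one_mul, norm_mul]
  have hone : (1 : ℝ) ≤ ‖f.coeff 0‖ := by
    rw [hf, coeff_map, eq_intCast, Complex.norm_intCast]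
    exact_mod_cast Int.one_le_abs hg0
  have hcoeff_lt := mul_lt_one_of_nonneg_of_lt_one_left (norm_nonneg z) (hlt z hz) hprod
  exact absurd hone (hcoeff ▸ hcoeff_lt).not_ge

namespace IsDominantRoot

-- All roots of `charPoly k` other than the simple root `α` lie in the open unit disc, so a monic
-- factor that does not vanish at `α` is trivial.
theorem irreducible_charPoly (h : IsDominantRoot k α) (hk : 2 ≤ k) :
    Irreducible (charPoly k) := by
  have htrivial : ∀ f g : ℤ[X], f.Monic → f * g = charPoly k → aeval α f ≠ 0 →
      f.natDegree = 0 := by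
    intro f g hf hfg hα
    refine natDegree_eq_zero_of_forall_norm_lt_one hf (fun h0 => ?_) fun z hz => ?_
    · have hcoeff := coeff_zero_charPoly (show 1 ≤ k by omega)
      rw [← hfg, mul_coeff_zero, h0] at hcoeff
      omega
    · refine h.norm_lt_one hk (by rw [← hfg, map_mul, hz, zero_mul]) ?_
      rintro rfl
      rw [aeval_ofReal] at hz
      exact hα (by exact_mod_cast hz)
  refine (charPoly_monic k).irreducible_iff_natDegree.2 ⟨fun hone => ?_, fun f g hf hg hfg => ?_⟩
  · have hdeg := natDegree_charPoly k
    rw [hone, natDegree_one] at hdeg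
    omega
  · by_cases hα : aeval α f = 0
    · refine Or.inr (htrivial g f hg (by rw [mul_comm, hfg]) fun hα' => ?_)
      refine h.aeval_derivative_charPoly_ne_zero hk ?_
      rw [← hfg, derivative_mul, map_add, map_mul, map_mul, hα, hα', mul_zero, zero_mul, add_zero]
    · exact Or.inl (htrivial f g hf hfg hα)

theorem minpoly_eq_charPoly (h : IsDominantRoot k α) (hk : 2 ≤ k) {S : Type*} [CommRing S]
    [IsDomain S] [Module.IsTorsionFree ℤ S] {z : S} (hz : aeval z (charPoly k) = 0) :
    minpoly ℤ z = charPoly k := by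
  have hint : IsIntegral ℤ z := ⟨charPoly k, charPoly_monic k, hz⟩
  obtain ⟨g, hg⟩ := minpoly.isIntegrallyClosed_dvd hint hz
  have hgu := ((h.irreducible_charPoly hk).isUnit_or_isUnit hg).resolve_left
    (minpoly.not_isUnit ℤ z)
  have hgm : g.Monic := (minpoly.monic hint).of_mul_monic_left (hg ▸ charPoly_monic k)
  rw [hg, hgm.eq_one_of_isUnit hgu, mul_one]

theorem aeval_eq_zero_iff_dvd (h : IsDominantRoot k α) (hk : 2 ≤ k) {S : Type*} [CommRing S]
    [IsDomain S] [Module.IsTorsionFree ℤ S] {z : S} (hz : aeval z (charPoly k) = 0) (A : ℤ[X]) :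
    aeval z A = 0 ↔ charPoly k ∣ A := by
  rw [← h.minpoly_eq_charPoly hk hz]
  exact minpoly.isIntegrallyClosed_dvd_iff ⟨charPoly k, charPoly_monic k, hz⟩ A

theorem eq_zero_of_degree_lt (h : IsDominantRoot k α) (hk : 2 ≤ k) {A : ℤ[X]}
    (hdeg : A.degree < k) (hA : aeval α A = 0) : A = 0 := by
  have hdvd := (h.aeval_eq_zero_iff_dvd hk (h.aeval_charPoly hk) A).1 hA
  by_contra hne
  have hle := degree_le_of_dvd hdvd hne
  rw [degree_eq_natDegree (charPoly_monic k).ne_zero, natDegree_charPoly] at hle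
  exact absurd hdeg hle.not_gt

theorem exists_roots_charPoly (h : IsDominantRoot k α) (hk : 2 ≤ k) :
    ∃ t : Multiset ℂ, ((charPoly k).map (algebraMap ℤ ℂ)).roots = (α : ℂ) ::ₘ t ∧
      t.card = k - 1 ∧ ∀ z ∈ t, ‖z‖ < 1 ∧ aeval z (charPoly k) = 0 := by
  set p := (charPoly k).map (algebraMap ℤ ℂ) with hp
  have hroot : ∀ z : ℂ, z ∈ p.roots ↔ aeval z (charPoly k) = 0 := fun z => by
    rw [mem_roots ((charPoly_monic k).map _).ne_zero, IsRoot, eval_map_algebraMap]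
  have hnodup : p.roots.Nodup := by
    have hsep := ((charPoly_monic k).irreducible_iff_irreducible_map_fraction_map (K := ℚ)).1
      (h.irreducible_charPoly hk) |>.separable.map (f := algebraMap ℚ ℂ)
    rw [Polynomial.map_map] at hsep
    exact nodup_roots hsep
  have hα : aeval (α : ℂ) (charPoly k) = 0 := by
    rw [aeval_ofReal, h.aeval_charPoly hk, Complex.ofReal_zero]
  obtain ⟨t, ht⟩ := Multiset.exists_cons_of_mem ((hroot α).2 hα)
  refine ⟨t, ht, ?_, fun z hz => ?_⟩
  · have hcard := (IsAlgClosed.splits p).natDegree_eq_card_roots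
    rw [ht, Multiset.card_cons, hp, (charPoly_monic k).natDegree_map, natDegree_charPoly] at hcard
    omega
  · have hz' := (hroot z).1 (ht ▸ Multiset.mem_cons_of_mem hz)
    rw [ht, Multiset.nodup_cons] at hnodup
    exact ⟨h.norm_lt_one hk hz' fun heq => hnodup.1 (heq ▸ hz), hz'⟩

-- The norm of `A(α)` over `ℚ(α)` is the resultant of `charPoly k` and `A`, a nonzero integer.
theorem one_le_abs_aeval_mul_pow (h : IsDominantRoot k α) (hk : 2 ≤ k) {A : ℤ[X]} {B : ℝ}
    (hA : aeval α A ≠ 0) (hB : ∀ z : ℂ, ‖z‖ ≤ 1 → ‖aeval z A‖ ≤ B) :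
    1 ≤ |aeval α A| * B ^ (k - 1) := by
  obtain ⟨t, ht, hcard, hroots⟩ := h.exists_roots_charPoly hk
  have hres := resultant_eq_prod_eval ((charPoly k).map (algebraMap ℤ ℂ))
    (A.map (algebraMap ℤ ℂ)) A.natDegree natDegree_map_le (IsAlgClosed.splits _)
  rw [(charPoly_monic k).natDegree_map, resultant_map_map, ((charPoly_monic k).map _).leadingCoeff,
    one_pow, one_mul, ht, Multiset.map_cons, Multiset.prod_cons] at hres
  simp only [eval_map_algebraMap, aeval_ofReal] at hres
  set N := resultant (charPoly k) A (charPoly k).natDegree A.natDegree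
  have hprod_ne : (t.map fun z => aeval z A).prod ≠ 0 := by
    rw [Ne, Multiset.prod_eq_zero_iff, Multiset.mem_map]
    rintro ⟨z, hz, hzA⟩
    exact hA ((h.aeval_eq_zero_iff_dvd hk (h.aeval_charPoly hk) A).2
      ((h.aeval_eq_zero_iff_dvd hk (hroots z hz).2 A).1 hzA))
  have hprod_le : ‖(t.map fun z => aeval z A).prod‖ ≤ B ^ (k - 1) :=
    hcard ▸ norm_prod_map_le_pow_card fun z hz => hB z (hroots z hz).1.le
  have hN : N ≠ 0 := by
    intro h0
    rw [h0, map_zero] at hres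
    exact mul_ne_zero (by exact_mod_cast hA) hprod_ne hres.symm
  have hone : (1 : ℝ) ≤ ‖(algebraMap ℤ ℂ) N‖ := by
    rw [eq_intCast, Complex.norm_intCast]
    exact_mod_cast Int.one_le_abs hN
  rw [hres, norm_mul, Complex.norm_real, Real.norm_eq_abs] at hone
  exact hone.trans (mul_le_mul_of_nonneg_left hprod_le (abs_nonneg _))

theorem pow_ne_ten_pow (h : IsDominantRoot k α) (hk : 2 ≤ k) {q : ℕ} (hq : q ≠ 0) (p : ℕ) :
    α ^ q ≠ 10 ^ p := by
  intro heq
  obtain ⟨t, -, hcard, hroots⟩ := h.exists_roots_charPoly hk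
  obtain ⟨z, hz⟩ := Multiset.card_pos_iff_exists_mem.1 (show 0 < t.card by omega)
  obtain ⟨hz_lt, hz_root⟩ := hroots z hz
  have hdvd : charPoly k ∣ X ^ q - C (10 ^ p) := by
    refine (h.aeval_eq_zero_iff_dvd hk (h.aeval_charPoly hk) _).1 ?_
    rw [map_sub, map_pow, aeval_X, aeval_C, heq, map_pow, eq_intCast, Int.cast_ofNat, sub_self]
  have hzq := (h.aeval_eq_zero_iff_dvd hk hz_root _).2 hdvd
  simp only [map_sub, map_pow, aeval_X, aeval_C, sub_eq_zero] at hzq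
  have hnorm : ‖z‖ ^ q = 10 ^ p := by simpa using congrArg norm hzq
  have hlt : ‖z‖ ^ q < 1 := pow_lt_one₀ (norm_nonneg _) hz_lt hq
  exact absurd hnorm (hlt.trans_le (one_le_pow₀ (by norm_num))).ne

end IsDominantRoot

end CharPoly

section ZeroEstimate

open Polynomial

theorem coeff_prod_sum_of_natDegree_le {R ι : Type*} [CommSemiring R] (s : Finset ι) (f : ι → R[X])
    (d : ι → ℕ) (hf : ∀ i ∈ s, (f i).natDegree ≤ d i) :
    (∏ i ∈ s, f i).coeff (∑ i ∈ s, d i) = ∏ i ∈ s, (f i).coeff (d i) := by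
  classical
  induction s using Finset.induction with
  | empty => simp
  | insert a s ha ih =>
    have hs : ∀ i ∈ s, (f i).natDegree ≤ d i := fun i hi => hf i (Finset.mem_insert_of_mem hi)
    rw [Finset.prod_insert ha, Finset.sum_insert ha, Finset.prod_insert ha, ← ih hs]
    exact coeff_mul_add_eq_of_natDegree_le (hf a (Finset.mem_insert_self a s))
      ((natDegree_prod_le s f).trans (Finset.sum_le_sum hs))

section Det

variable {R n : Type*} [CommRing R] [Fintype n] [DecidableEq n] {M : Matrix n n R[X]} {d : n → ℕ}

theorem natDegree_det_le_sum (hM : ∀ i j, (M i j).natDegree ≤ d i) :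
    M.det.natDegree ≤ ∑ i, d i := by
  rw [Matrix.det_apply']
  refine natDegree_sum_le_of_forall_le _ _ fun σ _ => natDegree_mul_le.trans ?_
  rw [natDegree_intCast, zero_add, ← Equiv.sum_comp σ d]
  exact (natDegree_prod_le _ _).trans (Finset.sum_le_sum fun i _ => hM (σ i) i)

theorem coeff_det_sum (hM : ∀ i j, (M i j).natDegree ≤ d i) :
    M.det.coeff (∑ i, d i) = (Matrix.of fun i j => (M i j).coeff (d i)).det := by
  rw [Matrix.det_apply', Matrix.det_apply', finsetSum_coeff]
  refine Finset.sum_congr rfl fun σ _ => ?_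
  rw [coeff_intCast_mul, ← Equiv.sum_comp σ d,
    coeff_prod_sum_of_natDegree_le _ _ _ fun i _ => hM (σ i) i]
  rfl

end Det

theorem natDegree_comp_X_add_C {R : Type*} [CommRing R] [IsDomain R] (P : R[X]) (a : R) :
    (P.comp (X + C a)).natDegree = P.natDegree := by
  rw [natDegree_comp, natDegree_X_add_C, mul_one]

theorem coeff_natDegree_comp_X_add_C {R : Type*} [CommRing R] [IsDomain R] (P : R[X]) (a : R) :
    (P.comp (X + C a)).coeff P.natDegree = P.leadingCoeff := by
  rw [← natDegree_comp_X_add_C P a, coeff_natDegree,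
    leadingCoeff_comp (by rw [natDegree_X_add_C]; exact one_ne_zero), leadingCoeff_X_add_C,
    one_pow, mul_one]

section ShiftMatrix

variable {F : Type*} [Field F] {c : ℕ} {P : Fin c → F[X]} {b : Fin c → F} {q : F}

/-- The matrix of the coefficients of the unknowns `u_j` in the system
`∑ j, u_j P_j(X + i q) b_j ^ i = 0`, transposed: rows are indexed by `j`, columns by `i`. -/
noncomputable def shiftMatrix (P : Fin c → F[X]) (b : Fin c → F) (q : F) :
    Matrix (Fin c) (Fin c) F[X] :=
  Matrix.of fun j i => (P j).comp (X + C (i * q)) * C (b j ^ (i : ℕ))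

theorem natDegree_shiftMatrix_le (j i : Fin c) :
    (shiftMatrix P b q j i).natDegree ≤ (P j).natDegree :=
  (natDegree_mul_C_le _ _).trans (natDegree_comp_X_add_C _ _).le

-- The top-degree coefficient is a Vandermonde determinant.
theorem det_shiftMatrix_ne_zero (hP : ∀ j, P j ≠ 0) (hb : Function.Injective b) :
    (shiftMatrix P b q).det ≠ 0 := by
  intro hdet
  have hcoeff := coeff_det_sum (M := shiftMatrix P b q) natDegree_shiftMatrix_le
  have hmatrix : (Matrix.of fun j i => (shiftMatrix P b q j i).coeff (P j).natDegree) =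
      Matrix.of fun j i => (P j).leadingCoeff * Matrix.vandermonde b j i := by
    ext j i
    simp only [shiftMatrix, Matrix.of_apply, coeff_mul_C, coeff_natDegree_comp_X_add_C,
      Matrix.vandermonde_apply]
  rw [hdet, coeff_zero, hmatrix, Matrix.det_mul_column] at hcoeff
  exact mul_ne_zero (Finset.prod_ne_zero_iff.2 fun j _ => leadingCoeff_ne_zero.2 (hP j))
    (Matrix.det_vandermonde_ne_zero_iff.2 hb) hcoeff.symm

theorem eval_det_shiftMatrix_eq_zero {x : F} {u : Fin c → F} (hu : u ≠ 0)
    (hzero : ∀ i : Fin c, ∑ j, u j * ((P j).eval (x + i * q) * b j ^ (i : ℕ)) = 0) :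
    (shiftMatrix P b q).det.eval x = 0 := by
  rw [← coe_evalRingHom, RingHom.map_det, ← Matrix.exists_vecMul_eq_zero_iff]
  refine ⟨u, hu, funext fun i => ?_⟩
  rw [Pi.zero_apply, ← hzero i]
  simp only [Matrix.vecMul, dotProduct, shiftMatrix, RingHom.mapMatrix_apply, Matrix.map_apply,
    Matrix.of_apply, coe_evalRingHom, eval_mul, eval_comp, eval_add, eval_X, eval_C]

theorem card_le_sum_natDegree (hP : ∀ j, P j ≠ 0) (hb : Function.Injective b) {S : Finset F}
    {u : F → Fin c → F} (hu : ∀ x ∈ S, u x ≠ 0)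
    (hzero : ∀ x ∈ S, ∀ i : Fin c, ∑ j, u x j * ((P j).eval (x + i * q) * b j ^ (i : ℕ)) = 0) :
    S.card ≤ ∑ j, (P j).natDegree := by
  have hdet : (shiftMatrix P b q).det ≠ 0 := det_shiftMatrix_ne_zero hP hb
  have hroots : S.val ⊆ (shiftMatrix P b q).det.roots := fun x hx =>
    (mem_roots hdet).2 (eval_det_shiftMatrix_eq_zero (hu x hx) (hzero x hx))
  exact (card_le_degree_of_subset_roots hroots).trans
    (natDegree_det_le_sum natDegree_shiftMatrix_le)

end ShiftMatrix

theorem sum_comp_equiv_subtype {ι κ M : Type*} [Fintype ι] [Fintype κ] [AddCommMonoid M]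
    {p : ι → Prop} (e : κ ≃ {i // p i}) {f : ι → M} (hf : ∀ i, f i ≠ 0 → p i) :
    ∑ j, f (e j) = ∑ i, f i := by
  classical
  rw [← Finset.sum_filter_of_ne fun i _ => hf i,
    Finset.sum_subtype _ fun i => Finset.mem_filter_univ i]
  exact Equiv.sum_comp e fun i => f i

theorem exists_sum_eval_mul_pow_ne_zero {F : Type*} [Field F] {L K : ℕ} {P : Fin L → F[X]}
    (hdeg : ∀ l, (P l).natDegree < K) (hne : ∃ l, P l ≠ 0) {β : F}
    (hβ : Function.Injective fun l : Fin L => β ^ (l : ℕ)) (q : F) {S : Finset F}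
    (hS : L * K < S.card) {v : F → F} (hv : ∀ x ∈ S, v x ≠ 0) :
    ∃ x ∈ S, ∃ i < L, ∑ l, (P l).eval (x + i * q) * (v x * β ^ i) ^ (l : ℕ) ≠ 0 := by
  classical
  by_contra! hzero
  set c := Fintype.card {l // P l ≠ 0}
  have hcL : c ≤ L := (Fintype.card_subtype_le _).trans_eq (Fintype.card_fin L)
  have hc0 : 0 < c := Fintype.card_pos_iff.2 (hne.elim fun l hl => ⟨⟨l, hl⟩⟩)
  let e : Fin c ≃ {l // P l ≠ 0} := (Fintype.equivFin _).symm
  have hcard : S.card ≤ ∑ j, (P (e j)).natDegree := by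
    refine card_le_sum_natDegree (u := fun x j => v x ^ ((e j : Fin L) : ℕ)) (q := q)
      (fun j => (e j).2) (hβ.comp (Subtype.val_injective.comp e.injective))
      (fun x hx hu => pow_ne_zero _ (hv x hx) (congrFun hu ⟨0, hc0⟩)) fun x hx i => ?_
    rw [← hzero x hx i (i.2.trans_le hcL), ← sum_comp_equiv_subtype e
      fun l hl hPl => hl (by rw [hPl, eval_zero, zero_mul])]
    refine Finset.sum_congr rfl fun j _ => ?_
    simp only [Function.comp_apply]
    rw [mul_pow, ← pow_mul, ← pow_mul, mul_left_comm, mul_comm (i : ℕ)]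
  have hsum : ∑ j, (P (e j)).natDegree ≤ c * K := by
    simpa using Finset.sum_le_card_nsmul Finset.univ _ K fun j _ => (hdeg (e j)).le
  exact absurd hS (hcard.trans (hsum.trans (Nat.mul_le_mul_right K hcL))).not_gt

end ZeroEstimate

section AuxiliaryFunction

open Polynomial

theorem exists_ne_forall_abs_sub_le {ι τ : Type*} [Fintype ι] [Fintype τ] {f : ι → τ → ℝ} {B : ℝ}
    (hB : 0 < B) (hf : ∀ x t, |f x t| < B) {N : ℕ} (hN : 0 < N)
    (hcard : N ^ Fintype.card τ < Fintype.card ι) :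
    ∃ x y, x ≠ y ∧ ∀ t, |f x t - f y t| ≤ 2 * B / N := by
  classical
  have hN' : (0 : ℝ) < N := Nat.cast_pos.2 hN
  let cell (x : ι) (t : τ) : ℤ := ⌊(f x t + B) / (2 * B) * N⌋
  have hcell (x : ι) : cell x ∈ Fintype.piFinset fun _ : τ => Finset.Ico (0 : ℤ) N := by
    refine Fintype.mem_piFinset.2 fun t => Finset.mem_Ico.2 ?_
    have hlt := abs_lt.1 (hf x t)
    have hnonneg : 0 ≤ (f x t + B) / (2 * B) := div_nonneg (by linarith) (by linarith)
    have hlt_one : (f x t + B) / (2 * B) < 1 := (div_lt_one (by linarith)).2 (by linarith)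
    refine ⟨Int.floor_nonneg.2 (by positivity), Int.floor_lt.2 ?_⟩
    rw [Int.cast_natCast]
    exact mul_lt_of_lt_one_left hN' hlt_one
  have hlt : (Fintype.piFinset fun _ : τ => Finset.Ico (0 : ℤ) N).card <
      (Finset.univ : Finset ι).card := by
    simpa [Fintype.card_piFinset] using hcard
  obtain ⟨x, -, y, -, hxy, heq⟩ :=
    Finset.exists_ne_map_eq_of_card_lt_of_maps_to hlt fun x _ => hcell x
  refine ⟨x, y, hxy, fun t => ?_⟩
  have hfloor := Int.abs_sub_lt_one_of_floor_eq_floor (congrFun heq t)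
  have hdiff : (f x t + B) / (2 * B) * N - (f y t + B) / (2 * B) * N =
      (f x t - f y t) * (N / (2 * B)) := by
    field_simp
    ring
  rw [hdiff, abs_mul, abs_of_pos (by positivity : (0 : ℝ) < N / (2 * B)),
    ← lt_div_iff₀ (by positivity), one_div_div] at hfloor
  exact hfloor.le

theorem abs_sum_mul_val_lt {ι : Type*} [Fintype ι] [Nonempty ι] {c : ι → ℝ} {C : ℝ}
    (hC : 0 < C) (hc : ∀ i, |c i| ≤ C) {N : ℕ} (x : ι → Fin N) :
    |∑ i, c i * ((x i : ℕ) : ℝ)| < C * Fintype.card ι * N := by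
  have hx (i : ι) : ((x i : ℕ) : ℝ) ≤ N - 1 := by
    rw [le_sub_iff_add_le]
    exact_mod_cast (x i).2
  calc
    _ ≤ ∑ i, |c i * ((x i : ℕ) : ℝ)| := Finset.abs_sum_le_sum_abs _ _
    _ ≤ ∑ _ : ι, C * (N - 1) := by
      refine Finset.sum_le_sum fun i _ => ?_
      rw [abs_mul, Nat.abs_cast]
      exact mul_le_mul (hc i) (hx i) (by positivity) hC.le
    _ = C * Fintype.card ι * (N - 1) := by
      rw [Finset.sum_const, nsmul_eq_mul, Finset.card_univ]
      ring
    _ < C * Fintype.card ι * N := by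
      gcongr
      linarith

theorem exists_int_ne_zero_abs_sum_le {ι τ : Type*} [Fintype ι] [Fintype τ] {c : τ → ι → ℝ} {C : ℝ}
    (hC : 0 < C) (hc : ∀ t i, |c t i| ≤ C) {w h : ℕ}
    (hw : h * Fintype.card τ < w * Fintype.card ι) :
    ∃ p : ι → ℤ, p ≠ 0 ∧ (∀ i, |p i| < 2 ^ w) ∧
      ∀ t, |∑ i, c t i * p i| ≤ 2 * C * Fintype.card ι * 2 ^ w / 2 ^ h := by
  classical
  have hcard : 0 < Fintype.card ι := pos_of_mul_pos_right (Nat.zero_lt_of_lt hw) w.zero_le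
  have : Nonempty ι := Fintype.card_pos_iff.1 hcard
  have hbound (x : ι → Fin (2 ^ w)) (t : τ) :
      |∑ i, c t i * ((x i : ℕ) : ℝ)| < C * Fintype.card ι * 2 ^ w := by
    exact_mod_cast abs_sum_mul_val_lt hC (hc t) x
  obtain ⟨x, y, hxy, hclose⟩ := exists_ne_forall_abs_sub_le (by positivity) hbound
    (N := 2 ^ h) (by positivity) (by
      rw [Fintype.card_fun, Fintype.card_fin, ← pow_mul, ← pow_mul]
      exact Nat.pow_lt_pow_right (by norm_num) hw)
  refine ⟨fun i => (x i : ℤ) - (y i : ℤ), fun h0 => hxy ?_, fun i => ?_, fun t => ?_⟩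
  · funext i
    have := congrFun h0 i
    simp only [Pi.zero_apply] at this
    exact Fin.ext (by omega)
  · have hxi : ((x i : ℕ) : ℤ) < 2 ^ w := by exact_mod_cast (x i).2
    have hyi : ((y i : ℕ) : ℤ) < 2 ^ w := by exact_mod_cast (y i).2
    change |((x i : ℕ) : ℤ) - ((y i : ℕ) : ℤ)| < 2 ^ w
    exact abs_lt.2 ⟨by omega, by omega⟩
  · have hsum : ∑ i, c t i * (((x i : ℤ) - (y i : ℤ) : ℤ) : ℝ) =
        ∑ i, c t i * ((x i : ℕ) : ℝ) - ∑ i, c t i * ((y i : ℕ) : ℝ) := by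
      rw [← Finset.sum_sub_distrib]
      refine Finset.sum_congr rfl fun i _ => ?_
      push_cast
      ring
    rw [hsum]
    refine (hclose t).trans_eq ?_
    push_cast
    ring

/-- The Taylor polynomial of the exponential function at `0`, truncated to degree below `T`. -/
noncomputable def expTaylor (T : ℕ) : ℝ[X] :=
  ∑ m ∈ Finset.range T, monomial m (1 / (m.factorial : ℝ))

theorem eval_expTaylor (T : ℕ) (z : ℝ) :
    (expTaylor T).eval z = ∑ m ∈ Finset.range T, z ^ m / (m.factorial : ℝ) := by
  simp only [expTaylor, eval_finsetSum, eval_monomial]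
  exact Finset.sum_congr rfl fun m _ => by ring

theorem natDegree_expTaylor_le (T : ℕ) : (expTaylor T).natDegree ≤ T :=
  natDegree_sum_le_of_forall_le _ _ fun _ hm =>
    (natDegree_monomial_le _).trans (Finset.mem_range.1 hm).le

theorem abs_coeff_expTaylor_mul_pow_le (T m : ℕ) (z : ℝ) :
    |(expTaylor T).coeff m * z ^ m| ≤ Real.exp |z| := by
  simp only [expTaylor, finsetSum_coeff, coeff_monomial, Finset.sum_ite_eq', Finset.mem_range]
  split_ifs
  · rw [one_div_mul_eq_div, abs_div, abs_pow, Nat.abs_cast]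
    exact Real.pow_div_factorial_le_exp _ (abs_nonneg z) m
  · rw [zero_mul, abs_zero]
    exact (Real.exp_pos _).le

theorem abs_exp_sub_eval_expTaylor_le {z : ℝ} {T : ℕ} (h : 48 * |z| ≤ T) :
    |Real.exp z - (expTaylor T).eval z| ≤ 2 * (1 / 16) ^ T := by
  have hsmall : ‖(z : ℂ)‖ / T.succ ≤ 1 / 2 := by
    rw [Complex.norm_real, Real.norm_eq_abs, div_le_iff₀ (by positivity)]
    push_cast
    linarith [abs_nonneg z]
  have htail := Complex.exp_bound' hsmall
  have hreal : Complex.exp z - ∑ m ∈ Finset.range T, (z : ℂ) ^ m / (m.factorial : ℂ) =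
      ((Real.exp z - (expTaylor T).eval z : ℝ) : ℂ) := by
    rw [eval_expTaylor]
    push_cast
    rfl
  rw [hreal, Complex.norm_real, Complex.norm_real, Real.norm_eq_abs, Real.norm_eq_abs] at htail
  have hfact : (T : ℝ) ^ T / (T.factorial : ℝ) ≤ 3 ^ T := by
    refine (Real.pow_div_factorial_le_exp (T : ℝ) (by positivity) T).trans ?_
    rw [← Real.exp_one_pow]
    exact pow_le_pow_left₀ (Real.exp_pos _).le (by linarith [Real.exp_one_lt_d9]) _
  have hterm : |z| ^ T / (T.factorial : ℝ) ≤ (1 / 16) ^ T := calc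
    _ ≤ (T / 48 : ℝ) ^ T / (T.factorial : ℝ) := by
      gcongr
      linarith
    _ = (1 / 48) ^ T * ((T : ℝ) ^ T / (T.factorial : ℝ)) := by
      rw [div_pow, one_div_pow]
      ring
    _ ≤ (1 / 48) ^ T * 3 ^ T := by gcongr
    _ = (1 / 16) ^ T := by
      rw [← mul_pow]
      norm_num
  linarith

variable {k L K T : ℕ} {a R Y B μ η v E : ℝ}

theorem abs_pow_sub_exp_mul_eval_expTaylor_le {l : ℕ} (hl : l < L) (hμ : |μ| ≤ Y)
    (hBη : |B * η| ≤ 2 * Y) (hT : 96 * L * Y ≤ T) (hv : 0 < v) (hE : L * E ≤ 1)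
    (hlog : |Real.log v - μ - B * η| ≤ E) :
    |v ^ l - Real.exp (l * μ) * (expTaylor T).eval (l * B * η)| ≤
      Real.exp (3 * L * Y) * (2 * ((1 / 16) ^ T + L * E)) := by
  have hY : 0 ≤ Y := (abs_nonneg _).trans hμ
  have hscale {z M : ℝ} (hz : |z| ≤ M) : |l * z| ≤ L * M := by
    rw [abs_mul, Nat.abs_cast]
    exact mul_le_mul (Nat.cast_le.2 hl.le) hz (abs_nonneg _) (by positivity)
  have hlμ := hscale hμ
  have hlBη : |l * B * η| ≤ L * (2 * Y) := mul_assoc (l : ℝ) B η ▸ hscale hBη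
  have htail := abs_exp_sub_eval_expTaylor_le (z := l * B * η) (T := T) (by linarith)
  set S := (expTaylor T).eval (l * B * η)
  set ε := Real.log v - μ - B * η with hε
  have hpow : v ^ l = Real.exp (l * μ) * Real.exp (l * B * η) * Real.exp (l * ε) := by
    rw [← Real.exp_add, ← Real.exp_add, hε,
      show l * μ + l * B * η + l * (Real.log v - μ - B * η) = l * Real.log v by ring,
      Real.exp_nat_mul, Real.exp_log hv]
  have hexpε : |Real.exp (l * ε) - 1| ≤ 2 * (L * E) :=
    (Real.abs_exp_sub_one_le ((hscale hlog).trans hE)).trans (by linarith [hscale hlog])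
  have hLY : 0 ≤ L * Y := by positivity
  have hexpμ : Real.exp (l * μ) ≤ Real.exp (3 * L * Y) :=
    Real.exp_le_exp.2 (by linarith [le_abs_self (l * μ)])
  have hexp : Real.exp (l * μ) * Real.exp (l * B * η) ≤ Real.exp (3 * L * Y) := by
    rw [← Real.exp_add]
    exact Real.exp_le_exp.2 (by linarith [le_abs_self (l * μ), le_abs_self (l * B * η)])
  have hsplit : v ^ l - Real.exp (l * μ) * S =
      Real.exp (l * μ) * Real.exp (l * B * η) * (Real.exp (l * ε) - 1) +
        Real.exp (l * μ) * (Real.exp (l * B * η) - S) := by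
    rw [hpow]
    ring
  calc
    _ ≤ Real.exp (l * μ) * Real.exp (l * B * η) * |Real.exp (l * ε) - 1| +
        Real.exp (l * μ) * |Real.exp (l * B * η) - S| := by
      rw [hsplit]
      refine (abs_add_le _ _).trans_eq ?_
      rw [abs_mul, abs_mul (Real.exp (l * μ)) (Real.exp (l * B * η) - S),
        abs_of_pos (by positivity), abs_of_pos (Real.exp_pos _)]
    _ ≤ Real.exp (3 * L * Y) * (2 * (L * E)) + Real.exp (3 * L * Y) * (2 * (1 / 16) ^ T) := by
      gcongr
    _ = _ := by ring

/-- The value at `(a, η, v)` of the polynomial with coefficients `p`, the degrees in `η`, `v`, `a`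
being below `K`, `L`, `k`: the auxiliary function of the transcendence argument. -/
def auxSum (p : Fin K × Fin L × Fin k → ℤ) (a η v : ℝ) : ℝ :=
  ∑ x, (p x : ℝ) * a ^ (x.2.2 : ℕ) * η ^ (x.1 : ℕ) * v ^ (x.2.1 : ℕ)

/-- The monomial of `auxSum` with index `x`, where `v = exp (μ + B * η)` is expanded in a Taylor
polynomial. It is written as a polynomial in `η / R`, so that `|η| ≤ R` becomes the unit disc. -/
noncomputable def auxMonomial (T : ℕ) (a R B μ : ℝ) (x : Fin K × Fin L × Fin k) : ℝ[X] :=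
  C (a ^ (x.2.2 : ℕ) * R ^ (x.1 : ℕ) * Real.exp ((x.2.1 : ℕ) * μ)) *
    (expTaylor T).comp (C ((x.2.1 : ℕ) * B * R) * X) * X ^ (x.1 : ℕ)

theorem natDegree_auxMonomial_lt (T : ℕ) (a R B μ : ℝ) (x : Fin K × Fin L × Fin k) :
    (auxMonomial T a R B μ x).natDegree < T + K := by
  have hlin : (C ((x.2.1 : ℕ) * B * R) * X).natDegree ≤ 1 := 
    (natDegree_C_mul_le _ _).trans natDegree_X_le
  have hcomp : ((expTaylor T).comp (C ((x.2.1 : ℕ) * B * R) * X)).natDegree ≤ T * 1 :=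
    natDegree_comp_le.trans (Nat.mul_le_mul (natDegree_expTaylor_le T) hlin)
  calc
    _ ≤ _ := natDegree_mul_le
    _ ≤ T * 1 + x.1 :=
      add_le_add ((natDegree_C_mul_le _ _).trans hcomp) (natDegree_X_pow_le _)
    _ < T + K := by omega

theorem eval_auxMonomial (hR : R ≠ 0) (x : Fin K × Fin L × Fin k) :
    (auxMonomial T a R B μ x).eval (η / R) = a ^ (x.2.2 : ℕ) * η ^ (x.1 : ℕ) *
      (Real.exp ((x.2.1 : ℕ) * μ) * (expTaylor T).eval ((x.2.1 : ℕ) * B * η)) := by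
  have hη : (x.2.1 : ℕ) * B * R * (η / R) = (x.2.1 : ℕ) * B * η := by
    field_simp
  simp only [auxMonomial, eval_mul, eval_C, eval_comp, eval_X, eval_pow, hη, div_pow]
  field_simp

theorem abs_coeff_auxMonomial_le (ha : 0 ≤ a) (ha' : a ≤ 2) (hR : 1 ≤ R) (hμ : |μ| ≤ Y)
    (hB : |B| * R ≤ 2 * Y) (x : Fin K × Fin L × Fin k) (t : ℕ) :
    |(auxMonomial T a R B μ x).coeff t| ≤ 2 ^ k * R ^ K * Real.exp (3 * L * Y) := by
  have hY : 0 ≤ Y := (abs_nonneg _).trans hμ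
  rw [auxMonomial, coeff_mul_X_pow']
  split_ifs
  swap
  · rw [abs_zero]
    positivity
  rw [coeff_C_mul, comp_C_mul_X_coeff, abs_mul, abs_of_nonneg (by positivity)]
  have hl : ((x.2.1 : ℕ) : ℝ) ≤ L := Nat.cast_le.2 x.2.1.2.le
  have hapow : a ^ (x.2.2 : ℕ) ≤ 2 ^ k :=
    (pow_le_pow_left₀ ha ha' _).trans (pow_le_pow_right₀ one_le_two x.2.2.2.le)
  have hRpow : R ^ (x.1 : ℕ) ≤ R ^ K := pow_le_pow_right₀ hR x.1.2.le
  have hexpμ : Real.exp ((x.2.1 : ℕ) * μ) ≤ Real.exp (L * Y) := Real.exp_le_exp.2 <|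
    mul_le_mul_of_nonneg_left ((le_abs_self μ).trans hμ) (Nat.cast_nonneg _) |>.trans (by gcongr)
  have hexpB : Real.exp |(x.2.1 : ℕ) * B * R| ≤ Real.exp (L * (2 * Y)) := by
    rw [mul_assoc, abs_mul, Nat.abs_cast, abs_mul, abs_of_pos (by linarith : 0 < R)]
    gcongr
  calc
    _ ≤ 2 ^ k * R ^ K * Real.exp (L * Y) * Real.exp (L * (2 * Y)) := by
      gcongr
      exact (abs_coeff_expTaylor_mul_pow_le _ _ _).trans hexpB
    _ = _ := by
      rw [mul_assoc, ← Real.exp_add]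
      ring_nf

theorem abs_auxSum_sub_le {p : Fin K × Fin L × Fin k → ℤ} {w : ℕ} (hp : ∀ x, |p x| ≤ 2 ^ w)
    (ha : 0 ≤ a) (ha' : a ≤ 2) (hR : 1 ≤ R) (hμ : |μ| ≤ Y) (hB : |B| * R ≤ 2 * Y)
    (hT : 96 * L * Y ≤ T) (hv : 0 < v) (hη : |η| ≤ R) (hE : L * E ≤ 1)
    (hlog : |Real.log v - μ - B * η| ≤ E) :
    |auxSum p a η v - ∑ x, (p x : ℝ) * (auxMonomial T a R B μ x).eval (η / R)| ≤
      K * L * k * (2 ^ w * 2 ^ k * R ^ K *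
        (Real.exp (3 * L * Y) * (2 * ((1 / 16) ^ T + L * E)))) := by
  have hBη : |B * η| ≤ 2 * Y := by
    rw [abs_mul]
    exact (mul_le_mul_of_nonneg_left hη (abs_nonneg _)).trans hB
  rw [auxSum, ← Finset.sum_sub_distrib]
  calc
    _ ≤ ∑ _ : Fin K × Fin L × Fin k, 2 ^ w * 2 ^ k * R ^ K *
        (Real.exp (3 * L * Y) * (2 * ((1 / 16) ^ T + L * E))) := by
      refine (Finset.abs_sum_le_sum_abs _ _).trans (Finset.sum_le_sum fun x _ => ?_)
      rw [eval_auxMonomial (by linarith), ← mul_assoc, ← mul_assoc (p x : ℝ), ← mul_sub, abs_mul,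
        abs_mul, abs_mul]
      have hpx : |(p x : ℝ)| ≤ 2 ^ w := by exact_mod_cast hp x
      have hapow : |a ^ (x.2.2 : ℕ)| ≤ 2 ^ k := by
        rw [abs_of_nonneg (by positivity)]
        exact (pow_le_pow_left₀ ha ha' _).trans (pow_le_pow_right₀ one_le_two x.2.2.2.le)
      have hηpow : |η ^ (x.1 : ℕ)| ≤ R ^ K := by
        rw [abs_pow]
        exact (pow_le_pow_left₀ (abs_nonneg _) hη _).trans (pow_le_pow_right₀ hR x.1.2.le)
      have hvpow := abs_pow_sub_exp_mul_eval_expTaylor_le x.2.1.2 hμ hBη hT hv hE hlog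
      gcongr
    _ = _ := by
      rw [Finset.sum_const, nsmul_eq_mul, Finset.card_univ, Fintype.card_prod, Fintype.card_prod,
        Fintype.card_fin, Fintype.card_fin, Fintype.card_fin]
      push_cast
      ring

theorem abs_sum_mul_eval_le {ι : Type*} [Fintype ι] {q : ι → ℝ[X]} {c : ι → ℝ} {N : ℕ} {y δ : ℝ}
    (hq : ∀ i, (q i).natDegree < N) (hy : |y| ≤ 1)
    (hδ : ∀ t : Fin N, |∑ i, (q i).coeff t * c i| ≤ δ) :
    |∑ i, c i * (q i).eval y| ≤ N * δ := by
  have hexpand : ∑ i, c i * (q i).eval y = ∑ t : Fin N, y ^ (t : ℕ) * ∑ i, (q i).coeff t * c i := by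
    simp_rw [Finset.mul_sum]
    rw [Finset.sum_comm]
    refine Finset.sum_congr rfl fun i _ => ?_
    rw [eval_eq_sum_range' (hq i), ← Fin.sum_univ_eq_sum_range
      (fun t => (q i).coeff t * y ^ t), Finset.mul_sum]
    exact Finset.sum_congr rfl fun t _ => by ring
  calc
    _ = |∑ t : Fin N, y ^ (t : ℕ) * ∑ i, (q i).coeff t * c i| := by rw [hexpand]
    _ ≤ ∑ _ : Fin N, δ := by
      refine (Finset.abs_sum_le_sum_abs _ _).trans (Finset.sum_le_sum fun t _ => ?_)
      rw [abs_mul, abs_pow]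
      exact (mul_le_of_le_one_left (abs_nonneg _)
        (pow_le_one₀ (abs_nonneg _) hy)).trans (hδ t)
    _ = N * δ := by
      rw [Finset.sum_const, nsmul_eq_mul, Finset.card_univ, Fintype.card_fin]

theorem exists_forall_abs_auxSum_le (ha : 0 ≤ a) (ha' : a ≤ 2) (hR : 1 ≤ R)
    (hμ : |μ| ≤ Y) (hB : |B| * R ≤ 2 * Y) {w h : ℕ} (hw : h * (T + K) < w * (K * L * k))
    (hT : 96 * L * Y ≤ T) :
    ∃ p : Fin K × Fin L × Fin k → ℤ, p ≠ 0 ∧ (∀ x, |p x| ≤ 2 ^ w) ∧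
      ∀ η v E : ℝ, 0 < v → |η| ≤ R → L * E ≤ 1 → |Real.log v - μ - B * η| ≤ E →
        |auxSum p a η v| ≤ 2 * (K * L * k) * 2 ^ w * (2 ^ k * R ^ K * Real.exp (3 * L * Y)) *
          ((T + K) / 2 ^ h + (1 / 16) ^ T + L * E) := by
  have hR0 : 0 < R := by linarith
  have hcard : Fintype.card (Fin K × Fin L × Fin k) = K * L * k := by
    simp only [Fintype.card_prod, Fintype.card_fin, mul_assoc]
  set M := 2 ^ k * R ^ K * Real.exp (3 * L * Y) with hM
  obtain ⟨p, hp0, hpw, hpt⟩ := exists_int_ne_zero_abs_sum_le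
    (c := fun (t : Fin (T + K)) x => (auxMonomial T a R B μ x).coeff t) (by positivity : 0 < M)
    (fun t x => abs_coeff_auxMonomial_le ha ha' hR hμ hB x t) (w := w) (h := h)
    (by rwa [Fintype.card_fin, hcard])
  refine ⟨p, hp0, fun x => (hpw x).le, fun η v E hv hη hE hlog => ?_⟩
  have hunit : |η / R| ≤ 1 := by
    rw [abs_div, abs_of_pos hR0]
    exact (div_le_one hR0).2 hη
  have hmain : |∑ x, (p x : ℝ) * (auxMonomial T a R B μ x).eval (η / R)| ≤
      (T + K) * (2 * M * (K * L * k) * 2 ^ w / 2 ^ h) := by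
    rw [hcard] at hpt
    push_cast at hpt
    exact_mod_cast abs_sum_mul_eval_le (natDegree_auxMonomial_lt T a R B μ) hunit hpt
  have herror := abs_auxSum_sub_le (T := T) (fun x => (hpw x).le) ha ha' hR hμ hB hT hv hη hE hlog
  calc
    _ ≤ _ := by
      linarith [abs_sub_abs_le_abs_sub (auxSum p a η v)
        (∑ x, (p x : ℝ) * (auxMonomial T a R B μ x).eval (η / R)), hmain, herror]
    _ = (T + K) * (2 * M * (K * L * k) * 2 ^ w / 2 ^ h) + K * L * k * (2 ^ w * 2 ^ k * R ^ K *
        (Real.exp (3 * L * Y) * (2 * ((1 / 16) ^ T + L * E)))) := rfl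
    _ = _ := by
      rw [hM]
      ring

end AuxiliaryFunction

section ArithmeticStep

open Polynomial

variable {k L K w : ℕ} {α R D : ℝ} {p : Fin K × Fin L × Fin k → ℤ} {η : ℤ} {U W : ℤ[X]}

/-- `auxSum p X η (U / W)` multiplied by its denominator `W ^ L`, as an integer polynomial. -/
noncomputable def auxNumerator (p : Fin K × Fin L × Fin k → ℤ) (η : ℤ) (U W : ℤ[X]) : ℤ[X] :=
  ∑ x, (p x : ℤ[X]) * X ^ (x.2.2 : ℕ) * (η : ℤ[X]) ^ (x.1 : ℕ) *
    (U ^ (x.2.1 : ℕ) * W ^ (L - x.2.1))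

theorem aeval_auxNumerator (hW : aeval α W ≠ 0) :
    aeval α (auxNumerator p η U W) =
      aeval α W ^ L * auxSum p α η (aeval α U / aeval α W) := by
  rw [auxNumerator, map_sum, auxSum, Finset.mul_sum]
  refine Finset.sum_congr rfl fun x _ => ?_
  have hpow : aeval α W ^ L = aeval α W ^ (L - x.2.1) * aeval α W ^ (x.2.1 : ℕ) :=
    (pow_sub_mul_pow _ x.2.1.2.le).symm
  simp only [map_mul, map_pow, aeval_X, map_intCast, hpow, div_pow]
  field_simp

theorem norm_aeval_auxNumerator_le (hp : ∀ x, |p x| ≤ 2 ^ w) (hR : 1 ≤ R) (hη : |(η : ℝ)| ≤ R)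
    {z : ℂ} (hz : ‖z‖ ≤ 1) (hU : ‖aeval z U‖ ≤ D) (hW : ‖aeval z W‖ ≤ D) :
    ‖aeval z (auxNumerator p η U W)‖ ≤ K * L * k * 2 ^ w * R ^ K * D ^ L := by
  have hD : 0 ≤ D := (norm_nonneg _).trans hU
  rw [auxNumerator, map_sum]
  calc
    _ ≤ ∑ _ : Fin K × Fin L × Fin k, 2 ^ w * 1 * R ^ K * D ^ L := by
      refine (norm_sum_le _ _).trans (Finset.sum_le_sum fun x _ => ?_)
      have hpx : ‖(p x : ℂ)‖ ≤ 2 ^ w := by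
        rw [Complex.norm_intCast]
        exact_mod_cast hp x
      have hηpow : ‖(η : ℂ)‖ ^ (x.1 : ℕ) ≤ R ^ K := by
        rw [Complex.norm_intCast]
        exact (pow_le_pow_left₀ (abs_nonneg _) hη _).trans (pow_le_pow_right₀ hR x.1.2.le)
      have hzpow : ‖z‖ ^ (x.2.2 : ℕ) ≤ 1 := pow_le_one₀ (norm_nonneg _) hz
      have hUW : ‖aeval z U‖ ^ (x.2.1 : ℕ) * ‖aeval z W‖ ^ (L - x.2.1) ≤ D ^ L := by
        rw [← pow_mul_pow_sub D x.2.1.2.le]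
        gcongr
      simp only [map_mul, map_pow, aeval_X, map_intCast, norm_mul, norm_pow]
      gcongr
    _ = _ := by
      rw [Finset.sum_const, nsmul_eq_mul, Finset.card_univ, Fintype.card_prod, Fintype.card_prod,
        Fintype.card_fin, Fintype.card_fin, Fintype.card_fin]
      push_cast
      ring

theorem IsDominantRoot.one_le_abs_auxSum_aeval_mul_pow (h : IsDominantRoot k α) (hk : 2 ≤ k)
    (hp : ∀ x, |p x| ≤ 2 ^ w) (hR : 1 ≤ R) (hη : |(η : ℝ)| ≤ R)
    (hU : ∀ z : ℂ, ‖z‖ ≤ 1 → ‖aeval z U‖ ≤ D) (hW : ∀ z : ℂ, ‖z‖ ≤ 1 → ‖aeval z W‖ ≤ D)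
    (hWα : aeval α W ≠ 0) (hWD : |aeval α W| ≤ D)
    (hF : auxSum p α η (aeval α U / aeval α W) ≠ 0) :
    1 ≤ |auxSum p α η (aeval α U / aeval α W)| * (K * L * k * 2 ^ w * R ^ K * D ^ L) ^ k := by
  have hD : 0 ≤ D := (abs_nonneg _).trans hWD
  have hcard : (1 : ℝ) ≤ K * L * k := by
    obtain ⟨x, -, -⟩ := Finset.exists_ne_zero_of_sum_ne_zero hF
    have hpos := Fintype.card_pos_iff.2 ⟨x⟩
    simp only [Fintype.card_prod, Fintype.card_fin, ← mul_assoc] at hpos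
    exact_mod_cast hpos
  have hlower := h.one_le_abs_aeval_mul_pow hk
    (by rw [aeval_auxNumerator hWα]; exact mul_ne_zero (pow_ne_zero L hWα) hF)
    fun z hz => norm_aeval_auxNumerator_le hp hR hη hz (hU z hz) (hW z hz)
  rw [aeval_auxNumerator hWα, abs_mul, abs_pow] at hlower
  set F := auxSum p α η (aeval α U / aeval α W)
  set M : ℝ := K * L * k * 2 ^ w * R ^ K * D ^ L with hM
  have hDM : D ^ L ≤ M := by
    rw [hM]
    exact le_mul_of_one_le_left (by positivity) <| one_le_mul_of_one_le_of_one_le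
      (one_le_mul_of_one_le_of_one_le hcard (one_le_pow₀ one_le_two)) (one_le_pow₀ hR)
  have : 0 ≤ M := (pow_nonneg hD L).trans hDM
  calc
    1 ≤ |aeval α W| ^ L * |F| * M ^ (k - 1) := hlower
    _ ≤ M * |F| * M ^ (k - 1) := by
      gcongr
      exact (pow_le_pow_left₀ (abs_nonneg _) hWD L).trans hDM
    _ = |F| * (M ^ (k - 1) * M) := by ring
    _ = |F| * M ^ k := by rw [pow_sub_one_mul (by omega)]

theorem norm_two_mul_sub_one_mul_sub_one_le {z : ℂ} (hz : ‖z‖ ≤ 1) :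
    ‖(2 * z - 1) * (z - 1)‖ ≤ 6 := by
  have hleft : ‖2 * z - 1‖ ≤ 3 := (norm_sub_le _ _).trans (by
    rw [norm_mul, Complex.norm_ofNat, norm_one]
    linarith)
  have hright : ‖z - 1‖ ≤ 2 := (norm_sub_le _ _).trans (by
    rw [norm_one]
    linarith)
  rw [norm_mul]
  linarith [mul_le_mul hleft hright (norm_nonneg _) (by norm_num)]

theorem norm_mul_mul_sub_le (k : ℕ) {b : ℕ} (hb : b ≤ 9) {z : ℂ} (hz : ‖z‖ ≤ 1) :
    ‖b * z * ((k + 1) * z - 2 * k)‖ ≤ 9 * (3 * k + 1) := by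
  have hb' : (b : ℝ) ≤ 9 := by exact_mod_cast hb
  have hsucc : ‖(k : ℂ) + 1‖ = k + 1 := by exact_mod_cast Complex.norm_natCast (k + 1)
  have hfactor : ‖(k + 1) * z - 2 * k‖ ≤ 3 * k + 1 := (norm_sub_le _ _).trans (by
    rw [norm_mul, norm_mul, Complex.norm_ofNat, Complex.norm_natCast, hsucc]
    nlinarith)
  calc
    _ ≤ (9 * 1 : ℝ) * (3 * k + 1) := by
      rw [norm_mul, norm_mul, Complex.norm_natCast]
      gcongr
    _ = _ := by ring

theorem IsDominantRoot.mul_mul_denom_le (h : IsDominantRoot k α) {b : ℕ} (hb' : b ≤ 9) :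
    b * α * ((k + 1) * α - 2 * k) ≤ 36 := calc
  _ ≤ (9 : ℝ) * 2 * 2 := by
    have := h.pos
    have hb9 : (b : ℝ) ≤ 9 := by exact_mod_cast hb'
    gcongr
    exacts [by linarith [h.one_le_denom], h.lt_two.le, h.denom_le_two]
  _ = 36 := by norm_num

theorem IsDominantRoot.one_le_abs_auxSum_mul_pow (h : IsDominantRoot k α) (hk : 2 ≤ k)
    (hp : ∀ x, |p x| ≤ 2 ^ w) (hR : 1 ≤ R) (hη : |(η : ℝ)| ≤ R) {b x₁ x₂ x₃ Z : ℕ} (hb : 1 ≤ b)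
    (hb' : b ≤ 9) (hx₂ : x₂ ≤ Z) (hx₃ : x₃ ≤ Z)
    (hF : auxSum p α η (α ^ x₁ / 10 ^ x₂ * (dominantCoeff k α / b) ^ x₃) ≠ 0) :
    1 ≤ |auxSum p α η (α ^ x₁ / 10 ^ x₂ * (dominantCoeff k α / b) ^ x₃)| *
      (K * L * k * 2 ^ w * R ^ K * (90 * (3 * k + 1)) ^ (L * Z)) ^ k := by
  set G : ℝ := 9 * (3 * k + 1) with hG
  have hk' : (2 : ℝ) ≤ k := by exact_mod_cast hk
  have hpowG {y : ℝ} (hy : 0 ≤ y) (hyG : y ≤ G) : 10 ^ x₂ * y ^ x₃ ≤ (10 * G) ^ Z := by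
    rw [mul_pow]
    gcongr
    · norm_num
    · exact (pow_le_pow_left₀ hy hyG _).trans (pow_le_pow_right₀ (by linarith) hx₃)
  let U : ℤ[X] := X ^ x₁ * ((2 * X - 1) * (X - 1)) ^ x₃
  let W : ℤ[X] := 10 ^ x₂ * ((b : ℤ[X]) * X * (((k : ℤ[X]) + 1) * X - 2 * (k : ℤ[X]))) ^ x₃
  have hUaeval {S : Type} [CommRing S] (z : S) :
      aeval z U = z ^ x₁ * ((2 * z - 1) * (z - 1)) ^ x₃ := by
    simp only [U, map_mul, map_pow, map_sub, aeval_X, map_one, map_ofNat]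
  have hWaeval {S : Type} [CommRing S] (z : S) :
      aeval z W = 10 ^ x₂ * (b * z * ((k + 1) * z - 2 * k)) ^ x₃ := by
    simp only [W, map_mul, map_pow, map_sub, map_add, aeval_X, map_natCast, map_one, map_ofNat]
  have hU (z : ℂ) (hz : ‖z‖ ≤ 1) : ‖aeval z U‖ ≤ (10 * G) ^ Z := by
    rw [hUaeval, norm_mul, norm_pow, norm_pow]
    refine le_trans ?_ (hpowG (norm_nonneg _)
      ((norm_two_mul_sub_one_mul_sub_one_le hz).trans (by linarith)))
    gcongr
    exact (pow_le_one₀ (norm_nonneg _) hz).trans (one_le_pow₀ (by norm_num))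
  have hW (z : ℂ) (hz : ‖z‖ ≤ 1) : ‖aeval z W‖ ≤ (10 * G) ^ Z := by
    rw [hWaeval, norm_mul, norm_pow, norm_pow, Complex.norm_ofNat]
    exact hpowG (norm_nonneg _) (norm_mul_mul_sub_le k hb' hz)
  have hdenom : 0 < b * α * ((k + 1) * α - 2 * k) :=
    mul_pos (mul_pos (Nat.cast_pos.2 hb) h.pos) (by linarith [h.one_le_denom])
  have hquot : aeval α U / aeval α W = α ^ x₁ / 10 ^ x₂ * (dominantCoeff k α / b) ^ x₃ := by
    rw [hUaeval, hWaeval, mul_div_mul_comm, ← div_pow, dominantCoeff, div_div]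
    congr 3
    ring
  have hWα : 0 < aeval α W := by
    rw [hWaeval]
    positivity
  have hWD : |aeval α W| ≤ (10 * G) ^ Z := by
    rw [abs_of_pos hWα, hWaeval]
    exact hpowG hdenom.le ((h.mul_mul_denom_le hb').trans (by linarith))
  have hmain := h.one_le_abs_auxSum_aeval_mul_pow hk hp hR hη hU hW hWα.ne' hWD (hquot ▸ hF)
  rwa [hquot, ← pow_mul, mul_comm Z, hG, ← mul_assoc, show (10 : ℝ) * 9 = 90 by norm_num] at hmain

/-- The coefficient of `v ^ l` in `auxSum p α η v`, as a polynomial in `η`. -/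
noncomputable def auxCoeff (p : Fin K × Fin L × Fin k → ℤ) (α : ℝ) (l : Fin L) : ℝ[X] :=
  ofFn K fun κ => ∑ i : Fin k, (p (κ, l, i) : ℝ) * α ^ (i : ℕ)

theorem sum_eval_auxCoeff_mul_pow (p : Fin K × Fin L × Fin k → ℤ) (α y v : ℝ) :
    ∑ l : Fin L, (auxCoeff p α l).eval y * v ^ (l : ℕ) = auxSum p α y v := by
  simp only [auxCoeff, auxSum, ofFn_eq_sum_monomial, eval_finsetSum, eval_monomial,
    Fintype.sum_prod_type, Finset.sum_mul]
  exact Finset.sum_comm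

theorem IsDominantRoot.exists_auxCoeff_ne_zero (h : IsDominantRoot k α) (hk : 2 ≤ k) (hp : p ≠ 0) :
    ∃ l, auxCoeff p α l ≠ 0 := by
  classical
  obtain ⟨⟨κ, l, i⟩, hpx⟩ := Function.ne_iff.1 hp
  refine ⟨l, fun hzero => hpx ?_⟩
  have hcoeff := congrFun ((injective_ofFn K) (hzero.trans (ofFn_zero K).symm)) κ
  have haeval : aeval α (ofFn k fun i => p (κ, l, i)) = 0 := by
    simpa [ofFn_eq_sum_monomial, aeval_monomial] using hcoeff
  have hofFn := h.eq_zero_of_degree_lt hk (ofFn_degree_lt _) haeval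
  exact congrFun ((injective_ofFn k) (hofFn.trans (ofFn_zero k).symm)) i

theorem IsDominantRoot.exists_auxSum_ne_zero {ι : Type*} (h : IsDominantRoot k α) (hk : 2 ≤ k)
    (hp : p ≠ 0) {q : ℕ} (hq : q ≠ 0) (r : ℕ) {S : Finset ι} (hS : L * K < S.card) {y v : ι → ℝ}
    (hy : Set.InjOn y S) (hv : ∀ x ∈ S, v x ≠ 0) :
    ∃ x ∈ S, ∃ i < L, auxSum p α (y x + i * q) (v x * (α ^ q / 10 ^ r) ^ i) ≠ 0 := by
  classical
  obtain ⟨κ₀, -, -⟩ := (Function.ne_iff.1 hp).choose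
  have hdeg (l : Fin L) : (auxCoeff p α l).natDegree < K := ofFn_natDegree_lt κ₀.pos _
  have hβ : α ^ q / 10 ^ r ≠ 1 := fun hone =>
    h.pow_ne_ten_pow hk hq r ((div_eq_one_iff_eq (by positivity)).1 hone)
  have hα := h.pos
  have hinj : Function.Injective fun l : Fin L => (α ^ q / 10 ^ r) ^ (l : ℕ) :=
    (pow_right_injective₀ (by positivity) hβ).comp Fin.val_injective
  obtain ⟨x₀, -⟩ := Finset.card_pos.1 (Nat.zero_lt_of_lt hS)
  have : Nonempty ι := ⟨x₀⟩
  have hinv : ∀ x ∈ S, Function.invFunOn y S (y x) = x := fun x hx =>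
    hy.leftInvOn_invFunOn hx
  obtain ⟨t, ht, j, hj, hsum⟩ := exists_sum_eval_mul_pow_ne_zero hdeg
    (h.exists_auxCoeff_ne_zero hk hp) hinj q
    (S := S.image y) (v := v ∘ Function.invFunOn y S) (by rwa [Finset.card_image_of_injOn hy])
    (Finset.forall_mem_image.2 fun x hx => by
      rw [Function.comp_apply, hinv x hx]
      exact hv x hx)
  obtain ⟨x, hx, rfl⟩ := Finset.mem_image.1 ht
  rw [Function.comp_apply, hinv x hx] at hsum
  exact ⟨x, hx, j, hj, sum_eval_auxCoeff_mul_pow p α _ _ ▸ hsum⟩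

end ArithmeticStep

section LinearForm

variable {k n d b q r s X : ℕ} {α ε : ℝ} {c : ℤ} {x x₀ y : ℕ × ℕ × ℕ}

theorem log_two_le : Real.log 2 ≤ 0.7 := by
  linarith [Real.log_two_lt_d9]

theorem log_ten_le : Real.log 10 ≤ 2.34 := by
  have hpow : Real.log ((10 : ℝ) ^ 3) ≤ Real.log ((2 : ℝ) ^ 10) :=
    Real.log_le_log (by norm_num) (by norm_num)
  rw [Real.log_pow, Real.log_pow] at hpow
  push_cast at hpow
  linarith [log_two_le]

theorem abs_log_le_two_mul {t : ℝ} (hε : ε ≤ 1 / 2) (ht : |t - 1| ≤ ε) : |Real.log t| ≤ 2 * ε := by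
  obtain ⟨hlow, hupp⟩ := abs_le.1 ht
  have hpos : 0 < t := by linarith
  have hinv : t⁻¹ ≤ 1 + 2 * ε := by
    rw [inv_le_iff_one_le_mul₀ hpos]
    nlinarith
  rw [abs_le]
  constructor
  · linarith [Real.one_sub_inv_le_log_of_pos hpos]
  · linarith [Real.log_le_sub_one_of_pos hpos]

/-- The linear form in logarithms `log (g / b) + n log α - d log 10`, where `g` is
`dominantCoeff k α`; it is tiny when `L_n^{(k)} = b·10^d`. -/
noncomputable def logForm (k : ℕ) (α : ℝ) (b n d : ℕ) : ℝ :=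
  Real.log (dominantCoeff k α / b) + n * Real.log α - d * Real.log 10

theorem IsDominantRoot.dominantCoeff_div_pos (h : IsDominantRoot k α) (hk : 450 < k)
    (hb : 1 ≤ b) : 0 < dominantCoeff k α / b :=
  div_pos (by linarith [h.le_dominantCoeff (by linarith [h.ge_of_gt hk])]) (Nat.cast_pos.2 hb)

theorem IsDominantRoot.abs_log_dominantCoeff_div_le (h : IsDominantRoot k α) (hk : 450 < k)
    (hb : 1 ≤ b) (hb' : b ≤ 9) : |Real.log (dominantCoeff k α / b)| ≤ 2.8 := by
  have hα := h.ge_of_gt hk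
  have hb₁ : (1 : ℝ) ≤ b := by exact_mod_cast hb
  have hb₉ : (b : ℝ) ≤ 9 := by exact_mod_cast hb'
  have hcoeff := h.le_dominantCoeff (by linarith)
  have hupp : dominantCoeff k α / b ≤ 2 ^ 4 := by
    rw [div_le_iff₀ (by linarith)]
    nlinarith [h.mul_dominantCoeff_le]
  have hlow : (2 ^ 4 : ℝ)⁻¹ ≤ dominantCoeff k α / b := by
    rw [le_div_iff₀ (by linarith)]
    linarith
  have hlog_upp := Real.log_le_log (h.dominantCoeff_div_pos hk hb) hupp
  have hlog_low := Real.log_le_log (by positivity) hlow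
  rw [Real.log_inv, Real.log_pow] at hlog_low
  rw [Real.log_pow] at hlog_upp
  push_cast at hlog_low hlog_upp
  rw [abs_le]
  constructor <;> linarith [log_two_le]

theorem IsDominantRoot.abs_logForm_le (h : IsDominantRoot k α) (hk : 450 < k) (hb : 1 ≤ b)
    (hd : 2 ≤ d) (hL : lucasL k n = b * 10 ^ d) : |logForm k α b n d| ≤ 4 / 10 ^ d := by
  have hα := h.pos
  have hg := h.dominantCoeff_div_pos hk hb
  have hb₁ : (1 : ℝ) ≤ b := by exact_mod_cast hb
  have happrox := h.abs_lucasL_sub_le (by omega) n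
  rw [hL, abs_sub_comm] at happrox
  push_cast at happrox
  have hten : (100 : ℝ) ≤ 10 ^ d := calc
    (100 : ℝ) = 10 ^ 2 := by norm_num
    _ ≤ _ := pow_le_pow_right₀ (by norm_num) hd
  have hform : Real.log (dominantCoeff k α / b * α ^ n / 10 ^ d) = logForm k α b n d := by
    rw [Real.log_div (by positivity) (by positivity),
      Real.log_mul (by positivity) (by positivity), Real.log_pow, Real.log_pow, logForm]
  have hclose : |dominantCoeff k α / b * α ^ n / 10 ^ d - 1| ≤ 2 / 10 ^ d := by
    have hrel : dominantCoeff k α / b * α ^ n / 10 ^ d - 1 =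
        (dominantCoeff k α * α ^ n - b * 10 ^ d) / (b * 10 ^ d) := by
      field_simp
    rw [hrel, abs_div, abs_of_pos (by positivity : (0 : ℝ) < b * 10 ^ d)]
    exact div_le_div₀ zero_le_two happrox (by positivity)
      (le_mul_of_one_le_left (by positivity) hb₁)
  have hsmall : (2 : ℝ) / 10 ^ d ≤ 1 / 2 := by
    rw [div_le_div_iff₀ (by positivity) zero_lt_two]
    linarith
  rw [← hform]
  exact (abs_log_le_two_mul hsmall hclose).trans_eq (by ring)

/-- The monomial with exponent vector `x` in the numbers `α`, `1 / 10` and `g / b` whose logarithms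
occur in `logForm`. -/
noncomputable def lucasMonomial (k : ℕ) (α : ℝ) (b : ℕ) (x : ℕ × ℕ × ℕ) : ℝ :=
  α ^ x.1 / 10 ^ x.2.1 * (dominantCoeff k α / b) ^ x.2.2

theorem IsDominantRoot.lucasMonomial_pos (h : IsDominantRoot k α) (hk : 450 < k) (hb : 1 ≤ b)
    (x : ℕ × ℕ × ℕ) : 0 < lucasMonomial k α b x := by
  have hα := h.pos
  have hg := h.dominantCoeff_div_pos hk hb
  rw [lucasMonomial]
  positivity

theorem lucasMonomial_add (k : ℕ) (α : ℝ) (b q r i : ℕ) (x : ℕ × ℕ × ℕ) :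
    lucasMonomial k α b (x.1 + i * q, x.2.1 + i * r, x.2.2) =
      lucasMonomial k α b x * (α ^ q / 10 ^ r) ^ i := by
  rw [lucasMonomial, lucasMonomial, pow_add, pow_add, div_pow (α ^ q), ← pow_mul, ← pow_mul,
    mul_comm q, mul_comm r]
  ring

theorem IsDominantRoot.log_lucasMonomial (h : IsDominantRoot k α) (hk : 450 < k) (hb : 1 ≤ b)
    (x : ℕ × ℕ × ℕ) : Real.log (lucasMonomial k α b x) =
      x.1 * Real.log α - x.2.1 * Real.log 10 + x.2.2 * Real.log (dominantCoeff k α / b) := by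
  have hα := h.pos
  have hg := h.dominantCoeff_div_pos hk hb
  rw [lucasMonomial, Real.log_mul (by positivity) (by positivity),
    Real.log_div (by positivity) (by positivity), Real.log_pow, Real.log_pow, Real.log_pow]

theorem IsDominantRoot.abs_log_lucasMonomial_le (h : IsDominantRoot k α) (hk : 450 < k)
    (hb : 1 ≤ b) (hb' : b ≤ 9) (hx₁ : x.1 ≤ X) (hx₂ : x.2.1 ≤ X) (hx₃ : x.2.2 ≤ X) :
    |Real.log (lucasMonomial k α b x)| ≤ 5.5 * X := by
  have hlogα : Real.log α ≤ 0.7 := (Real.log_le_log h.pos h.lt_two.le).trans log_two_le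
  have hlogα₀ : 0 ≤ Real.log α := Real.log_nonneg h.one_le
  have : 0 ≤ Real.log 10 := Real.log_nonneg (by norm_num)
  have hfirst : (x.1 : ℝ) * Real.log α ≤ X * 0.7 := by gcongr
  have hfirst₀ : 0 ≤ (x.1 : ℝ) * Real.log α := by positivity
  have hsecond : (x.2.1 : ℝ) * Real.log 10 ≤ X * 2.34 := by
    gcongr
    exact log_ten_le
  have hsecond₀ : 0 ≤ (x.2.1 : ℝ) * Real.log 10 := by positivity
  have hthird : |(x.2.2 : ℝ) * Real.log (dominantCoeff k α / b)| ≤ X * 2.8 := by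
    rw [abs_mul, Nat.abs_cast]
    gcongr
    exact h.abs_log_dominantCoeff_div_le hk hb hb'
  obtain ⟨hthird_low, hthird_upp⟩ := abs_le.1 hthird
  have : (0 : ℝ) ≤ X := X.cast_nonneg
  rw [h.log_lucasMonomial hk hb, abs_le]
  constructor <;> linarith

/-- The exponent of `α` left after `logForm` is used to eliminate the third exponent. -/
def reducedExponent (n : ℕ) (x : ℕ × ℕ × ℕ) : ℤ :=
  x.1 - n * x.2.2

/-- Up to a multiple of `logForm`, the logarithms of the monomials with a given value of
`exponentLevel q r n d` differ by the multiple of a fixed number by the difference of their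
reduced exponents. -/
def exponentLevel (q r n d : ℕ) (x : ℕ × ℕ × ℕ) : ℤ :=
  r * x.1 - q * x.2.1 + ((q : ℤ) * d - r * n) * x.2.2

theorem exponentLevel_add (q r n d i : ℕ) (x : ℕ × ℕ × ℕ) :
    exponentLevel q r n d (x.1 + i * q, x.2.1 + i * r, x.2.2) = exponentLevel q r n d x := by
  simp only [exponentLevel]
  push_cast
  ring

theorem IsDominantRoot.log_lucasMonomial_sub (h : IsDominantRoot k α) (hk : 450 < k)
    (hb : 1 ≤ b) (hq : q ≠ 0) (hxy : exponentLevel q r n d x = exponentLevel q r n d y) :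
    Real.log (lucasMonomial k α b x) - Real.log (lucasMonomial k α b y) =
      (Real.log α - r / q * Real.log 10) *
        ((reducedExponent n x - reducedExponent n y : ℤ) : ℝ) +
          (x.2.2 - y.2.2) * logForm k α b n d := by
  have hq' : (q : ℝ) ≠ 0 := Nat.cast_ne_zero.2 hq
  have hxy' := congrArg (Int.cast (R := ℝ)) hxy
  simp only [exponentLevel] at hxy'
  push_cast at hxy'
  rw [h.log_lucasMonomial hk hb, h.log_lucasMonomial hk hb, logForm, reducedExponent,
    reducedExponent]
  push_cast
  field_simp
  linear_combination Real.log 10 * hxy'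

/-- The exponent vectors in `[0, X)³` of level `c`. -/
def levelSet (q r n d X : ℕ) (c : ℤ) : Finset (ℕ × ℕ × ℕ) :=
  {x ∈ Finset.range X ×ˢ Finset.range X ×ˢ Finset.range X | exponentLevel q r n d x = c}

theorem mem_levelSet : x ∈ levelSet q r n d X c ↔
    (x.1 < X ∧ x.2.1 < X ∧ x.2.2 < X) ∧ exponentLevel q r n d x = c := by
  simp only [levelSet, Finset.mem_filter, Finset.mem_product, Finset.mem_range]

theorem levelSet_subset_two_mul : levelSet q r n d X c ⊆ levelSet q r n d (2 * X) c := by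
  intro x hx
  rw [mem_levelSet] at hx ⊢
  omega

theorem abs_exponentLevel_le (hq : q ≤ s) (hr : r ≤ s) (hqr : |(q : ℤ) * d - r * n| ≤ s)
    (hx₁ : x.1 ≤ X) (hx₂ : x.2.1 ≤ X) (hx₃ : x.2.2 ≤ X) :
    |exponentLevel q r n d x| ≤ 2 * s * X := by
  have hfirst : (r : ℤ) * x.1 ≤ s * X := by exact_mod_cast Nat.mul_le_mul hr hx₁
  have hsecond : (q : ℤ) * x.2.1 ≤ s * X := by exact_mod_cast Nat.mul_le_mul hq hx₂
  have hthird : |((q : ℤ) * d - r * n) * x.2.2| ≤ s * X := by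
    rw [abs_mul, Nat.abs_cast]
    gcongr
  have hfirst₀ : 0 ≤ (r : ℤ) * x.1 := by positivity
  have hsecond₀ : 0 ≤ (q : ℤ) * x.2.1 := by positivity
  rw [abs_le] at hthird ⊢
  rw [exponentLevel]
  constructor <;> linarith

theorem exists_lt_card_levelSet {m : ℕ} (hq : q ≤ s) (hr : r ≤ s)
    (hqr : |(q : ℤ) * d - r * n| ≤ s) (hm : (4 * s * X + 1) * m < X ^ 3) :
    ∃ c, m < (levelSet q r n d X c).card := by
  have hmaps : ∀ x ∈ Finset.range X ×ˢ Finset.range X ×ˢ Finset.range X,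
      exponentLevel q r n d x ∈ Finset.Icc (-(2 * s * X : ℤ)) (2 * s * X) := by
    intro x hx
    simp only [Finset.mem_product, Finset.mem_range] at hx
    rw [Finset.mem_Icc, ← abs_le]
    exact abs_exponentLevel_le hq hr hqr hx.1.le hx.2.1.le hx.2.2.le
  have hcard : (Finset.Icc (-(2 * s * X : ℤ)) (2 * s * X)).card = 4 * s * X + 1 := by
    rw [Int.card_Icc]
    have : (2 * s * X + 1 - -(2 * s * X) : ℤ) = ((4 * s * X + 1 : ℕ) : ℤ) := by
      push_cast
      ring
    rw [this, Int.toNat_natCast]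
  obtain ⟨c, -, hc⟩ := Finset.exists_lt_card_fiber_of_mul_lt_card_of_maps_to hmaps (n := m) (by
    rw [hcard, Finset.card_product, Finset.card_product, Finset.card_range]
    linarith)
  exact ⟨c, hc⟩

theorem injOn_reducedExponent (hq : q ≠ 0) (hX : X ≤ n) :
    Set.InjOn (reducedExponent n) (levelSet q r n d X c) := by
  intro x hx y hy hxy
  obtain ⟨⟨hx₁, -, -⟩, hxc⟩ := mem_levelSet.1 hx
  obtain ⟨⟨hy₁, -, -⟩, hyc⟩ := mem_levelSet.1 hy
  obtain ⟨x₁, x₂, x₃⟩ := x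
  obtain ⟨y₁, y₂, y₃⟩ := y
  simp only [reducedExponent] at hx₁ hy₁ hxy
  have hthird : x₃ = y₃ := by
    have hlt : |(n : ℤ) * (x₃ - y₃)| < n := by
      rw [abs_lt]
      constructor <;> linarith
    have hlt_one : |(x₃ : ℤ) - y₃| < 1 := by
      rw [abs_mul, Nat.abs_cast] at hlt
      nlinarith
    have := Int.abs_lt_one_iff.1 hlt_one
    omega
  subst hthird
  obtain rfl : x₁ = y₁ := by omega
  have hsecond : (q : ℤ) * x₂ = q * y₂ := by
    simp only [exponentLevel] at hxc hyc
    linarith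
  rw [mul_left_cancel₀ (Nat.cast_ne_zero.2 hq) hsecond |> Nat.cast_inj.1]

theorem abs_reducedExponent_sub_le (hn : 1 ≤ n) (hx₁ : x.1 ≤ X) (hx₃ : x.2.2 ≤ X) (hy₁ : y.1 ≤ X)
    (hy₃ : y.2.2 ≤ X) : |reducedExponent n x - reducedExponent n y| ≤ 2 * X * n := by
  have hX : (X : ℤ) ≤ X * n := by exact_mod_cast Nat.le_mul_of_pos_right X hn
  have hx : (n : ℤ) * x.2.2 ≤ n * X := by gcongr
  have hy : (n : ℤ) * y.2.2 ≤ n * X := by gcongr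
  have hx₀ : 0 ≤ (n : ℤ) * x.2.2 := by positivity
  have hy₀ : 0 ≤ (n : ℤ) * y.2.2 := by positivity
  rw [reducedExponent, reducedExponent, abs_le]
  constructor <;> linarith

theorem abs_sub_mul_logForm_le (hΛ : |logForm k α b n d| ≤ ε) (hx₃ : x.2.2 ≤ X)
    (hy₃ : y.2.2 ≤ X) : |((x.2.2 : ℝ) - y.2.2) * logForm k α b n d| ≤ X * ε := by
  have hsub : |(x.2.2 : ℝ) - y.2.2| ≤ X :=
    abs_sub_le_of_nonneg_of_le (Nat.cast_nonneg _) (by exact_mod_cast hx₃) (Nat.cast_nonneg _)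
      (by exact_mod_cast hy₃)
  rw [abs_mul]
  gcongr

theorem IsDominantRoot.exists_radius (h : IsDominantRoot k α) (hk : 450 < k) (hb : 1 ≤ b)
    (hb' : b ≤ 9) (hq : q ≠ 0) (hX : X ≤ n) (hΛ : |logForm k α b n d| ≤ 1 / 25)
    (hcard : 1 < (levelSet q r n d X c).card) (hx₀ : x₀ ∈ levelSet q r n d X c) :
    ∃ R : ℝ, 1 ≤ R ∧ R ≤ 4 * X * n ∧ |Real.log α - r / q * Real.log 10| * R ≤ 24 * X ∧
      ∀ x ∈ levelSet q r n d (2 * X) c,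
        |((reducedExponent n x - reducedExponent n x₀ : ℤ) : ℝ)| ≤ R := by
  have hsub := levelSet_subset_two_mul (q := q) (r := r) (n := n) (d := d) (X := X) (c := c)
  obtain ⟨⟨hx₀₁, hx₀₂, hx₀₃⟩, hx₀c⟩ := mem_levelSet.1 (hsub hx₀)
  obtain ⟨z, hz, hmax⟩ := Finset.exists_max_image _
    (fun x => |reducedExponent n x - reducedExponent n x₀|) ⟨x₀, hsub hx₀⟩
  obtain ⟨⟨hz₁, hz₂, hz₃⟩, hzc⟩ := mem_levelSet.1 hz
  refine ⟨|((reducedExponent n z - reducedExponent n x₀ : ℤ) : ℝ)|, ?_, ?_, ?_, fun x hx => ?_⟩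
  · obtain ⟨y, hy, hne⟩ := Finset.exists_mem_ne hcard x₀
    have hpos : 1 ≤ |reducedExponent n y - reducedExponent n x₀| :=
      Int.one_le_abs (sub_ne_zero.2 fun heq => hne (injOn_reducedExponent hq hX hy hx₀ heq))
    exact_mod_cast hpos.trans (hmax y (hsub hy))
  · have hn : 1 ≤ n := by omega
    have hle := abs_reducedExponent_sub_le hn hz₁.le hz₃.le hx₀₁.le hx₀₃.le
    rw [← Int.cast_abs]
    have hcast : ((2 * (2 * X : ℕ) * n : ℤ) : ℝ) = 4 * X * n := by
      push_cast
      ring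
    exact hcast ▸ Int.cast_le.2 hle
  · have hdiff := h.log_lucasMonomial_sub hk hb hq (hzc.trans hx₀c.symm)
    have hlogz := abs_le.1 (h.abs_log_lucasMonomial_le hk hb hb' hz₁.le hz₂.le hz₃.le)
    have hlogx₀ := abs_le.1 (h.abs_log_lucasMonomial_le hk hb hb' hx₀₁.le hx₀₂.le hx₀₃.le)
    have herror := abs_le.1 (abs_sub_mul_logForm_le hΛ hz₃.le hx₀₃.le)
    have : (0 : ℝ) ≤ X := X.cast_nonneg
    push_cast at hlogz hlogx₀ herror
    rw [← abs_mul, abs_le]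
    constructor <;> linarith
  · exact_mod_cast hmax x hx

theorem IsDominantRoot.exists_auxSum_eq_zero (h : IsDominantRoot k α) (hk : 450 < k) (hb : 1 ≤ b)
    (hb' : b ≤ 9) (hq : q ≠ 0) (hX : X ≤ n) (hΛ : |logForm k α b n d| ≤ ε) (hε : ε ≤ 1 / 25)
    (hcard : 1 < (levelSet q r n d X c).card) (hx₀ : x₀ ∈ levelSet q r n d X c)
    {L K T w m : ℕ} (hw : m * (T + K) < w * (K * L * k)) (hT : 96 * L * (12 * X) ≤ T)
    (hLε : L * (2 * X * ε) ≤ 1)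
    (hlt : 2 * (K * L * k) * 2 ^ w * (2 ^ k * (4 * X * n) ^ K * Real.exp (3 * L * (12 * X))) *
      ((T + K) / 2 ^ m + (1 / 16) ^ T + L * (2 * X * ε)) *
        (K * L * k * 2 ^ w * (4 * X * n) ^ K * (90 * (3 * k + 1)) ^ (L * (2 * X))) ^ k < 1) :
    ∃ p : Fin K × Fin L × Fin k → ℤ, p ≠ 0 ∧ ∀ x ∈ levelSet q r n d (2 * X) c,
      auxSum p α (reducedExponent n x - reducedExponent n x₀ : ℤ) (lucasMonomial k α b x) = 0 := by
  obtain ⟨R, hR, hRX, hBR, hradius⟩ := h.exists_radius hk hb hb' hq hX (hΛ.trans hε) hcard hx₀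
  obtain ⟨⟨hx₀₁, hx₀₂, hx₀₃⟩, hx₀c⟩ := mem_levelSet.1 (levelSet_subset_two_mul hx₀)
  have hlogx₀ := h.abs_log_lucasMonomial_le hk hb hb' hx₀₁.le hx₀₂.le hx₀₃.le
  push_cast at hlogx₀
  have : (0 : ℝ) ≤ X := X.cast_nonneg
  obtain ⟨p, hp, hpw, hupper⟩ := exists_forall_abs_auxSum_le (Y := 12 * X) h.pos.le h.lt_two.le hR
    (hlogx₀.trans (by linarith)) (hBR.trans_eq (by ring)) hw (by exact_mod_cast hT)
  refine ⟨p, hp, fun x hx => ?_⟩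
  obtain ⟨⟨-, hx₂, hx₃⟩, hxc⟩ := mem_levelSet.1 hx
  have herror := abs_sub_mul_logForm_le hΛ hx₃.le hx₀₃.le
  push_cast at herror
  by_contra hF
  have hF_upper := hupper _ _ (2 * X * ε) (h.lucasMonomial_pos hk hb x) (hradius x hx) hLε (by
    rwa [sub_right_comm, sub_right_comm, h.log_lucasMonomial_sub hk hb hq (hxc.trans hx₀c.symm),
      add_sub_cancel_left])
  have hF_lower := h.one_le_abs_auxSum_mul_pow (by omega) hpw hR (hradius x hx) hb hb' hx₂.le hx₃.le
    hF
  have hε₀ : 0 ≤ ε := (abs_nonneg _).trans hΛ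
  refine (hF_lower.trans ?_).not_gt hlt
  refine mul_le_mul (hF_upper.trans ?_) ?_ (by positivity) (by positivity)
  · gcongr
  · gcongr

theorem IsDominantRoot.one_le_of_abs_logForm_le (h : IsDominantRoot k α) (hk : 450 < k)
    (hb : 1 ≤ b) (hb' : b ≤ 9) (hΛ : |logForm k α b n d| ≤ ε) (hε : ε ≤ 1 / 25)
    {L K T w m : ℕ} (hLK : 1 ≤ L * K) (hq : q ≠ 0) (hqs : q ≤ s) (hrs : r ≤ s)
    (hqr : |(q : ℤ) * d - r * n| ≤ s) (hLs : L * s ≤ X) (hX : X ≤ n)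
    (hXcube : (4 * s * X + 1) * (L * K) < X ^ 3) (hw : m * (T + K) < w * (K * L * k))
    (hT : 96 * L * (12 * X) ≤ T) (hLε : L * (2 * X * ε) ≤ 1) :
    1 ≤ 2 * (K * L * k) * 2 ^ w * (2 ^ k * (4 * X * n) ^ K * Real.exp (3 * L * (12 * X))) *
      ((T + K) / 2 ^ m + (1 / 16) ^ T + L * (2 * X * ε)) *
        (K * L * k * 2 ^ w * (4 * X * n) ^ K * (90 * (3 * k + 1)) ^ (L * (2 * X))) ^ k := by
  by_contra! hlt
  obtain ⟨c, hc⟩ := exists_lt_card_levelSet hqs hrs hqr hXcube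
  obtain ⟨x₀, hx₀⟩ := Finset.card_pos.1 (hLK.trans hc.le)
  obtain ⟨p, hp, hzero⟩ := h.exists_auxSum_eq_zero hk hb hb' hq hX hΛ hε (hLK.trans_lt hc) hx₀ hw
    hT hLε hlt
  obtain ⟨x, hx, i, hi, hne⟩ := h.exists_auxSum_ne_zero (by omega) hp hq r hc
    (y := fun x => ((reducedExponent n x - reducedExponent n x₀ : ℤ) : ℝ))
    (v := lucasMonomial k α b)
    (fun x hx y hy hxy => injOn_reducedExponent hq hX hx hy
      (sub_left_injective (Int.cast_injective hxy)))
    fun x _ => (h.lucasMonomial_pos hk hb x).ne'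
  obtain ⟨hxX, hxc⟩ := mem_levelSet.1 hx
  have hiq : i * q ≤ X := (Nat.mul_le_mul hi.le hqs).trans hLs
  have hir : i * r ≤ X := (Nat.mul_le_mul hi.le hrs).trans hLs
  have hmem : (x.1 + i * q, x.2.1 + i * r, x.2.2) ∈ levelSet q r n d (2 * X) c :=
    mem_levelSet.2 ⟨⟨(by omega : x.1 + i * q < 2 * X), (by omega : x.2.1 + i * r < 2 * X),
      (by omega : x.2.2 < 2 * X)⟩, (exponentLevel_add ..).trans hxc⟩
  have hshift : ((reducedExponent n (x.1 + i * q, x.2.1 + i * r, x.2.2) - reducedExponent n x₀ :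
      ℤ) : ℝ) = ((reducedExponent n x - reducedExponent n x₀ : ℤ) : ℝ) + i * q := by
    simp only [reducedExponent]
    push_cast
    ring
  have hvanish := hzero _ hmem
  rw [hshift, lucasMonomial_add] at hvanish
  exact hne hvanish

end LinearForm

section LateRange

theorem sq_mul_pow_eight_le_two_pow {m : ℕ} (hm : 157 ≤ m) : (90000 * m ^ 8) ^ 2 ≤ 2 ^ m := by
  induction m, hm using Nat.le_induction with
  | base => norm_num
  | succ m hm ih =>
    have hstep : 157 ^ 16 * (m + 1) ^ 16 ≤ 157 ^ 16 * (2 * m ^ 16) :=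
      calc 157 ^ 16 * (m + 1) ^ 16 = (157 * (m + 1)) ^ 16 := by rw [mul_pow]
        _ ≤ (158 * m) ^ 16 := Nat.pow_le_pow_left (by omega) 16
        _ = 158 ^ 16 * m ^ 16 := by rw [mul_pow]
        _ ≤ 2 * 157 ^ 16 * m ^ 16 := Nat.mul_le_mul_right _ (by norm_num)
        _ = 157 ^ 16 * (2 * m ^ 16) := by ring
    calc (90000 * (m + 1) ^ 8) ^ 2 = 90000 ^ 2 * (m + 1) ^ 16 := by ring
      _ ≤ 90000 ^ 2 * (2 * m ^ 16) :=
        Nat.mul_le_mul_left _ (Nat.le_of_mul_le_mul_left hstep (by norm_num))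
      _ = 2 * (90000 * m ^ 8) ^ 2 := by ring
      _ ≤ 2 * 2 ^ m := Nat.mul_le_mul_left _ ih
      _ = 2 ^ (m + 1) := (pow_succ' 2 m).symm

theorem mul_pow_eight_le_two_pow {m : ℕ} (hm : 157 ≤ m) : (810 * m) ^ 8 ≤ 2 ^ m :=
  calc (810 * m) ^ 8 = 810 ^ 8 * m ^ 8 := mul_pow ..
    _ ≤ (90000 ^ 2 * 157 ^ 8) * m ^ 8 := Nat.mul_le_mul_right _ (by norm_num)
    _ ≤ (90000 ^ 2 * m ^ 8) * m ^ 8 := by gcongr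
    _ = (90000 * m ^ 8) ^ 2 := by ring
    _ ≤ 2 ^ m := sq_mul_pow_eight_le_two_pow hm

/-- Size conditions on the side `X` of the boxes of exponents and on `m`, the binary logarithm of
`n`, under which the two sides of the analytic argument contradict each other. -/
structure IsAdmissible (k n m X : ℕ) : Prop where
  le_log : 157 ≤ m
  add_le_three_mul : k + 19 ≤ 3 * m
  lt_two_pow : n < 2 ^ (m + 1)
  le_side : 240 * m ^ 5 ≤ X
  mul_side_le : 175 * (m ^ 4 * X) ≤ n

namespace IsAdmissible

variable {k n m X d : ℕ}

theorem le_sq_mul (h : IsAdmissible k n m X) : 157 ^ 2 * X ≤ m ^ 2 * X :=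
  Nat.mul_le_mul_right _ (Nat.pow_le_pow_left h.le_log 2)

theorem le_cube_mul (h : IsAdmissible k n m X) : 157 * (m ^ 2 * X) ≤ m ^ 3 * X :=
  calc 157 * (m ^ 2 * X) ≤ m * (m ^ 2 * X) := Nat.mul_le_mul_right _ h.le_log
    _ = m ^ 3 * X := by ring

theorem le_fourth_mul (h : IsAdmissible k n m X) : 157 * (m ^ 3 * X) ≤ m ^ 4 * X :=
  calc 157 * (m ^ 3 * X) ≤ m * (m ^ 3 * X) := Nat.mul_le_mul_right _ h.le_log
    _ = m ^ 4 * X := by ring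

theorem log_le_side (h : IsAdmissible k n m X) : 240 * m ≤ X :=
  (Nat.mul_le_mul_left 240 (Nat.le_self_pow (by norm_num) m)).trans h.le_side

theorem four_mul_side_le (h : IsAdmissible k n m X) : 4 * X ≤ n := by
  have := h.le_sq_mul
  have := h.le_cube_mul
  have := h.le_fourth_mul
  have := h.mul_side_le
  omega

theorem mul_add_mul_le (h : IsAdmissible k n m X) :
    k * (m ^ 3 * X) + 19 * (m ^ 3 * X) ≤ 3 * (m ^ 4 * X) :=
  calc k * (m ^ 3 * X) + 19 * (m ^ 3 * X) = (k + 19) * (m ^ 3 * X) := by ring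
    _ ≤ 3 * m * (m ^ 3 * X) := Nat.mul_le_mul_right _ h.add_le_three_mul
    _ = 3 * (m ^ 4 * X) := by ring

theorem le_two_pow_of_le_mul {c N : ℕ} (hc : c ≤ X) (hN : N ≤ c * X) : N ≤ 2 ^ (2 * X) :=
  calc N ≤ c * X := hN
    _ ≤ X * X := Nat.mul_le_mul_right _ hc
    _ ≤ 2 ^ X * 2 ^ X := Nat.mul_le_mul Nat.lt_two_pow_self.le Nat.lt_two_pow_self.le
    _ = 2 ^ (2 * X) := by ring

theorem card_le_two_pow (h : IsAdmissible k n m X) :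
    4 * (m ^ 2 * X) * (20 * m ^ 2) * k ≤ 2 ^ (2 * X) := by
  refine le_two_pow_of_le_mul h.le_side ?_
  have hk := h.add_le_three_mul
  calc 4 * (m ^ 2 * X) * (20 * m ^ 2) * k = 80 * m ^ 4 * k * X := by ring
    _ ≤ 80 * m ^ 4 * (3 * m) * X := by gcongr; omega
    _ = 240 * m ^ 5 * X := by ring

theorem degree_le_two_pow (h : IsAdmissible k n m X) :
    36 * (m ^ 4 * X) + 4 * (m ^ 2 * X) ≤ 2 ^ (2 * X) := by
  refine le_two_pow_of_le_mul h.le_side ?_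
  calc 36 * (m ^ 4 * X) + 4 * (m ^ 2 * X) ≤ 157 * (m ^ 4 * X) := by
        have := h.le_cube_mul
        have := h.le_fourth_mul
        omega
    _ ≤ m * (m ^ 4 * X) := Nat.mul_le_mul_right _ h.le_log
    _ = 1 * m ^ 5 * X := by ring
    _ ≤ 240 * m ^ 5 * X := by gcongr; norm_num

theorem shift_le_two_pow (h : IsAdmissible k n m X) : 20 * m ^ 2 * (8 * X) ≤ 2 ^ (2 * X) :=
  calc 20 * m ^ 2 * (8 * X) = 160 * (m ^ 2 * X) := by ring
    _ ≤ 36 * (m ^ 4 * X) + 4 * (m ^ 2 * X) := by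
      have := h.le_cube_mul
      have := h.le_fourth_mul
      omega
    _ ≤ 2 ^ (2 * X) := h.degree_le_two_pow

theorem radius_pow_le (h : IsAdmissible k n m X) :
    (4 * X * n) ^ (4 * (m ^ 2 * X)) ≤ 2 ^ (8 * (m ^ 3 * X) + 8 * (m ^ 2 * X)) :=
  calc (4 * X * n) ^ (4 * (m ^ 2 * X)) ≤ (2 ^ (m + 1) * 2 ^ (m + 1)) ^ (4 * (m ^ 2 * X)) := by
        have hn := h.lt_two_pow.le
        have hX := h.four_mul_side_le.trans hn
        gcongr
    _ = 2 ^ (8 * (m ^ 3 * X) + 8 * (m ^ 2 * X)) := by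
        rw [← pow_add, ← pow_mul]
        ring_nf

theorem norm_pow_le (h : IsAdmissible k n m X) :
    (90 * (3 * k + 1)) ^ (20 * m ^ 2 * (2 * X)) ≤ 2 ^ (5 * (m ^ 3 * X)) :=
  calc (90 * (3 * k + 1)) ^ (20 * m ^ 2 * (2 * X)) ≤ (810 * m) ^ (20 * m ^ 2 * (2 * X)) := by
        have hk := h.add_le_three_mul
        exact Nat.pow_le_pow_left (by omega) _
    _ = ((810 * m) ^ 8) ^ (5 * (m ^ 2 * X)) := by rw [← pow_mul]; ring_nf
    _ ≤ (2 ^ m) ^ (5 * (m ^ 2 * X)) := Nat.pow_le_pow_left (mul_pow_eight_le_two_pow h.le_log) _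
    _ = 2 ^ (5 * (m ^ 3 * X)) := by rw [← pow_mul]; ring_nf

theorem arithmetic_factor_le (h : IsAdmissible k n m X) :
    4 * (m ^ 2 * X) * (20 * m ^ 2) * k * 2 ^ (32 * (m ^ 3 * X)) * (4 * X * n) ^ (4 * (m ^ 2 * X)) *
      (90 * (3 * k + 1)) ^ (20 * m ^ 2 * (2 * X)) ≤ 2 ^ (48 * (m ^ 3 * X)) :=
  calc _ ≤ 2 ^ (2 * X) * 2 ^ (32 * (m ^ 3 * X)) * 2 ^ (8 * (m ^ 3 * X) + 8 * (m ^ 2 * X)) *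
        2 ^ (5 * (m ^ 3 * X)) :=
        Nat.mul_le_mul (Nat.mul_le_mul (Nat.mul_le_mul_right _ h.card_le_two_pow)
          h.radius_pow_le) h.norm_pow_le
    _ = 2 ^ (2 * X + 32 * (m ^ 3 * X) + (8 * (m ^ 3 * X) + 8 * (m ^ 2 * X)) + 5 * (m ^ 3 * X)) := by
        simp only [pow_add]
    _ ≤ 2 ^ (48 * (m ^ 3 * X)) := by
        apply Nat.pow_le_pow_right (by norm_num)
        have := h.le_sq_mul
        have := h.le_cube_mul
        omega

theorem exp_le_two_pow (m X : ℕ) :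
    Real.exp (3 * (20 * m ^ 2 : ℕ) * (12 * X)) ≤ 2 ^ (1080 * (m ^ 2 * X)) := by
  have hexp : Real.exp 2 ≤ 2 ^ 3 := by
    have hsq : Real.exp 2 = Real.exp 1 ^ 2 := by rw [← Real.exp_nat_mul]; norm_num
    rw [hsq]
    nlinarith [Real.exp_one_lt_d9, Real.exp_pos 1]
  calc Real.exp (3 * (20 * m ^ 2 : ℕ) * (12 * X)) = Real.exp 2 ^ (360 * (m ^ 2 * X)) := by
        rw [← Real.exp_nat_mul]
        push_cast
        ring_nf
    _ ≤ (2 ^ 3) ^ (360 * (m ^ 2 * X)) := by gcongr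
    _ = 2 ^ (1080 * (m ^ 2 * X)) := by rw [← pow_mul]; ring_nf

theorem analytic_factor_le (h : IsAdmissible k n m X) :
    2 * ((4 * (m ^ 2 * X) : ℕ) * (20 * m ^ 2 : ℕ) * k) * 2 ^ (32 * (m ^ 3 * X)) *
      (2 ^ k * (4 * X * n) ^ (4 * (m ^ 2 * X)) * Real.exp (3 * (20 * m ^ 2 : ℕ) * (12 * X))) ≤
        2 ^ (48 * (m ^ 3 * X)) := by
  have hcard : ((4 * (m ^ 2 * X) : ℕ) * (20 * m ^ 2 : ℕ) * k : ℝ) ≤ 2 ^ (2 * X) := by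
    exact_mod_cast h.card_le_two_pow
  have hradius : (4 * X * n : ℝ) ^ (4 * (m ^ 2 * X)) ≤ 2 ^ (8 * (m ^ 3 * X) + 8 * (m ^ 2 * X)) := by
    exact_mod_cast h.radius_pow_le
  calc _ ≤ 2 * 2 ^ (2 * X) * 2 ^ (32 * (m ^ 3 * X)) *
        (2 ^ k * 2 ^ (8 * (m ^ 3 * X) + 8 * (m ^ 2 * X)) * 2 ^ (1080 * (m ^ 2 * X))) := by
        gcongr
        exact exp_le_two_pow m X
    _ = (2 : ℝ) ^ (1 + 2 * X + 32 * (m ^ 3 * X) +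
          (k + (8 * (m ^ 3 * X) + 8 * (m ^ 2 * X)) + 1080 * (m ^ 2 * X))) := by
        simp only [pow_add, pow_one]
    _ ≤ 2 ^ (48 * (m ^ 3 * X)) := by
        apply pow_le_pow_right₀ one_le_two
        have := h.le_sq_mul
        have := h.le_cube_mul
        have := h.log_le_side
        have := h.add_le_three_mul
        omega

theorem div_le_one_div_two_pow {a : ℝ} {c D e : ℕ} (ha : a ≤ 2 ^ c) (hD : c + D ≤ e) :
    a / 2 ^ e ≤ 1 / 2 ^ D := by
  rw [div_le_div_iff₀ (by positivity) (by positivity), one_mul]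
  calc a * 2 ^ D ≤ 2 ^ c * 2 ^ D := by gcongr
    _ = 2 ^ (c + D) := (pow_add ..).symm
    _ ≤ 2 ^ e := pow_le_pow_right₀ one_le_two hD

theorem error_exponent_le_depth (h : IsAdmissible k n m X) (hk : 450 < k) :
    2 * X + (48 * (m ^ 3 * X) * k + 48 * (m ^ 3 * X) + 2) ≤ 64 * (k * (m ^ 3 * X)) := by
  have : 451 * (m ^ 3 * X) ≤ k * (m ^ 3 * X) := Nat.mul_le_mul_right _ hk
  have := h.le_sq_mul
  have := h.le_cube_mul
  have := h.log_le_side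
  have := h.le_log
  rw [show 48 * (m ^ 3 * X) * k = 48 * (k * (m ^ 3 * X)) by ring]
  omega

theorem error_exponent_le (h : IsAdmissible k n m X) :
    2 * X + (48 * (m ^ 3 * X) * k + 48 * (m ^ 3 * X) + 2) ≤ 144 * (m ^ 4 * X) := by
  have := h.mul_add_mul_le
  have := h.le_sq_mul
  have := h.le_cube_mul
  have := h.log_le_side
  have := h.le_log
  rw [show 48 * (m ^ 3 * X) * k = 48 * (k * (m ^ 3 * X)) by ring]
  omega

theorem sampling_error_le (h : IsAdmissible k n m X) (hk : 450 < k) :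
    ((36 * (m ^ 4 * X) : ℕ) + (4 * (m ^ 2 * X) : ℕ)) / (2 : ℝ) ^ (64 * (k * (m ^ 3 * X))) ≤
      1 / 2 ^ (48 * (m ^ 3 * X) * k + 48 * (m ^ 3 * X) + 2) := by
  have hdegree : ((36 * (m ^ 4 * X) : ℕ) + (4 * (m ^ 2 * X) : ℕ) : ℝ) ≤ 2 ^ (2 * X) := by
    exact_mod_cast h.degree_le_two_pow
  exact div_le_one_div_two_pow hdegree (h.error_exponent_le_depth hk)

theorem taylor_error_le (h : IsAdmissible k n m X) :
    (1 / 16 : ℝ) ^ (36 * (m ^ 4 * X)) ≤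
      1 / 2 ^ (48 * (m ^ 3 * X) * k + 48 * (m ^ 3 * X) + 2) := by
  have hpow : (1 / 16 : ℝ) ^ (36 * (m ^ 4 * X)) = 1 / 2 ^ (144 * (m ^ 4 * X)) := by
    rw [one_div_pow, show (16 : ℝ) = 2 ^ 4 by norm_num, ← pow_mul]
    ring_nf
  rw [hpow]
  have := h.error_exponent_le
  exact div_le_one_div_two_pow (one_le_pow₀ one_le_two) this

theorem linear_form_error_le (h : IsAdmissible k n m X) (hd : 3 * n < 10 * d + 13) :
    ((20 * m ^ 2 : ℕ) : ℝ) * (2 * X * (4 / 10 ^ d)) ≤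
      1 / 2 ^ (48 * (m ^ 3 * X) * k + 48 * (m ^ 3 * X) + 2) := by
  have hshift : ((20 * m ^ 2 : ℕ) : ℝ) * (8 * X) ≤ 2 ^ (2 * X) := by
    exact_mod_cast h.shift_le_two_pow
  calc ((20 * m ^ 2 : ℕ) : ℝ) * (2 * X * (4 / 10 ^ d)) = (20 * m ^ 2 : ℕ) * (8 * X) / 10 ^ d := by
        ring
    _ ≤ (20 * m ^ 2 : ℕ) * (8 * X) / (2 ^ 3) ^ d := by gcongr; norm_num
    _ = (20 * m ^ 2 : ℕ) * (8 * X) / 2 ^ (3 * d) := by rw [pow_mul]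
    _ ≤ 1 / 2 ^ (48 * (m ^ 3 * X) * k + 48 * (m ^ 3 * X) + 2) := by
        refine div_le_one_div_two_pow hshift ?_
        have := h.error_exponent_le
        have := h.mul_side_le
        have := h.le_sq_mul
        have := h.le_cube_mul
        have := h.le_fourth_mul
        have := h.log_le_side
        have := h.le_log
        omega

theorem depth_lt (h : IsAdmissible k n m X) (hk : 1 ≤ k) :
    64 * (k * (m ^ 3 * X)) * (36 * (m ^ 4 * X) + 4 * (m ^ 2 * X)) <
      32 * (m ^ 3 * X) * (4 * (m ^ 2 * X) * (20 * m ^ 2) * k) := by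
  have hlog := h.le_log
  have hX : 0 < X := by linarith [h.log_le_side]
  calc 64 * (k * (m ^ 3 * X)) * (36 * (m ^ 4 * X) + 4 * (m ^ 2 * X))
      < 64 * (k * (m ^ 3 * X)) * (40 * (m ^ 4 * X)) := by
        gcongr
        have : 0 < m ^ 2 * X := by positivity
        have := h.le_cube_mul
        have := h.le_fourth_mul
        omega
    _ = 32 * (m ^ 3 * X) * (4 * (m ^ 2 * X) * (20 * m ^ 2) * k) := by ring

theorem taylor_degree_ge (h : IsAdmissible k n m X) :
    96 * (20 * m ^ 2) * (12 * X) ≤ 36 * (m ^ 4 * X) := by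
  have := h.le_cube_mul
  have := h.le_fourth_mul
  rw [show 96 * (20 * m ^ 2) * (12 * X) = 23040 * (m ^ 2 * X) by ring]
  omega

end IsAdmissible

theorem mul_add_add_mul_pow_lt_one {A B e₁ e₂ e₃ : ℝ} {N k : ℕ} (hA : 0 ≤ A) (hB : 0 ≤ B)
    (hA' : A ≤ 2 ^ N) (hB' : B ≤ 2 ^ N) (h₁ : e₁ ≤ 1 / 2 ^ (N * k + N + 2))
    (h₂ : e₂ ≤ 1 / 2 ^ (N * k + N + 2)) (h₃ : e₃ ≤ 1 / 2 ^ (N * k + N + 2)) :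
    B * (e₁ + e₂ + e₃) * A ^ k < 1 :=
  calc B * (e₁ + e₂ + e₃) * A ^ k ≤ B * (3 / 2 ^ (N * k + N + 2)) * A ^ k := by
        gcongr
        linarith [show (3 : ℝ) / 2 ^ (N * k + N + 2) = 3 * (1 / 2 ^ (N * k + N + 2)) by ring]
    _ ≤ 2 ^ N * (3 / 2 ^ (N * k + N + 2)) * (2 ^ N) ^ k := by gcongr
    _ = 3 / 4 := by
        rw [← pow_mul, pow_add, pow_add]
        field_simp
        norm_num
    _ < 1 := by norm_num

theorem two_pow_le_pow_three {k n : ℕ} (hk : 450 < k) (hc : 2 ^ k ≤ 4 * (k + n / (k + 1)) ^ 3) :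
    2 ^ (k + 21) ≤ n ^ 3 := by
  have hpow : 32 * k ^ 3 < 2 ^ k := by
    obtain ⟨t, rfl⟩ : ∃ t, k = t + 1 := ⟨k - 1, by omega⟩
    calc 32 * (t + 1) ^ 3 ≤ 8 * (10 * (t + 1)) ^ 3 := by rw [mul_pow]; omega
      _ ≤ 8 * (10 * t + 14) ^ 3 := by gcongr; omega
      _ < 2 ^ (t + 1) := pow_three_lt_two_pow (by omega)
  have hlt : k < n / (k + 1) := by
    by_contra! hle
    have : (k + n / (k + 1)) ^ 3 ≤ (2 * k) ^ 3 := Nat.pow_le_pow_left (by omega) 3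
    rw [mul_pow] at this
    omega
  have htwo : 2 ^ k ≤ 32 * (n / (k + 1)) ^ 3 := by
    have : (k + n / (k + 1)) ^ 3 ≤ (2 * (n / (k + 1))) ^ 3 := Nat.pow_le_pow_left (by omega) 3
    rw [mul_pow] at this
    omega
  calc 2 ^ (k + 21) = 2 ^ k * 2 ^ 21 := pow_add ..
    _ ≤ 32 * (n / (k + 1)) ^ 3 * 2 ^ 21 := Nat.mul_le_mul_right _ htwo
    _ = (n / (k + 1)) ^ 3 * (32 * 2 ^ 21) := by ring
    _ ≤ (n / (k + 1)) ^ 3 * (k + 1) ^ 3 := by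
        gcongr
        calc 32 * 2 ^ 21 ≤ 452 ^ 3 := by norm_num
          _ ≤ (k + 1) ^ 3 := Nat.pow_le_pow_left (by omega) 3
    _ = (n / (k + 1) * (k + 1)) ^ 3 := (mul_pow ..).symm
    _ ≤ n ^ 3 := Nat.pow_le_pow_left (Nat.div_mul_le_self ..) 3

theorem exists_dirichlet_approximation {n d s : ℕ} (hn : 0 < n) (hdn : d ≤ n)
    (hns : n < (s + 1) * (s + 1)) :
    ∃ q r : ℕ, q ≠ 0 ∧ q ≤ s ∧ r ≤ s ∧ |(q : ℤ) * d - r * n| ≤ s := by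
  have hs : 0 < s := by
    by_contra! hle
    obtain rfl : s = 0 := by omega
    omega
  obtain ⟨j, q, hq, hqs, hj⟩ := Real.exists_int_int_abs_mul_sub_le ((d : ℝ) / n) hs
  have hnR : (0 : ℝ) < n := by exact_mod_cast hn
  have hqR : (0 : ℝ) < q := by exact_mod_cast hq
  have hslope : (d : ℝ) / n ≤ 1 := (div_le_one hnR).2 (by exact_mod_cast hdn)
  have hle : (q : ℝ) * (d / n) ≤ q := mul_le_of_le_one_right hqR.le hslope
  have hnonneg : 0 ≤ (q : ℝ) * (d / n) := by positivity
  have hlt : (1 : ℝ) / (s + 1) < 1 := by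
    rw [div_lt_one (by positivity)]
    exact lt_add_of_pos_left 1 (by exact_mod_cast hs)
  obtain ⟨hlow, hupp⟩ := abs_le.1 hj
  have hj₀ : -1 < j := by exact_mod_cast (by linarith : (-1 : ℝ) < j)
  have hjq : j < q + 1 := by exact_mod_cast (by linarith : (j : ℝ) < q + 1)
  have herr : |(q : ℝ) * d - j * n| < s + 1 :=
    calc |(q : ℝ) * d - j * n| = |q * ((d : ℝ) / n) - j| * n := by
          rw [← abs_of_pos hnR, ← abs_mul, abs_of_pos hnR]
          field_simp
      _ ≤ 1 / (s + 1) * n := by gcongr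
      _ < 1 / (s + 1) * ((s + 1) * (s + 1)) := by gcongr; exact_mod_cast hns
      _ = s + 1 := by field_simp
  have herr' : |q * d - j * n| < s + 1 := by exact_mod_cast herr
  lift q to ℕ using hq.le
  lift j to ℕ using by omega
  exact ⟨q, j, by omega, by omega, by omega, by linarith⟩

theorem le_of_lucasL_eq_mul_ten_pow {k n b d : ℕ} (hk : 4 ≤ k) (hn : 1 ≤ n) (hb : 1 ≤ b)
    (hL : lucasL k n = b * 10 ^ d) : d ≤ n := by
  obtain ⟨α, h⟩ := exists_isDominantRoot hk
  have herr := (abs_le.1 (h.abs_lucasL_sub_le (by omega) n)).2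
  have hcoeff : dominantCoeff k α ≤ 3 :=
    (le_mul_of_one_le_left h.dominantCoeff_nonneg h.one_le).trans h.mul_dominantCoeff_le
  have hmain : dominantCoeff k α * α ^ n ≤ 3 * 2 ^ n := by
    gcongr
    exacts [pow_nonneg h.pos.le n, h.pos.le, h.lt_two.le]
  have hten : (10 : ℝ) ^ d ≤ lucasL k n := by
    rw [hL]
    push_cast
    exact le_mul_of_one_le_left (by positivity) (by exact_mod_cast hb)
  have htwo : (2 : ℝ) ≤ 2 ^ n := le_self_pow₀ one_le_two (by omega)
  have hlt : (10 : ℝ) ^ d < 10 ^ (n + 1) :=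
    calc (10 : ℝ) ^ d ≤ 4 * 2 ^ n := by linarith
      _ ≤ 4 * 10 ^ n := by gcongr; norm_num
      _ < 10 ^ (n + 1) := by rw [pow_succ]; linarith [pow_pos (by norm_num : (0 : ℝ) < 10) n]
  exact Nat.lt_succ_iff.1 ((pow_lt_pow_iff_right₀ (by norm_num)).1 hlt)

theorem isAdmissible_log {k n : ℕ} (hk : 450 < k) (hkn : 2 ^ (k + 21) ≤ n ^ 3) :
    IsAdmissible k n (Nat.log 2 n) (512 * Nat.log 2 n ^ 4 * n.sqrt) := by
  have hn : n ≠ 0 := by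
    rintro rfl
    exact (Nat.two_pow_pos (k + 21)).not_ge hkn
  set m := Nat.log 2 n
  have hlt : n < 2 ^ (m + 1) := Nat.lt_pow_succ_log_self one_lt_two n
  have hkm : k + 19 ≤ 3 * m := by
    have hpow : 2 ^ (k + 21) < 2 ^ ((m + 1) * 3) := by
      rw [pow_mul]
      exact hkn.trans_lt (Nat.pow_lt_pow_left hlt (by norm_num))
    have := (Nat.pow_lt_pow_iff_right one_lt_two).1 hpow
    omega
  have hm : 157 ≤ m := by omega
  have hs : 90000 * m ^ 8 ≤ n.sqrt :=
    Nat.le_sqrt'.2 ((sq_mul_pow_eight_le_two_pow hm).trans (Nat.pow_log_le_self 2 hn))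
  refine ⟨hm, hkm, hlt, ?_, ?_⟩
  · have : m ≤ m ^ 8 := Nat.le_self_pow (by norm_num) m
    calc 240 * m ^ 5 = 240 * m ^ 4 * m := by ring
      _ ≤ 512 * m ^ 4 * n.sqrt := by gcongr <;> omega
  · calc 175 * (m ^ 4 * (512 * m ^ 4 * n.sqrt)) = 89600 * m ^ 8 * n.sqrt := by ring
      _ ≤ 90000 * m ^ 8 * n.sqrt := by gcongr; norm_num
      _ ≤ n.sqrt * n.sqrt := by gcongr
      _ ≤ n := Nat.sqrt_le n

theorem IsAdmissible.lucasL_ne {k n m X s b d : ℕ} (h : IsAdmissible k n m X) (hk : 450 < k)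
    (hb : 1 ≤ b) (hb' : b ≤ 9) (hd : 2 ≤ d) (hns : n < (s + 1) * (s + 1))
    (hsX : 20 * m ^ 2 * s ≤ X)
    (hcube : (4 * s * X + 1) * (20 * m ^ 2 * (4 * (m ^ 2 * X))) < X ^ 3) :
    lucasL k n ≠ b * 10 ^ d := by
  intro hL
  obtain ⟨α, hα⟩ := exists_isDominantRoot (by omega : 4 ≤ k)
  have hm := h.le_log
  have hX : 240 * m ≤ X := h.log_le_side
  have hXn : 4 * X ≤ n := h.four_mul_side_le
  have hdn := le_of_lucasL_eq_mul_ten_pow (by omega) (by omega) hb hL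
  obtain ⟨q, r, hq, hqs, hrs, hqr⟩ := exists_dirichlet_approximation (by omega) hdn hns
  have hd' := three_mul_lt_of_lucasL_eq hk (by omega) (by exact_mod_cast hb') hL
  have hε : (4 : ℝ) / 10 ^ d ≤ 1 / 25 := by
    have : (10 : ℝ) ^ 2 ≤ 10 ^ d := pow_le_pow_right₀ (by norm_num) hd
    rw [div_le_div_iff₀ (by positivity) (by norm_num)]
    linarith
  have herr := h.linear_form_error_le hd'
  have hone : (1 : ℝ) / 2 ^ (48 * (m ^ 3 * X) * k + 48 * (m ^ 3 * X) + 2) ≤ 1 :=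
    div_le_one_of_le₀ (one_le_pow₀ one_le_two) (by positivity)
  have hLK : 1 ≤ 20 * m ^ 2 * (4 * (m ^ 2 * X)) := by
    have : 0 < X := by omega
    exact Nat.one_le_iff_ne_zero.2 (by positivity)
  have hlower := hα.one_le_of_abs_logForm_le hk hb hb' (hα.abs_logForm_le hk hb hd hL) hε
    hLK hq hqs hrs hqr hsX (by omega) hcube (h.depth_lt (by omega)) h.taylor_degree_ge
    (herr.trans hone)
  refine hlower.not_gt (mul_add_add_mul_pow_lt_one (by positivity) (by positivity) ?_
    h.analytic_factor_le (h.sampling_error_le hk) h.taylor_error_le herr)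
  exact_mod_cast h.arithmetic_factor_le

theorem lucasL_ne_of_two_pow_le {k n b d : ℕ} (hk : 450 < k) (hb : 1 ≤ b) (hb' : b ≤ 9)
    (hd : 2 ≤ d) (hkn : 2 ^ (k + 21) ≤ n ^ 3) : lucasL k n ≠ b * 10 ^ d := by
  have h := isAdmissible_log hk hkn
  have hm := h.le_log
  generalize Nat.log 2 n = m at h hm
  generalize hX : 512 * m ^ 4 * n.sqrt = X at h
  have hX₀ : 0 < X := by linarith [h.log_le_side]
  have hs : 0 < n.sqrt := Nat.sqrt_pos.2 (by linarith [h.four_mul_side_le])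
  refine h.lucasL_ne hk hb hb' hd (Nat.lt_succ_sqrt n) ?_ ?_
  · rw [← hX]
    exact Nat.mul_le_mul_right _
      (Nat.mul_le_mul (by norm_num) (Nat.pow_le_pow_right (by omega) (by norm_num)))
  · calc (4 * n.sqrt * X + 1) * (20 * m ^ 2 * (4 * (m ^ 2 * X)))
        ≤ (4 * n.sqrt * X + n.sqrt * X) * (20 * m ^ 2 * (4 * (m ^ 2 * X))) := by
          gcongr
          exact Nat.mul_pos hs hX₀
      _ = 400 * (m ^ 4 * n.sqrt * X ^ 2) := by ring
      _ < 512 * (m ^ 4 * n.sqrt * X ^ 2) := by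
          have : 0 < m ^ 4 * n.sqrt * X ^ 2 := by positivity
          omega
      _ = 512 * m ^ 4 * n.sqrt * X ^ 2 := by ring
      _ = X ^ 3 := by rw [hX]; ring

end LateRange

/-- For `k > 450` and `n > 5`, the number `L_n^{(k)}` is never of the form `b·10^d`
with `1 ≤ b ≤ 9` and `d ≥ 2`. -/
theorem no_b_pow_ten_k_gt_450 (k n : ℕ) (hk : 450 < k) (hn : 5 < n) :
    ¬ ∃ (b : ℤ) (d : ℕ), 1 ≤ b ∧ b ≤ 9 ∧ 2 ≤ d ∧ lucasL k n = b * 10 ^ d := by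
  rintro ⟨b, d, hb, hb', hd, hL⟩
  rcases lt_or_ge (4 * (k + n / (k + 1)) ^ 3) (2 ^ k) with hearly | hlate
  · exact lucasL_ne_of_four_mul_pow_lt hk hn hb hb' hd hearly hL
  · lift b to ℕ using by omega
    exact lucasL_ne_of_two_pow_le hk (by omega) (by omega) hd
      (two_pow_le_pow_three hk hlate) hL
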